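/- Let U_0, B_0 ∈ L^∞(ℝ^D) be divergence-free and ν, μ > 0. There exists a constant C > 0 depending only on μ, ν and D such that, setting T_2 = 1/(C (‖U_0‖_{L^∞} + ‖B_0‖_{L^∞}))², for every T < T_2 there exists a mild solution (U, B) of the MHD system on [0, T] with initial data (U_0, B_0); moreover ‖U‖_{L^∞} + ‖B‖_{L^∞} ≤ C (‖U_0‖_{L^∞} + ‖B_0‖_{L^∞}) on [0,T] × ℝ^D. -/

import Mathlib

/-!
The solution is obtained by a contraction argument for the Duhamel formula; the work lies in giving
the pressure a meaning for merely bounded data and in eliminating it from the fixed point problem.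

*Kernels.* Up to a scalar change of time, all kernels in play are `τ^{-(D+m)/2} ψ(x/√τ)` with `ψ` a
derivative of the Gaussian (`ker`). Their `L¹` norm is a multiple of `τ^{-m/2}` (`ker_L1`), and their
`L¹` modulus of continuity is `½`-Hölder with a constant of size `τ^{-m/2-1/4}` (`ker_L1_hol`).

*Pressure.* For a bounded, `½`-Hölder function `f`, the function `(-Δ)⁻¹∂_j∂_l f` is represented by
`∫₀^∞ ∂_j∂_l G_τ * f dτ`, renormalised by subtracting the value at a base point for large `τ` (`pr`).
The integral converges at `0` because the kernel has mean zero and `f` is Hölder, and at `∞`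
because differences of the integrand are `O(τ^{-5/4})`. It solves `ΔP = -∂_j∂_l f` because
`∂_τ G_τ = ΔG_τ`, so that the pairing with `Δφ` telescopes in `τ` (`pr_poisson`). It belongs to BMO
(`pr_isBMO`): on a ball of radius `r ≥ 1` the part `τ < 1` is bounded by the Hölder estimate, the
part `τ > r²` by the decay of differences, and in between the values of `f` away from the ball are
handled by second moments of the kernel, and the values near the ball by an `L²` bound for the
truncated operator (`two_pair_le`), which is the energy inequality of the heat equation.

*Elimination of the pressure.* By Fubini and the semigroup law, `∂_k G_σ * P = Q_σ * f` with a kernel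
`Q_σ = ∫₀^∞ ∂_k∂_j∂_l G_{σ+τ} dτ` whose `L¹` norm is `O(σ^{-1/2})` (`pr_Q`, `Qk_L1`). Hence the
pressure term has the same form and the same size as the other Duhamel terms, and makes sense without
any regularity of `f`.

*Fixed point.* The mild formulation becomes a finite system of equations
`u_i = h_i - ∑_a ∫₀ᵗ K_{ia}(t-s) * q_{ia}(u)(s) ds` with `‖K_{ia}(σ)‖_{L¹} ≤ c σ^{-1/2}` and quadratic
`q_{ia}`, which the contraction principle solves among measurable functions bounded by `2N`, where
`N = ‖U₀‖ + ‖B₀‖`, as soon as `32 |S| c N √T ≤ 1`, where `|S|` is the number of Duhamel terms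
(`mild_exists`). The time slices of the solution are then
`½`-Hölder (`qd_HB`), so that the pressure can be reconstructed. The constant of the theorem is
`32 |S| c + 4 D + 1`.
-/

open MeasureTheory Real Set

noncomputable section

/-- `ℝ^D` as a Euclidean space. -/
abbrev Spc (D : ℕ) := EuclideanSpace ℝ (Fin D)

/-- `ℂ^D` as a (complex) Euclidean space. -/
abbrev CSpc (D : ℕ) := EuclideanSpace ℂ (Fin D)

variable {D : ℕ}

/-- The heat kernel `G_λ(x,t) = (4πλt)^{-D/2} exp(-|x|²/(4λt))`. -/
def heatK (D : ℕ) (lam : ℝ) (x : Spc D) (t : ℝ) : ℝ :=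
  (4 * π * lam * t) ^ (-(D : ℝ) / 2) * Real.exp (-‖x‖ ^ 2 / (4 * lam * t))

/-- Spatial partial derivative in the `j`-th coordinate direction. -/
def pd (j : Fin D) (f : Spc D → ℝ) (x : Spc D) : ℝ :=
  fderiv ℝ f x (EuclideanSpace.single j 1)

/-- Laplacian. -/
def lap (f : Spc D → ℝ) (x : Spc D) : ℝ := ∑ j, pd j (fun y => pd j f y) x

/-- Membership in `L^∞` for a (bounded, measurable) vector field. -/
def MemLinf (f : Spc D → Spc D) : Prop :=
  AEStronglyMeasurable f volume ∧ BddAbove (Set.range fun x => ‖f x‖)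

/-- The `L^∞`-norm (supremum norm) of a vector field. -/
def supN (f : Spc D → Spc D) : ℝ := ⨆ x, ‖f x‖

/-- The sup norm in space of a time slice of a time dependent field. -/
def slN (F : ℝ → Spc D → Spc D) (t : ℝ) : ℝ := ⨆ x, ‖F t x‖

/-- Sup norm over the space-time region `(0,T) × ℝ^D`. -/
def stSup (T : ℝ) (F : ℝ → Spc D → Spc D) : ℝ :=
  ⨆ t ∈ Set.Ioo (0 : ℝ) T, ⨆ x, ‖F t x‖

/-- Sup norm over the space-time region `[0,T) × ℝ^D`. -/
def stSupIco (T : ℝ) (F : ℝ → Spc D → Spc D) : ℝ :=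
  ⨆ t ∈ Set.Ico (0 : ℝ) T, ⨆ x, ‖F t x‖

/-- The set of mean oscillations of `f` over all Euclidean balls. -/
def oscSet (f : Spc D → ℝ) : Set ℝ :=
  {v | ∃ (c : Spc D) (r : ℝ), 0 < r ∧
    v = ⨍ y in Metric.ball c r, |f y - ⨍ z in Metric.ball c r, f z|}

/-- The BMO seminorm of `f`. -/
def bmoNorm (f : Spc D → ℝ) : ℝ := sSup (oscSet f)

/-- `f` is of bounded mean oscillation. -/
def IsBMO (f : Spc D → ℝ) : Prop :=
  LocallyIntegrable f volume ∧ BddAbove (oscSet f)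

/-- Divergence-free in the sense of distributions. -/
def DivFree (F : Spc D → Spc D) : Prop :=
  ∀ φ : SchwartzMap (Spc D) ℝ, ∑ j, ∫ x, F x j * pd j (⇑φ) x = 0

/-- `p` solves `Δ p = -∂_j∂_k g_{jk}` (summed over `j,k`) in the sense of distributions. -/
def SolvesPoisson (D : ℕ) (p : Spc D → ℝ) (g : Fin D → Fin D → Spc D → ℝ) : Prop :=
  ∀ φ : SchwartzMap (Spc D) ℝ,
    ∫ x, p x * lap (⇑φ) x
      = - ∑ j, ∑ k, ∫ x, g j k x * pd j (fun y => pd k (⇑φ) y) x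

/-- Mild solution of the MHD system with viscosity `ν`, diffusivity `μ`, data `U₀, B₀`;
the Duhamel identities hold at every time in `I`. -/
def MildMHD (D : ℕ) (ν μ : ℝ) (U₀ B₀ : Spc D → Spc D) (I : Set ℝ)
    (U B : ℝ → Spc D → Spc D) : Prop :=
  ∃ P : ℝ → Spc D → ℝ,
    (∀ t ∈ I, IsBMO (P t) ∧
      SolvesPoisson D (P t)
        (fun j k x => U t x j * U t x k - B t x j * B t x k)) ∧
    (∀ t ∈ I, BddAbove (Set.range fun x => ‖U t x‖) ∧
      BddAbove (Set.range fun x => ‖B t x‖)) ∧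
    (∀ t ∈ I, ∀ (x : Spc D) (k : Fin D),
      U t x k = (∫ w, heatK D ν (x - w) t * U₀ w k)
        - (∫ s in Set.Ioo (0 : ℝ) t, ∫ w,
            ∑ j, pd j (fun y => heatK D ν y (t - s)) (x - w)
              * (U s w j * U s w k - B s w j * B s w k))
        - (∫ s in Set.Ioo (0 : ℝ) t, ∫ w,
            pd k (fun y => heatK D ν y (t - s)) (x - w) * P s w) ∧
      B t x k = (∫ w, heatK D μ (x - w) t * B₀ w k)
        - (∫ s in Set.Ioo (0 : ℝ) t, ∫ w,
            ∑ j, pd j (fun y => heatK D μ y (t - s)) (x - w)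
              * (U s w j * B s w k - B s w j * U s w k)))

/-- The approximation scheme for the MHD system. -/
def ApproxMHD (D : ℕ) (ν μ : ℝ) (U₀ B₀ : Spc D → Spc D)
    (U B : ℕ → ℝ → Spc D → Spc D) (P : ℕ → ℝ → Spc D → ℝ) : Prop :=
  (∀ t x, U 0 t x = 0) ∧ (∀ t x, B 0 t x = 0) ∧ (∀ t x, P 0 t x = 0) ∧
  (∀ n : ℕ, ∀ x, U (n + 1) 0 x = U₀ x ∧ B (n + 1) 0 x = B₀ x) ∧
  (∀ (n : ℕ) (t : ℝ), 0 < t → ∀ (x : Spc D) (k : Fin D),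
    U (n + 1) t x k = (∫ w, heatK D ν (x - w) t * U₀ w k)
      - (∫ s in Set.Ioo (0 : ℝ) t, ∫ w,
          ∑ j, pd j (fun y => heatK D ν y (t - s)) (x - w)
            * (U n s w j * U n s w k - B n s w j * B n s w k))
      - (∫ s in Set.Ioo (0 : ℝ) t, ∫ w,
          pd k (fun y => heatK D ν y (t - s)) (x - w) * P n s w) ∧
    B (n + 1) t x k = (∫ w, heatK D μ (x - w) t * B₀ w k)
      - (∫ s in Set.Ioo (0 : ℝ) t, ∫ w,
          ∑ j, pd j (fun y => heatK D μ y (t - s)) (x - w)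
            * (U n s w j * B n s w k - B n s w j * U n s w k))) ∧
  (∃ Cd : ℝ, 0 < Cd ∧ ∀ (n : ℕ) (t : ℝ), 0 < t →
    IsBMO (P (n + 1) t) ∧
    SolvesPoisson D (P (n + 1) t)
      (fun j k x => U (n + 1) t x j * U (n + 1) t x k - B (n + 1) t x j * B (n + 1) t x k) ∧
    bmoNorm (P (n + 1) t)
      ≤ Cd * ⨆ x, ∑ j, ∑ k,
          |U (n + 1) t x j * U (n + 1) t x k - B (n + 1) t x j * B (n + 1) t x k|)

/-- The imaginary part of a point of `ℂ^D` as a point of `ℝ^D`. -/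
def imPart (z : CSpc D) : Spc D := (WithLp.equiv 2 (Fin D → ℝ)).symm fun j => (z j).im

/-- The canonical embedding `ℝ^D ↪ ℂ^D`. -/
def toC (x : Spc D) : CSpc D := (WithLp.equiv 2 (Fin D → ℂ)).symm fun j => (x j : ℂ)

/-- The closed strip `{x + iy ∈ ℂ^D : |y| ≤ ρ}`. -/
def strip (D : ℕ) (ρ : ℝ) : Set (CSpc D) := {z | ‖imPart z‖ ≤ ρ}

/-- Super-level set of a time dependent vector field. -/
def superLevel (F : ℝ → Spc D → Spc D) (t M : ℝ) : Set (Spc D) :=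
  {x | M < ‖F t x‖}

/-- `S` is linearly `δ`-sparse around `x₀` at scale `r`. -/
def LinSparse (δ : ℝ) (S : Set (Spc D)) (x₀ : Spc D) (r : ℝ) : Prop :=
  ∃ d : Spc D, ‖d‖ = 1 ∧
    (volume {τ : ℝ | τ ∈ Set.Ioo (-r) r ∧ x₀ + τ • d ∈ S}).toReal ≤ δ * (2 * r)

/-- The uniform analytic extension property for the constant `C₄`: mild solutions with
bounded divergence-free data extend holomorphically to the strip of width `√t/(2C₄)`
with the uniform bound `2βC₄(‖V₀‖_∞ + ‖W₀‖_∞)`. -/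
def UnifAnalExt (D : ℕ) (ν μ : ℝ) (C₄ : ℝ) : Prop :=
  ∀ (V₀ W₀ : Spc D → Spc D) (Tstar : ℝ) (V W : ℝ → Spc D → Spc D),
    MemLinf V₀ → MemLinf W₀ → DivFree V₀ → DivFree W₀ →
    MildMHD D ν μ V₀ W₀ (Set.Ioo 0 Tstar) V W →
    ∀ β ∈ Set.Ioc (1 / 2 : ℝ) 1, ∀ t : ℝ, 0 < t →
      t < min Tstar ((2 * β - 1) ^ 2 / β ^ 4
          * (1 / (16 * C₄ ^ 4 * (supN V₀ + supN W₀) ^ 2))) →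
      ∃ F H : CSpc D → CSpc D,
        AnalyticOnNhd ℂ F (strip D (Real.sqrt t / (2 * C₄))) ∧
        AnalyticOnNhd ℂ H (strip D (Real.sqrt t / (2 * C₄))) ∧
        (∀ x : Spc D, F (toC x) = toC (V t x)) ∧
        (∀ x : Spc D, H (toC x) = toC (W t x)) ∧
        ∀ z ∈ strip D (Real.sqrt t / (2 * C₄)),
          ‖F z‖ + ‖H z‖ ≤ 2 * β * C₄ * (supN V₀ + supN W₀)

/-- The magnetic-field bound property for the constant `C₃`. -/
def MagBound (D : ℕ) (ν μ : ℝ) (C₃ : ℝ) : Prop :=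
  ∀ (V₀ W₀ : Spc D → Spc D), MemLinf V₀ → MemLinf W₀ → DivFree V₀ → DivFree W₀ →
  ∀ T : ℝ, 0 < T → ∀ V W, MildMHD D ν μ V₀ W₀ (Set.Ioo 0 T) V W →
    ∀ t ∈ Set.Ioo (0 : ℝ) (min T (1 / (16 * C₃ ^ 2 * (stSup T V) ^ 2))),
      ∀ x, ‖W t x‖ ≤ 2 * C₃ * supN W₀

/-! ### The Gaussian as a Schwartz function -/

theorem exp_hasFDerivAt (x : Spc D) :
    HasFDerivAt (fun y : Spc D => Real.exp (-‖y‖ ^ 2 / 4))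
      (Real.exp (-‖x‖ ^ 2 / 4) • (((-(1 / 2 : ℝ)) • innerSL ℝ : Spc D →L[ℝ] Spc D →L[ℝ] ℝ) x)) x := by
  have h1 : HasFDerivAt (fun y : Spc D => ‖y‖ ^ 2) (2 • (innerSL ℝ x)) x :=
    (hasStrictFDerivAt_norm_sq x).hasFDerivAt
  have h2 : HasFDerivAt (fun y : Spc D => -‖y‖ ^ 2 / 4)
      (((-(1 / 2 : ℝ)) • innerSL ℝ : Spc D →L[ℝ] Spc D →L[ℝ] ℝ) x) x := by
    have := h1.const_mul (-(1 / 4 : ℝ))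
    refine (this.congr_fderiv ?_).congr_of_eventuallyEq (Filter.Eventually.of_forall fun y => ?_)
    · ext v; simp; ring
    · simp; ring
  exact h2.exp

theorem gaussian_contDiff : ContDiff ℝ (⊤ : ℕ∞) (fun y : Spc D => Real.exp (-‖y‖ ^ 2 / 4)) := by
  have := contDiff_norm_sq ℝ (E := Spc D) (n := (⊤ : ℕ∞))
  fun_prop

theorem gaussian_decay_zero (k : ℕ) :
    ∃ C : ℝ, ∀ x : Spc D, ‖x‖ ^ k * Real.exp (-‖x‖ ^ 2 / 4) ≤ C := by
  refine ⟨1 + (4 ^ k * k.factorial), fun x => ?_⟩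
  have h1 : (‖x‖ ^ 2 / 4) ^ k / k.factorial ≤ Real.exp (‖x‖ ^ 2 / 4) :=
    Real.pow_div_factorial_le_exp _ (by positivity) k
  have h2 : Real.exp (-‖x‖ ^ 2 / 4) = (Real.exp (‖x‖ ^ 2 / 4))⁻¹ := by
    rw [← Real.exp_neg]; ring_nf
  have hx : ‖x‖ ^ k ≤ 1 + (‖x‖ ^ 2) ^ k := by
    rcases le_total ‖x‖ 1 with h | h
    · have := pow_le_one₀ (norm_nonneg x) h (n := k)
      have : (0 : ℝ) ≤ (‖x‖ ^ 2) ^ k := by positivity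
      linarith
    · have : ‖x‖ ^ k ≤ (‖x‖ ^ 2) ^ k := by
        gcongr; nlinarith
      linarith
  have h3 : 1 ≤ Real.exp (‖x‖ ^ 2 / 4) := Real.one_le_exp (by positivity)
  have h4 : (‖x‖ ^ 2) ^ k ≤ 4 ^ k * k.factorial * Real.exp (‖x‖ ^ 2 / 4) := by
    rw [div_pow, div_div, div_le_iff₀ (by positivity)] at h1
    linarith
  rw [h2, mul_inv_le_iff₀ (by positivity)]
  nlinarith

/-- All derivatives of the Gaussian decay rapidly: `∇e^{-|x|²/4} = -(x/2) e^{-|x|²/4}`, so that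
the product rule reduces derivatives of order `n + 1` to those of order at most `n`. -/
theorem gaussian_decay (n : ℕ) : ∀ k : ℕ,
    ∃ C : ℝ, ∀ x : Spc D,
      ‖x‖ ^ k * ‖iteratedFDeriv ℝ n (fun y : Spc D => Real.exp (-‖y‖ ^ 2 / 4)) x‖ ≤ C := by
  induction n using Nat.strong_induction_on with
  | _ n ih =>
  intro k
  match n with
  | 0 =>
    obtain ⟨C, hC⟩ := gaussian_decay_zero (D := D) k
    refine ⟨C, fun x => ?_⟩
    simpa [abs_of_pos (Real.exp_pos _)] using hC x
  | n + 1 =>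
    set e : Spc D → ℝ := fun y : Spc D => Real.exp (-‖y‖ ^ 2 / 4) with he
    set Λ : Spc D →L[ℝ] Spc D →L[ℝ] ℝ := (-(1 / 2 : ℝ)) • innerSL ℝ with hΛ
    have hfd : fderiv ℝ e = fun x => e x • Λ x := by
      funext x; exact (exp_hasFDerivAt x).fderiv
    obtain ⟨q, A, hA, hAΛ⟩ := (Λ.hasTemperateGrowth).norm_iteratedFDeriv_le_uniform n
    have hb : ∀ i ∈ Finset.range (n + 1), ∃ C : ℝ, ∀ x : Spc D,
        ‖x‖ ^ k * ((n.choose i : ℝ) * ‖iteratedFDeriv ℝ i e x‖ *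
          ‖iteratedFDeriv ℝ (n - i) (fun x => Λ x) x‖) ≤ C := by
      intro i hi
      obtain ⟨C1, h1⟩ := ih i (by simpa using hi) k
      obtain ⟨C2, h2⟩ := ih i (by simpa using hi) (k + q)
      refine ⟨(n.choose i : ℝ) * A * 2 ^ q * (C1 + C2), fun x => ?_⟩
      have h3 : ‖iteratedFDeriv ℝ (n - i) (fun x => Λ x) x‖ ≤ A * (1 + ‖x‖) ^ q :=
        hAΛ _ (Nat.sub_le _ _) x
      have h4 : (1 + ‖x‖) ^ q ≤ 2 ^ q * (1 + ‖x‖ ^ q) := by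
        rcases le_total ‖x‖ 1 with h | h
        · calc (1 + ‖x‖) ^ q ≤ 2 ^ q := by gcongr; linarith
            _ ≤ _ := by
              have : (0:ℝ) ≤ ‖x‖ ^ q := by positivity
              nlinarith [show (0:ℝ) < 2 ^ q by positivity]
        · calc (1 + ‖x‖) ^ q ≤ (2 * ‖x‖) ^ q := by gcongr; linarith
            _ = 2 ^ q * ‖x‖ ^ q := by ring
            _ ≤ _ := by gcongr; linarith
      set N := ‖iteratedFDeriv ℝ i e x‖
      calc ‖x‖ ^ k * ((n.choose i : ℝ) * N * ‖iteratedFDeriv ℝ (n - i) (fun x => Λ x) x‖)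
          ≤ ‖x‖ ^ k * ((n.choose i : ℝ) * N * (A * (2 ^ q * (1 + ‖x‖ ^ q)))) := by
            gcongr; exact h3.trans (by gcongr)
        _ = (n.choose i : ℝ) * A * 2 ^ q * (‖x‖ ^ k * N + ‖x‖ ^ (k + q) * N) := by ring
        _ ≤ _ := by
          gcongr
          · exact h1 x
          · exact h2 x
    choose! C hC using hb
    refine ⟨∑ i ∈ Finset.range (n + 1), C i, fun x => ?_⟩
    rw [← norm_iteratedFDeriv_fderiv, hfd]
    have := norm_iteratedFDeriv_smul_le (𝕜 := ℝ) (N := (n : ℕ∞)) (f := e) (g := fun x => Λ x)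
      (gaussian_contDiff.of_le (by exact_mod_cast le_top)) Λ.contDiff x (n := n) le_rfl
    calc _ ≤ ‖x‖ ^ k * _ := mul_le_mul_of_nonneg_left this (by positivity)
      _ ≤ _ := by
        rw [Finset.mul_sum]
        exact Finset.sum_le_sum fun i hi => hC i hi x

/-- The heat kernel at unit time and unit diffusivity, `(4π)^{-D/2} exp(-|x|²/4)`, as a Schwartz
function. -/
def gau (D : ℕ) : SchwartzMap (Spc D) ℝ :=
  ((4 * π) ^ (-(D : ℝ) / 2)) •
    { toFun := fun y => Real.exp (-‖y‖ ^ 2 / 4)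
      smooth' := gaussian_contDiff
      decay' := fun k n => gaussian_decay n k }

theorem gau_apply (x : Spc D) :
    gau D x = (4 * π) ^ (-(D : ℝ) / 2) * Real.exp (-‖x‖ ^ 2 / 4) := rfl

open LineDeriv in
/-- The `j`-th partial derivative of a Schwartz function, as a Schwartz function. -/
def sd (j : Fin D) (ψ : SchwartzMap (Spc D) ℝ) : SchwartzMap (Spc D) ℝ :=
  ∂_{(EuclideanSpace.single j (1 : ℝ) : Spc D)} ψ

theorem sd_apply (j : Fin D) (ψ : SchwartzMap (Spc D) ℝ) (x : Spc D) :
    sd j ψ x = pd j ψ x := SchwartzMap.lineDerivOp_apply_eq_fderiv _ _ _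

theorem coe_sd (j : Fin D) (ψ : SchwartzMap (Spc D) ℝ) : ⇑(sd j ψ) = pd j ψ :=
  funext (sd_apply j ψ)

/-! ### Parabolically rescaled Schwartz kernels -/

/-- The parabolic rescaling `τ^{-(D+m)/2} ψ(y/√τ)` of a Schwartz function.  If `ψ` is an `m`-th order
derivative of the unit Gaussian `gau D`, this is the same derivative of the heat kernel at time
`τ`. -/
def ker (ψ : SchwartzMap (Spc D) ℝ) (m τ : ℝ) (y : Spc D) : ℝ :=
  τ ^ (-((D : ℝ) + m) / 2) * ψ ((√τ)⁻¹ • y)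

theorem heatK_eq (lam t : ℝ) (hl : 0 < lam) (ht : 0 < t) (x : Spc D) :
    heatK D lam x t = ker (gau D) 0 (lam * t) x := by
  have hp : 0 < lam * t := by positivity
  unfold heatK ker
  rw [gau_apply, norm_smul, norm_inv, Real.norm_of_nonneg (Real.sqrt_nonneg _), mul_pow, inv_pow,
    Real.sq_sqrt hp.le]
  rw [show 4 * π * lam * t = (lam * t) * (4 * π) by ring,
    Real.mul_rpow hp.le (by positivity), add_zero, mul_assoc]
  congr 3
  field_simp

theorem ker_measurable (ψ : SchwartzMap (Spc D) ℝ) (m : ℝ) :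
    Measurable (fun p : ℝ × Spc D => ker ψ m p.1 p.2) := by
  unfold ker
  have : Measurable (ψ : Spc D → ℝ) := ψ.continuous.measurable
  have h2 : Measurable (fun p : ℝ × Spc D => (√p.1)⁻¹ • p.2) := by fun_prop
  exact (by fun_prop : Measurable (fun p : ℝ × Spc D => p.1 ^ (-((D : ℝ) + m) / 2))).mul
    (this.comp h2)

/-- For `τ > 0` the rescaled kernel is again a Schwartz function. -/
theorem ker_schwartz (ψ : SchwartzMap (Spc D) ℝ) (m : ℝ) {τ : ℝ} (hτ : 0 < τ) :
    ∃ S : SchwartzMap (Spc D) ℝ, ⇑S = ker ψ m τ := by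
  have h0 : (√τ)⁻¹ ≠ 0 := inv_ne_zero (Real.sqrt_pos.2 hτ).ne'
  refine ⟨τ ^ (-((D : ℝ) + m) / 2) • SchwartzMap.compCLMOfContinuousLinearEquiv ℝ
    (ContinuousLinearEquiv.smulLeft (Units.mk0 ((√τ)⁻¹) h0)) ψ, ?_⟩
  rfl

theorem ker_continuous (ψ : SchwartzMap (Spc D) ℝ) (m τ : ℝ) : Continuous (ker ψ m τ) := by
  unfold ker
  have := ψ.continuous
  fun_prop

theorem schwartz_bdd (ψ : SchwartzMap (Spc D) ℝ) : ∃ C, 0 < C ∧ ∀ y, |ψ y| ≤ C := by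
  obtain ⟨C, hC, h⟩ := ψ.decay 0 0
  exact ⟨C, hC, fun y => by simpa using h y⟩

theorem ker_integrable (ψ : SchwartzMap (Spc D) ℝ) (m : ℝ) {τ : ℝ} (hτ : 0 < τ) :
    Integrable (ker ψ m τ) := by
  obtain ⟨S, hS⟩ := ker_schwartz ψ m hτ
  rw [← hS]; exact S.integrable

theorem ker_bdd (ψ : SchwartzMap (Spc D) ℝ) (m : ℝ) {τ : ℝ} (hτ : 0 < τ) :
    ∃ C, 0 < C ∧ ∀ y, |ker ψ m τ y| ≤ C := by
  obtain ⟨S, hS⟩ := ker_schwartz ψ m hτ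
  rw [← hS]; exact schwartz_bdd S

/-- Change of variables `y = √τ z`. -/
theorem scaling_integral (F : Spc D → ℝ) (m : ℝ) {τ : ℝ} (hτ : 0 < τ) :
    ∫ y, τ ^ (-((D : ℝ) + m) / 2) * F ((√τ)⁻¹ • y) = τ ^ (-m / 2) * ∫ z, F z := by
  rw [integral_const_mul, Measure.integral_comp_inv_smul_of_nonneg _ _ (Real.sqrt_nonneg _)]
  rw [smul_eq_mul, ← mul_assoc, finrank_euclideanSpace, Fintype.card_fin, Real.sqrt_eq_rpow,
    ← Real.rpow_natCast, ← Real.rpow_mul hτ.le, ← Real.rpow_add hτ]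
  congr 2; ring

theorem ker_L1 (ψ : SchwartzMap (Spc D) ℝ) (m : ℝ) {τ : ℝ} (hτ : 0 < τ) :
    ∫ y, |ker ψ m τ y| = τ ^ (-m / 2) * ∫ z, |ψ z| := by
  rw [← scaling_integral _ m hτ]
  refine integral_congr_ae (Filter.Eventually.of_forall fun y => ?_)
  simp only [ker, abs_mul, abs_of_pos (Real.rpow_pos_of_pos hτ _)]

theorem pd_ker (ψ : SchwartzMap (Spc D) ℝ) (m : ℝ) {τ : ℝ} (hτ : 0 < τ) (j : Fin D) (y : Spc D) :
    pd j (ker ψ m τ) y = ker (sd j ψ) (m + 1) τ y := by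
  have hc : HasFDerivAt (fun y : Spc D => (√τ)⁻¹ • y) ((√τ)⁻¹ • ContinuousLinearMap.id ℝ (Spc D)) y :=
    ((√τ)⁻¹ • ContinuousLinearMap.id ℝ (Spc D)).hasFDerivAt
  have h1 := ((ψ.hasFDerivAt ((√τ)⁻¹ • y)).comp y hc).const_mul (τ ^ (-((D : ℝ) + m) / 2))
  have h2 : HasFDerivAt (ker ψ m τ) _ y := h1
  unfold pd
  rw [h2.fderiv]
  simp only [ker, sd_apply, pd, smul_apply, ContinuousLinearMap.comp_apply,
    ContinuousLinearMap.id_apply, map_smul, smul_eq_mul]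
  rw [← mul_assoc]
  congr 1
  rw [Real.sqrt_eq_rpow, ← Real.rpow_neg hτ.le, ← Real.rpow_add hτ]
  congr 1; ring

theorem sd_integral_zero (ψ : SchwartzMap (Spc D) ℝ) (j : Fin D) : ∫ x, sd j ψ x = 0 := by
  have := integral_mul_fderiv_eq_neg_fderiv_mul_of_integrable (μ := (volume : Measure (Spc D)))
    (f := fun _ => (1 : ℝ)) (g := ψ) (v := EuclideanSpace.single j 1)
    (by simp) (by simpa using (sd j ψ).integrable.congr (by
      refine Filter.Eventually.of_forall fun x => ?_
      simp [sd_apply, pd])) (by simpa using ψ.integrable) (by simp)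
      (fun x _ => ψ.differentiableAt)
  simpa [sd_apply, pd] using this

theorem ker_sd_integral_zero (ψ : SchwartzMap (Spc D) ℝ) (j : Fin D) (m : ℝ) {τ : ℝ} (hτ : 0 < τ) :
    ∫ y, ker (sd j ψ) m τ y = 0 := by
  have := scaling_integral (sd j ψ) m hτ
  rw [sd_integral_zero, mul_zero] at this
  exact this

/-! ### The `L¹` modulus of continuity -/

theorem schwartz_L1_lip (ψ : SchwartzMap (Spc D) ℝ) (v : Spc D) :
    ∫ w, |ψ (w + v) - ψ w| ≤ ‖v‖ * ∫ w, ‖fderiv ℝ ψ w‖ := by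
  have hcd : Continuous (fderiv ℝ ψ) := (ψ.smooth 1).continuous_fderiv (by simp)
  have hfi : Integrable (fun w => ‖fderiv ℝ ψ w‖) := by
    simpa using (SchwartzMap.fderivCLM ℝ (Spc D) ℝ ψ).integrable.norm
  have hpt : ∀ w, |ψ (w + v) - ψ w| ≤ ∫ u in (0 : ℝ)..1, ‖fderiv ℝ ψ (w + u • v)‖ * ‖v‖ := by
    intro w
    have hd : ∀ u ∈ uIcc (0 : ℝ) 1,
        HasDerivAt (fun u : ℝ => ψ (w + u • v)) (fderiv ℝ ψ (w + u • v) v) u := by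
      intro u _
      have h1 : HasDerivAt (fun u : ℝ => w + u • v) v u := by
        simpa using ((hasDerivAt_id u).smul_const v).const_add w
      exact (ψ.hasFDerivAt _).comp_hasDerivAt u h1
    have hc : Continuous (fun u : ℝ => fderiv ℝ ψ (w + u • v) v) := by fun_prop
    have := intervalIntegral.integral_eq_sub_of_hasDerivAt hd (hc.intervalIntegrable _ _)
    simp only [one_smul, zero_smul, add_zero] at this
    rw [← this, ← Real.norm_eq_abs]
    refine intervalIntegral.norm_integral_le_of_norm_le zero_le_one
      (Filter.Eventually.of_forall fun u _ => (fderiv ℝ ψ (w + u • v)).le_opNorm v) ?_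
    exact Continuous.intervalIntegrable (by fun_prop) _ _
  have hsh : ∀ u : ℝ, ∫ w, ‖fderiv ℝ ψ (w + u • v)‖ = ∫ w, ‖fderiv ℝ ψ w‖ := fun u =>
    integral_add_right_eq_self (fun w => ‖fderiv ℝ ψ w‖) (u • v)
  have hint : Integrable (fun p : ℝ × Spc D => ‖fderiv ℝ ψ (p.2 + p.1 • v)‖ * ‖v‖)
      ((volume.restrict (Ioc (0 : ℝ) 1)).prod volume) := by
    rw [integrable_prod_iff (by
      apply Continuous.aestronglyMeasurable; fun_prop)]
    constructor
    · exact Filter.Eventually.of_forall fun u =>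
        (hfi.comp_add_right (u • v)).mul_const _
    · simp only [norm_mul, norm_norm, integral_mul_const, hsh]
      exact integrable_const _
  calc ∫ w, |ψ (w + v) - ψ w|
      ≤ ∫ w, ∫ u in Ioc (0 : ℝ) 1, ‖fderiv ℝ ψ (w + u • v)‖ * ‖v‖ := by
        refine integral_mono ?_ ?_ ?_
        · exact ((ψ.integrable.comp_add_right v).sub ψ.integrable).abs
        · exact hint.integral_prod_right
        · intro w
          have := hpt w
          rwa [intervalIntegral.integral_of_le zero_le_one] at this
    _ = ∫ u in Ioc (0 : ℝ) 1, ∫ w, ‖fderiv ℝ ψ (w + u • v)‖ * ‖v‖ := by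
        rw [integral_integral_swap]
        exact hint.swap
    _ = ‖v‖ * ∫ w, ‖fderiv ℝ ψ w‖ := by
        simp only [integral_mul_const, hsh]
        simp [mul_comm]

theorem schwartz_L1_bound (ψ : SchwartzMap (Spc D) ℝ) (v : Spc D) :
    ∫ w, |ψ (w + v) - ψ w| ≤ 2 * ∫ w, |ψ w| := by
  have h1 := (ψ.integrable (μ := volume)).abs
  calc ∫ w, |ψ (w + v) - ψ w| ≤ ∫ w, (|ψ (w + v)| + |ψ w|) :=
        integral_mono ((ψ.integrable.comp_add_right v).sub ψ.integrable).abs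
          ((h1.comp_add_right v).add h1) (fun w => abs_sub _ _)
    _ = 2 * ∫ w, |ψ w| := by
        rw [integral_add (h1.comp_add_right v) h1,
          integral_add_right_eq_self (fun w => |ψ w|) v]
        ring

/-- The `L¹` Hölder-`1/2` constant of a Schwartz function. -/
def hol (ψ : SchwartzMap (Spc D) ℝ) : ℝ := (∫ w, ‖fderiv ℝ ψ w‖) + 2 * ∫ w, |ψ w|

theorem hol_nonneg (ψ : SchwartzMap (Spc D) ℝ) : 0 ≤ hol ψ :=
  add_nonneg (integral_nonneg fun _ => norm_nonneg _)
    (mul_nonneg zero_le_two (integral_nonneg fun _ => abs_nonneg _))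

/-- Interpolation between the Lipschitz bound and the trivial bound on the `L¹` modulus. -/
theorem schwartz_L1_hol (ψ : SchwartzMap (Spc D) ℝ) (v : Spc D) :
    ∫ w, |ψ (w + v) - ψ w| ≤ hol ψ * √‖v‖ := by
  have hA : 0 ≤ ∫ w, ‖fderiv ℝ ψ w‖ := integral_nonneg fun _ => norm_nonneg _
  have hB : 0 ≤ ∫ w, |ψ w| := integral_nonneg fun _ => abs_nonneg _
  have hs := Real.sqrt_nonneg ‖v‖
  have hsq := Real.mul_self_sqrt (norm_nonneg v)
  unfold hol
  rcases le_total (√‖v‖) 1 with h | h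
  · have := schwartz_L1_lip ψ v
    have h2 : ‖v‖ ≤ √‖v‖ := by nlinarith
    nlinarith [mul_le_mul_of_nonneg_right h2 hA]
  · have := schwartz_L1_bound ψ v
    nlinarith

theorem ker_L1_hol (ψ : SchwartzMap (Spc D) ℝ) (m : ℝ) {τ : ℝ} (hτ : 0 < τ) (x x' : Spc D) :
    ∫ w, |ker ψ m τ (x - w) - ker ψ m τ (x' - w)| ≤ hol ψ * τ ^ (-m / 2 - 1 / 4) * √‖x - x'‖ := by
  have e1 : ∫ w, |ker ψ m τ (x - w) - ker ψ m τ (x' - w)|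
      = ∫ w, |ker ψ m τ (w + (x - x')) - ker ψ m τ w| := by
    rw [← integral_sub_left_eq_self (fun w => |ker ψ m τ (w + (x - x')) - ker ψ m τ w|) volume x']
    congr 1; funext w; congr 3; abel
  have e2 : ∫ w, |ker ψ m τ (w + (x - x')) - ker ψ m τ w|
      = τ ^ (-m / 2) * ∫ z, |ψ (z + (√τ)⁻¹ • (x - x')) - ψ z| := by
    rw [← scaling_integral _ m hτ]
    congr 1; funext w
    simp only [ker, smul_add]
    rw [← mul_sub, abs_mul, abs_of_pos (Real.rpow_pos_of_pos hτ _)]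
  rw [e1, e2]
  have hq : √‖(√τ)⁻¹ • (x - x')‖ = τ ^ (-1 / 4 : ℝ) * √‖x - x'‖ := by
    rw [norm_smul, Real.norm_of_nonneg (by positivity), Real.sqrt_mul (by positivity)]
    congr 1
    rw [Real.sqrt_eq_rpow, Real.sqrt_eq_rpow, ← Real.rpow_neg hτ.le, ← Real.rpow_mul hτ.le]
    norm_num
  have := schwartz_L1_hol ψ ((√τ)⁻¹ • (x - x'))
  rw [hq] at this
  calc _ ≤ τ ^ (-m / 2) * (hol ψ * (τ ^ (-1 / 4 : ℝ) * √‖x - x'‖)) := by gcongr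
    _ = hol ψ * (τ ^ (-m / 2) * τ ^ (-1 / 4 : ℝ)) * √‖x - x'‖ := by ring
    _ = _ := by rw [← Real.rpow_add hτ]; congr 3; ring

/-! ### Convolutions and the heat semigroup -/

/-- Convolution of real functions on `ℝ^D`. -/
def cv (f g : Spc D → ℝ) (x : Spc D) : ℝ := ∫ w, f (x - w) * g w

theorem cv_comm (f g : Spc D → ℝ) (x : Spc D) : cv f g x = cv g f x := by
  unfold cv
  rw [← integral_sub_left_eq_self (fun w => f (x - w) * g w) volume x]
  congr 1; funext w
  rw [sub_sub_cancel, mul_comm]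

/-- Differentiation of a convolution falls on the Schwartz factor. -/
theorem pd_cv (S : SchwartzMap (Spc D) ℝ) {f : Spc D → ℝ} (hf : Integrable f) (j : Fin D)
    (x : Spc D) : pd j (cv S f) x = cv (sd j S) f x := by
  obtain ⟨C, hC, hb⟩ := S.decay 0 1
  have hcd : Continuous (fderiv ℝ S) := (S.smooth 1).continuous_fderiv (by simp)
  obtain ⟨C0, hC0, hb0⟩ := schwartz_bdd S
  have hb' : ∀ y, ‖fderiv ℝ S y‖ ≤ C := fun y => by
    have := hb y
    rwa [pow_zero, one_mul, ← norm_iteratedFDeriv_fderiv, norm_iteratedFDeriv_zero] at this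
  have hmeas : AEStronglyMeasurable (fun w => f w • fderiv ℝ S (x - w)) volume :=
    hf.aestronglyMeasurable.smul (hcd.comp (continuous_const.sub continuous_id)).aestronglyMeasurable
  have key := hasFDerivAt_integral_of_dominated_of_fderiv_le (μ := (volume : Measure (Spc D)))
    (F := fun x w => S (x - w) * f w) (F' := fun x w => f w • fderiv ℝ S (x - w))
    (bound := fun w => |f w| * C) (s := univ) (x₀ := x) Filter.univ_mem
    (Filter.Eventually.of_forall fun y =>
      ((S.continuous.comp (continuous_const.sub continuous_id)).aestronglyMeasurable).mul
        hf.aestronglyMeasurable)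
    (hf.bdd_mul (c := C0)
      ((S.continuous.comp (continuous_const.sub continuous_id)).aestronglyMeasurable)
      (Filter.Eventually.of_forall fun w => hb0 _))
    hmeas
    (Filter.Eventually.of_forall fun w y _ => by
      rw [norm_smul, Real.norm_eq_abs]; gcongr; exact hb' _)
    (hf.abs.mul_const C)
    (Filter.Eventually.of_forall fun w y _ => by
      have h1 : HasFDerivAt (fun y => S (y - w)) (fderiv ℝ S (y - w)) y := by
        have h := (S.hasFDerivAt (y - w)).comp y ((hasFDerivAt_id y).sub_const w)
        rw [ContinuousLinearMap.comp_id] at h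
        exact h
      simpa using h1.mul_const (f w))
  have hI : Integrable (fun w => f w • fderiv ℝ S (x - w)) :=
    (hf.abs.mul_const C).mono hmeas (Filter.Eventually.of_forall fun w => by
      rw [norm_smul, Real.norm_eq_abs, norm_mul, Real.norm_eq_abs, abs_abs,
        Real.norm_of_nonneg hC.le]
      gcongr; exact hb' _)
  have h2 : HasFDerivAt (cv S f) _ x := key
  unfold pd
  rw [h2.fderiv, ContinuousLinearMap.integral_apply hI]
  unfold cv
  congr 1; funext w
  simp [sd_apply, pd, mul_comm]

theorem cv_sd_left_right (S T : SchwartzMap (Spc D) ℝ) (j : Fin D) (x : Spc D) :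
    cv (sd j S) T x = cv S (sd j T) x := by
  rw [← pd_cv S T.integrable, cv_comm, ← pd_cv T S.integrable]
  congr 1; funext y; exact cv_comm _ _ _

/-- Differentiating a semigroup identity in the first factor. -/
theorem cv_ker_left {A B E : SchwartzMap (Spc D) ℝ} {m n p a b : ℝ} (ha : 0 < a) (hb : 0 < b)
    (h : ∀ x, cv (ker A m a) (ker B n b) x = ker E p (a + b) x) (j : Fin D) (x : Spc D) :
    cv (ker (sd j A) (m + 1) a) (ker B n b) x = ker (sd j E) (p + 1) (a + b) x := by
  obtain ⟨S, hS⟩ := ker_schwartz A m ha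
  have hS' : ⇑(sd j S) = ker (sd j A) (m + 1) a := by
    rw [coe_sd, hS]; funext y; exact pd_ker A m ha j y
  rw [← hS', ← pd_cv S (ker_integrable B n hb), hS, funext h, pd_ker _ _ (by positivity)]

theorem cv_ker_right {A B E : SchwartzMap (Spc D) ℝ} {m n p a b : ℝ} (ha : 0 < a) (hb : 0 < b)
    (h : ∀ x, cv (ker A m a) (ker B n b) x = ker E p (a + b) x) (j : Fin D) (x : Spc D) :
    cv (ker A m a) (ker (sd j B) (n + 1) b) x = ker (sd j E) (p + 1) (a + b) x := by
  rw [cv_comm, add_comm a b]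
  refine cv_ker_left hb ha (fun y => ?_) j x
  rw [cv_comm, h, add_comm]

theorem ker_gau_eq {a : ℝ} (ha : 0 < a) (y : Spc D) :
    ker (gau D) 0 a y = (4 * π * a) ^ (-(D : ℝ) / 2) * Real.exp (-‖y‖ ^ 2 / (4 * a)) := by
  have := heatK_eq 1 a one_pos ha y
  rw [one_mul] at this
  rw [← this, heatK]; simp

/-- The semigroup law of the heat kernel. -/
theorem cv_gau {a b : ℝ} (ha : 0 < a) (hb : 0 < b) (x : Spc D) :
    cv (ker (gau D) 0 a) (ker (gau D) 0 b) x = ker (gau D) 0 (a + b) x := by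
  have hab : 0 < a + b := by positivity
  set c : ℝ := (a + b) / (4 * a * b) with hc
  have hcpos : 0 < c := by positivity
  have hpt : ∀ w : Spc D, ker (gau D) 0 a (x - w) * ker (gau D) 0 b w
      = ((4 * π * a) ^ (-(D : ℝ) / 2) * (4 * π * b) ^ (-(D : ℝ) / 2)
        * Real.exp (-‖x‖ ^ 2 / (4 * (a + b)))) * Real.exp (-c * ‖w - (b / (a + b)) • x‖ ^ 2) := by
    intro w
    rw [ker_gau_eq ha, ker_gau_eq hb]
    have : Real.exp (-‖x - w‖ ^ 2 / (4 * a)) * Real.exp (-‖w‖ ^ 2 / (4 * b))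
        = Real.exp (-‖x‖ ^ 2 / (4 * (a + b))) * Real.exp (-c * ‖w - (b / (a + b)) • x‖ ^ 2) := by
      rw [← Real.exp_add, ← Real.exp_add]
      congr 1
      rw [norm_sub_sq_real, norm_sub_sq_real, inner_smul_right, real_inner_comm, norm_smul,
        Real.norm_of_nonneg (by positivity), hc]
      field_simp
      ring
    linear_combination ((4 * π * a) ^ (-(D : ℝ) / 2) * (4 * π * b) ^ (-(D : ℝ) / 2)) * this
  unfold cv
  simp_rw [hpt]
  rw [integral_const_mul,
    integral_sub_right_eq_self (fun w : Spc D => Real.exp (-c * ‖w‖ ^ 2)) ((b / (a + b)) • x),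
    GaussianFourier.integral_rexp_neg_mul_sq_norm hcpos, finrank_euclideanSpace, Fintype.card_fin,
    ker_gau_eq hab]
  have e : π / c = (4 * π * a) * (4 * π * b) / (4 * π * (a + b)) := by
    rw [hc]; field_simp
  have hD : -(D : ℝ) / 2 = -((D : ℝ) / 2) := by ring
  have hn : ∀ u : ℝ, 0 < u → u ^ (-((D : ℝ) / 2)) = (u ^ ((D : ℝ) / 2))⁻¹ :=
    fun u hu => Real.rpow_neg hu.le _
  have hp : ∀ u : ℝ, 0 < u → u ^ ((D : ℝ) / 2) ≠ 0 := fun u hu => (Real.rpow_pos_of_pos hu _).ne'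
  have h1 := hp (4 * π * a) (by positivity)
  have h2 := hp (4 * π * b) (by positivity)
  have h3 := hp (4 * π * (a + b)) (by positivity)
  rw [e, Real.div_rpow (by positivity) (by positivity),
    Real.mul_rpow (x := 4 * π * a) (y := 4 * π * b) (by positivity) (by positivity), hD,
    hn (4 * π * a) (by positivity), hn (4 * π * b) (by positivity),
    hn (4 * π * (a + b)) (by positivity)]
  generalize (4 * π * a) ^ ((D : ℝ) / 2) = p at *
  generalize (4 * π * b) ^ ((D : ℝ) / 2) = q at *
  generalize (4 * π * (a + b)) ^ ((D : ℝ) / 2) = r at *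
  generalize Real.exp (-‖x‖ ^ 2 / (4 * (a + b))) = z
  clear_value c
  field_simp

theorem cv_gau_one_one {a b : ℝ} (ha : 0 < a) (hb : 0 < b) (j l : Fin D) (x : Spc D) :
    cv (ker (sd j (gau D)) 1 a) (ker (sd l (gau D)) 1 b) x
      = ker (sd j (sd l (gau D))) 2 (a + b) x := by
  have h1 := cv_ker_right ha hb (cv_gau (D := D) ha hb) l
  have h2 := cv_ker_left ha hb h1 j x
  norm_num at h2
  exact h2

/-- `∂_k G_a * ∂_j∂_l G_b = ∂_k∂_j∂_l G_{a+b}`. -/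
theorem cv_gau_one_two {a b : ℝ} (ha : 0 < a) (hb : 0 < b) (k j l : Fin D) (x : Spc D) :
    cv (ker (sd k (gau D)) 1 a) (ker (sd j (sd l (gau D))) 2 b) x
      = ker (sd k (sd j (sd l (gau D)))) 3 (a + b) x := by
  have h1 := cv_ker_right ha hb (cv_ker_right ha hb (cv_gau (D := D) ha hb) l) j
  have h2 := cv_ker_left ha hb h1 k x
  norm_num at h2
  exact h2

/-! ### The heat equation and parity -/

theorem sd_gau (j : Fin D) (x : Spc D) : sd j (gau D) x = -(x j / 2) * gau D x := by
  have h := (exp_hasFDerivAt x).const_mul ((4 * π) ^ (-(D : ℝ) / 2))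
  have h2 : HasFDerivAt (gau D) _ x := h
  rw [sd_apply, pd, h2.fderiv, gau_apply]
  simp [EuclideanSpace.inner_single_right]
  ring

theorem sd_sd_gau (j : Fin D) (x : Spc D) :
    sd j (sd j (gau D)) x = (x j ^ 2 / 4 - 1 / 2) * gau D x := by
  have hp : HasFDerivAt (fun y : Spc D => -(y j / 2))
      ((-(1 / 2 : ℝ)) • (EuclideanSpace.proj j : Spc D →L[ℝ] ℝ)) x := by
    have := ((EuclideanSpace.proj j : Spc D →L[ℝ] ℝ).hasFDerivAt (x := x)).const_mul (-(1 / 2 : ℝ))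
    refine this.congr_of_eventuallyEq (Filter.Eventually.of_forall fun y => ?_)
    simp; ring
  have h := hp.mul ((gau D).hasFDerivAt x)
  have e : ⇑(sd j (gau D)) = fun y : Spc D => -(y j / 2) * gau D y := funext (sd_gau j)
  have hg : fderiv ℝ (gau D) x (EuclideanSpace.single j 1) = -(x j / 2) * gau D x := by
    rw [← sd_gau, sd_apply, pd]
  rw [sd_apply, pd, e]
  erw [h.fderiv]
  simp [hg]
  ring

/-- The heat equation `∂_τ G_τ = ΔG_τ`. -/
theorem heat_eq {τ : ℝ} (hτ : 0 < τ) (y : Spc D) :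
    HasDerivAt (fun τ => ker (gau D) 0 τ y) (∑ j, ker (sd j (sd j (gau D))) 2 τ y) τ := by
  have hs : ∑ j, ker (sd j (sd j (gau D))) 2 τ y
      = τ ^ (-((D : ℝ) + 2) / 2) * ((‖y‖ ^ 2 / (4 * τ) - (D : ℝ) / 2) * gau D ((√τ)⁻¹ • y)) := by
    simp only [ker, sd_sd_gau]
    rw [← Finset.mul_sum, ← Finset.sum_mul, Finset.sum_sub_distrib]
    congr 3
    · have := EuclideanSpace.real_norm_sq_eq y
      rw [this, Finset.sum_div]
      refine Finset.sum_congr rfl fun i _ => ?_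
      simp only [PiLp.smul_apply, smul_eq_mul, mul_pow, inv_pow, Real.sq_sqrt hτ.le]
      field_simp
    · simp; ring
  have hd : HasDerivAt (fun τ : ℝ => (4 * π * τ) ^ (-(D : ℝ) / 2) * Real.exp (-‖y‖ ^ 2 / (4 * τ)))
      ((4 * π * (-(D : ℝ) / 2) * (4 * π * τ) ^ (-(D : ℝ) / 2 - 1)) * Real.exp (-‖y‖ ^ 2 / (4 * τ))
        + (4 * π * τ) ^ (-(D : ℝ) / 2) *
          (Real.exp (-‖y‖ ^ 2 / (4 * τ)) * (‖y‖ ^ 2 / (4 * τ ^ 2)))) τ := by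
    have h1 : HasDerivAt (fun τ : ℝ => 4 * π * τ) (4 * π) τ := by
      simpa using (hasDerivAt_id τ).const_mul (4 * π)
    have h2 := h1.rpow_const (p := -(D : ℝ) / 2) (Or.inl (by positivity))
    have h3 : HasDerivAt (fun τ : ℝ => -‖y‖ ^ 2 / (4 * τ)) (‖y‖ ^ 2 / (4 * τ ^ 2)) τ := by
      have := (hasDerivAt_inv hτ.ne').const_mul (-‖y‖ ^ 2 / 4)
      refine (this.congr_deriv ?_).congr_of_eventuallyEq
        (Filter.Eventually.of_forall fun s => ?_)
      · field_simp
      · simp only [mul_inv, div_eq_mul_inv]; ring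
    exact h2.mul h3.exp
  have hev : (fun τ => ker (gau D) 0 τ y) =ᶠ[nhds τ]
      (fun τ : ℝ => (4 * π * τ) ^ (-(D : ℝ) / 2) * Real.exp (-‖y‖ ^ 2 / (4 * τ))) := by
    filter_upwards [lt_mem_nhds hτ] with s hs
    exact ker_gau_eq hs y
  refine (hd.congr_of_eventuallyEq hev).congr_deriv ?_
  rw [hs]
  have hk := ker_gau_eq hτ y
  unfold ker at hk
  have e1 : τ ^ (-((D : ℝ) + 2) / 2) = τ ^ (-((D : ℝ) + 0) / 2) / τ := by
    rw [← Real.rpow_sub_one hτ.ne']; congr 1; ring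
  have e2 : (4 * π * τ) ^ (-(D : ℝ) / 2 - 1) = (4 * π * τ) ^ (-(D : ℝ) / 2) / (4 * π * τ) :=
    Real.rpow_sub_one (by positivity) _
  rw [e1, e2]
  have : τ ^ (-((D : ℝ) + 0) / 2) / τ * ((‖y‖ ^ 2 / (4 * τ) - (D : ℝ) / 2) * gau D ((√τ)⁻¹ • y))
     = (τ ^ (-((D : ℝ) + 0) / 2) * gau D ((√τ)⁻¹ • y)) *
        ((‖y‖ ^ 2 / (4 * τ) - (D : ℝ) / 2) / τ) := by ring
  rw [this, hk]
  field_simp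
  ring

/-- A partial derivative reverses parity. -/
theorem sd_neg (ψ : SchwartzMap (Spc D) ℝ) (ε : ℝ) (h : ∀ x, ψ (-x) = ε * ψ x) (j : Fin D)
    (x : Spc D) : sd j ψ (-x) = -ε * sd j ψ x := by
  have h1 : HasFDerivAt (fun y => ψ (-y)) ((fderiv ℝ ψ (-x)).comp (-ContinuousLinearMap.id ℝ _)) x :=
    (ψ.hasFDerivAt (-x)).comp x (hasFDerivAt_id x).neg
  have h2 : HasFDerivAt (fun y => ψ (-y)) (ε • fderiv ℝ ψ x) x := by
    rw [funext h]; exact (ψ.hasFDerivAt x).const_mul ε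
  have := congrArg (fun L => L (EuclideanSpace.single j (1 : ℝ))) (h1.unique h2)
  simp at this
  rw [sd_apply, sd_apply, pd, pd]; linarith

theorem gau_neg (x : Spc D) : gau D (-x) = 1 * gau D x := by
  rw [gau_apply, gau_apply, norm_neg, one_mul]

theorem ker_neg {ψ : SchwartzMap (Spc D) ℝ} {ε : ℝ} (h : ∀ x, ψ (-x) = ε * ψ x) (m τ : ℝ)
    (y : Spc D) : ker ψ m τ (-y) = ε * ker ψ m τ y := by
  simp only [ker, smul_neg, h]; ring

theorem ker_one_neg (j : Fin D) (m τ : ℝ) (y : Spc D) :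
    ker (sd j (gau D)) m τ (-y) = -ker (sd j (gau D)) m τ y := by
  rw [ker_neg (sd_neg _ _ gau_neg j)]; ring

theorem ker_two_neg (j l : Fin D) (m τ : ℝ) (y : Spc D) :
    ker (sd j (sd l (gau D))) m τ (-y) = ker (sd j (sd l (gau D))) m τ y := by
  rw [ker_neg (sd_neg _ _ (sd_neg _ _ gau_neg l) j)]; ring

theorem ker_zero_neg (m τ : ℝ) (y : Spc D) : ker (gau D) m τ (-y) = ker (gau D) m τ y := by
  rw [ker_neg gau_neg]; ring

/-! ### Fubini for convolutions -/

theorem conv_prod_integrable {k φ : Spc D → ℝ} (hk : Integrable k) (hφ : Integrable φ) :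
    Integrable (fun p : Spc D × Spc D => φ p.1 * k (p.1 - p.2)) (volume.prod volume) := by
  have h := hφ.convolution_integrand (ContinuousLinearMap.mul ℝ ℝ) (μ := volume) hk.comp_neg
  have := h.swap
  refine this.congr (Filter.Eventually.of_forall fun p => ?_)
  simp [Function.comp]

/-- Fubini: moving a convolution from one factor of a pairing to the other. -/
theorem fub {k φ f : Spc D → ℝ} (hk : Integrable k) (hφ : Integrable φ) (hf : Measurable f)
    {M : ℝ} (hM : ∀ x, |f x| ≤ M) :
    ∫ x, cv k f x * φ x = ∫ w, f w * ∫ x, k (x - w) * φ x := by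
  have h1 : Integrable (fun p : Spc D × Spc D => f p.2 * (φ p.1 * k (p.1 - p.2)))
      (volume.prod volume) :=
    (conv_prod_integrable hk hφ).bdd_mul (c := M) (hf.comp measurable_snd).aestronglyMeasurable
      (Filter.Eventually.of_forall fun p => hM _)
  have h2 := integral_integral_swap (f := fun x w => f w * (φ x * k (x - w))) h1
  calc ∫ x, cv k f x * φ x = ∫ x, ∫ w, f w * (φ x * k (x - w)) := by
        congr 1; funext x
        unfold cv
        rw [← integral_mul_const]
        congr 1; funext w; ring
    _ = ∫ w, ∫ x, f w * (φ x * k (x - w)) := h2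
    _ = _ := by
        congr 1; funext w
        rw [← integral_const_mul]
        congr 1; funext x; ring

/-- Bounded, measurable and integrable functions; the class is stable under products and
convolutions, so that every pairing below converges absolutely. -/
structure BI (f : Spc D → ℝ) : Prop where
  meas : Measurable f
  int : Integrable f
  bdd : ∃ M, ∀ x, |f x| ≤ M

theorem BI.schwartz (S : SchwartzMap (Spc D) ℝ) : BI (⇑S) :=
  ⟨S.continuous.measurable, S.integrable, (schwartz_bdd S).imp fun _ h => h.2⟩

theorem BI.ker (ψ : SchwartzMap (Spc D) ℝ) (m : ℝ) {τ : ℝ} (hτ : 0 < τ) : BI (ker ψ m τ) := by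
  obtain ⟨S, hS⟩ := ker_schwartz ψ m hτ
  rw [← hS]; exact BI.schwartz S

theorem BI.mul_int {f g : Spc D → ℝ} (hf : BI f) (hg : BI g) :
    Integrable (fun x => f x * g x) := by
  obtain ⟨M, hM⟩ := hf.bdd
  exact hg.int.bdd_mul hf.meas.aestronglyMeasurable (Filter.Eventually.of_forall hM)

theorem cv_integrand_int {k f : Spc D → ℝ} (hk : Integrable k) (hf : Measurable f) {M : ℝ}
    (hM : ∀ x, |f x| ≤ M) (x : Spc D) : Integrable (fun w => k (x - w) * f w) :=
  (hk.comp_sub_left x).mul_bdd hf.aestronglyMeasurable (Filter.Eventually.of_forall hM)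

theorem cv_bound {k f : Spc D → ℝ} (hk : Integrable k) {M : ℝ}
    (hM : ∀ x, |f x| ≤ M) (x : Spc D) : |cv k f x| ≤ M * ∫ y, |k y| := by
  unfold cv
  rw [← integral_sub_left_eq_self (fun y => |k y|) volume x, ← integral_const_mul]
  rw [← Real.norm_eq_abs]
  refine norm_integral_le_of_norm_le (((hk.comp_sub_left x).abs).const_mul M)
    (Filter.Eventually.of_forall fun w => ?_)
  rw [norm_mul, mul_comm, Real.norm_eq_abs, Real.norm_eq_abs]
  gcongr; exact hM w

theorem cv_measurable {k f : Spc D → ℝ} (hk : Measurable k) (hf : Measurable f) :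
    Measurable (cv k f) := by
  have : StronglyMeasurable (fun p : Spc D × Spc D => k (p.1 - p.2) * f p.2) :=
    ((hk.comp (measurable_fst.sub measurable_snd)).mul (hf.comp measurable_snd)).stronglyMeasurable
  exact this.integral_prod_right.measurable

theorem BI.cv {k f : Spc D → ℝ} (hk : BI k) (hf : BI f) : BI (cv k f) := by
  refine ⟨cv_measurable hk.meas hf.meas, ?_, ?_⟩
  · have h := (conv_prod_integrable hk.int.comp_neg hf.int).integral_prod_right
    refine h.congr (Filter.Eventually.of_forall fun x => ?_)
    simp only [_root_.cv]
    congr 1; funext w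
    rw [neg_sub, mul_comm]
  · obtain ⟨M, hM⟩ := hf.bdd
    exact ⟨_, fun x => cv_bound hk.int hM x⟩

theorem BI.neg_arg {f : Spc D → ℝ} (hf : BI f) : BI (fun x => f (-x)) :=
  ⟨hf.meas.comp measurable_neg, hf.int.comp_neg, hf.bdd.imp fun _ h _ => h _⟩

/-- Associativity of convolution. -/
theorem cv_assoc {k k' f : Spc D → ℝ} (hk : Integrable k) (hk' : Integrable k')
    (hf : Measurable f) {M : ℝ} (hM : ∀ x, |f x| ≤ M) (x : Spc D) :
    cv k (cv k' f) x = cv (cv k k') f x := by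
  have h := fub (φ := fun w => k (x - w)) hk' (hk.comp_sub_left x) hf hM
  calc cv k (cv k' f) x = ∫ w, cv k' f w * k (x - w) := by
        unfold cv; congr 1; funext w; ring
    _ = _ := h
    _ = cv (cv k k') f x := by
        conv_rhs => unfold cv
        congr 1; funext w
        rw [mul_comm]; congr 1
        rw [← integral_add_right_eq_self (fun z => k' (z - w) * k (x - z)) w]
        congr 1; funext z
        rw [add_sub_cancel_right, mul_comm]; congr 2; abel

/-- Moving an even or odd kernel across a pairing. -/
theorem pair_cv {k f g : Spc D → ℝ} {ε : ℝ} (hε : ∀ y, k (-y) = ε * k y) (hk : Integrable k)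
    (hg : Integrable g) (hf : Measurable f) {M : ℝ} (hM : ∀ x, |f x| ≤ M) :
    ∫ x, cv k f x * g x = ε * ∫ x, f x * cv k g x := by
  rw [fub hk hg hf hM, ← integral_const_mul]
  congr 1; funext w
  have : ∫ x, k (x - w) * g x = ε * cv k g w := by
    unfold cv
    rw [← integral_const_mul]
    congr 1; funext x
    rw [← neg_sub, hε]; ring
  rw [this]; ring

/-- The correlation `y ↦ ∫ f(w) g(w - y) dw`. -/
def corr (f g : Spc D → ℝ) (y : Spc D) : ℝ := ∫ w, f w * g (w - y)

theorem corr_measurable {f g : Spc D → ℝ} (hf : Measurable f) (hg : Measurable g) :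
    Measurable (corr f g) := by
  have : StronglyMeasurable (fun p : Spc D × Spc D => f p.2 * g (p.2 - p.1)) :=
    ((hf.comp measurable_snd).mul (hg.comp (measurable_snd.sub measurable_fst))).stronglyMeasurable
  exact this.integral_prod_right.measurable

theorem corr_bound {f g : Spc D → ℝ} (hg : Integrable g) {M : ℝ} (hM : ∀ x, |f x| ≤ M)
    (y : Spc D) : |corr f g y| ≤ M * ∫ w, |g w| := by
  unfold corr
  rw [← integral_sub_right_eq_self (fun y => |g y|) y, ← integral_const_mul]
  rw [← Real.norm_eq_abs]
  refine norm_integral_le_of_norm_le (((hg.comp_sub_right y).abs).const_mul M)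
    (Filter.Eventually.of_forall fun w => ?_)
  rw [norm_mul, Real.norm_eq_abs, Real.norm_eq_abs]
  gcongr; exact hM w

theorem pair_corr {k f g : Spc D → ℝ} (hk : Integrable k)
    (hg : Integrable g) (hf : Measurable f) {M : ℝ} (hM : ∀ x, |f x| ≤ M) :
    ∫ x, f x * cv k g x = ∫ y, k y * corr f g y := by
  -- both sides are the double integral of `f(w) k(y) g(w - y)`
  have h := fub (k := fun y => g (-y)) (φ := k) hg.comp_neg hk hf hM
  have e1 : ∫ x, f x * cv k g x = ∫ w, f w * ∫ x, g (-(x - w)) * k x := by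
    congr 1; funext w; congr 1
    rw [cv_comm]; unfold cv; simp only [neg_sub]
  rw [e1, ← h]
  congr 1; funext y
  rw [mul_comm]; congr 1
  unfold cv corr
  congr 1; funext w
  simp only [neg_sub]
  ring

/-! ### The energy inequality for the heat flow -/

/-- Integrability on a time-space product from an integrable bound on the `L¹` norms of the slices. -/
theorem prod_int {F : ℝ × Spc D → ℝ} (hF : Measurable F) {S : Set ℝ} (hS : MeasurableSet S)
    {b : ℝ → ℝ} (hi : ∀ τ ∈ S, Integrable (fun y => F (τ, y)))
    (hb : ∀ τ ∈ S, ∫ y, |F (τ, y)| ≤ b τ) (hbi : IntegrableOn b S) :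
    Integrable F ((volume.restrict S).prod volume) := by
  rw [integrable_prod_iff hF.aestronglyMeasurable]
  refine ⟨(ae_restrict_mem hS).mono hi, ?_⟩
  refine hbi.mono' ?_ ((ae_restrict_mem hS).mono fun τ hτ => ?_)
  · exact (hF.norm.stronglyMeasurable.integral_prod_right' (ν := volume)).aestronglyMeasurable
  · rw [Real.norm_of_nonneg (integral_nonneg fun _ => norm_nonneg _)]
    exact hb τ hτ

theorem ker_continuousOn_time (ψ : SchwartzMap (Spc D) ℝ) (m : ℝ) (y : Spc D) :
    ContinuousOn (fun τ => ker ψ m τ y) (Ioi 0) := by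
  unfold ker
  have hψ := ψ.continuous
  have h1 : ContinuousOn (fun τ : ℝ => τ ^ (-((D : ℝ) + m) / 2)) (Ioi 0) :=
    fun τ hτ => (Real.continuousAt_rpow_const _ _ (Or.inl (ne_of_gt hτ))).continuousWithinAt
  have h2 : ContinuousOn (fun τ : ℝ => (√τ)⁻¹ • y) (Ioi 0) :=
    (Real.continuous_sqrt.continuousOn.inv₀ fun τ hτ => (Real.sqrt_pos.2 hτ).ne').smul
      continuousOn_const
  exact h1.mul (hψ.comp_continuousOn h2)

/-- `Δ G_τ`, where `G_τ` is the heat kernel at time `τ`. -/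
def Lk (τ : ℝ) (y : Spc D) : ℝ := ∑ i, ker (sd i (sd i (gau D))) 2 τ y

theorem int_inv_Ioc {ε R : ℝ} (hε : 0 < ε) (C : ℝ) :
    IntegrableOn (fun τ : ℝ => τ ^ (-2 / 2 : ℝ) * C) (Ioc ε R) := by
  have h1 : ContinuousOn (fun τ : ℝ => τ ^ (-2 / 2 : ℝ) * C) (Icc ε R) :=
    fun τ hτ => ((Real.continuousAt_rpow_const _ _ (Or.inl
      (hε.trans_le hτ.1).ne')).mul continuousAt_const).continuousWithinAt
  exact (h1.integrableOn_compact isCompact_Icc).mono_set Ioc_subset_Icc_self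

theorem ker_two_prod_int (ψ : SchwartzMap (Spc D) ℝ) {ε R : ℝ} (hε : 0 < ε) {a : Spc D → ℝ}
    (ha : Measurable a) {M : ℝ} (hM : ∀ y, |a y| ≤ M) :
    Integrable (fun p : ℝ × Spc D => ker ψ 2 p.1 p.2 * a p.2)
      ((volume.restrict (Ioc ε R)).prod volume) := by
  have h0 : Integrable (fun p : ℝ × Spc D => ker ψ 2 p.1 p.2)
      ((volume.restrict (Ioc ε R)).prod volume) := by
    refine prod_int (ker_measurable ψ 2) measurableSet_Ioc
      (fun τ hτ => ker_integrable ψ 2 (hε.trans hτ.1))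
      (fun τ hτ => (ker_L1 ψ 2 (hε.trans hτ.1)).le) (int_inv_Ioc hε _)
  exact h0.mul_bdd (ha.comp measurable_snd).aestronglyMeasurable
    (Filter.Eventually.of_forall fun p => hM _)

theorem ker_two_pair_int (ψ : SchwartzMap (Spc D) ℝ) {ε R : ℝ} (hε : 0 < ε) {a : Spc D → ℝ}
    (ha : Measurable a) {M : ℝ} (hM : ∀ y, |a y| ≤ M) :
    IntegrableOn (fun τ => ∫ y, ker ψ 2 τ y * a y) (Ioc ε R) :=
  (ker_two_prod_int ψ hε ha hM).integral_prod_left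

theorem Lk_pair {τ : ℝ} (hτ : 0 < τ) {a : Spc D → ℝ}
    (ha : Measurable a) {M : ℝ} (hM : ∀ y, |a y| ≤ M) :
    ∫ y, Lk τ y * a y = ∑ i, ∫ y, ker (sd i (sd i (gau D))) 2 τ y * a y := by
  rw [← integral_finsetSum]
  · simp only [Lk, Finset.sum_mul]
  · exact fun i _ => (ker_integrable _ _ hτ).mul_bdd ha.aestronglyMeasurable
      (Filter.Eventually.of_forall hM)

/-- Integrated heat equation, tested against a bounded function. -/
theorem ftc_pair {ε R : ℝ} (hε : 0 < ε) (hR : ε ≤ R) {a : Spc D → ℝ} (ha : Measurable a) {M : ℝ}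
    (hM : ∀ y, |a y| ≤ M) :
    IntegrableOn (fun τ => ∫ y, Lk τ y * a y) (Ioc ε R) ∧
    ∫ τ in Ioc ε R, ∫ y, Lk τ y * a y
      = (∫ y, ker (gau D) 0 R y * a y) - ∫ y, ker (gau D) 0 ε y * a y := by
  have h0 : Integrable (fun p : ℝ × Spc D => Lk p.1 p.2 * a p.2)
      ((volume.restrict (Ioc ε R)).prod volume) := by
    simp only [Lk, Finset.sum_mul]
    exact integrable_finsetSum _ fun i _ => ker_two_prod_int _ hε ha hM
  refine ⟨h0.integral_prod_left, ?_⟩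
  rw [integral_integral_swap (f := fun τ y => Lk τ y * a y) h0, ← integral_sub]
  · congr 1; funext y
    rw [integral_mul_const, ← sub_mul]
    congr 1
    rw [← intervalIntegral.integral_of_le hR]
    refine intervalIntegral.integral_eq_sub_of_hasDerivAt
      (f := fun τ => ker (gau D) 0 τ y) (f' := fun τ => Lk τ y)
      (fun τ hτ => ?_) (ContinuousOn.intervalIntegrable ?_)
    · rw [uIcc_of_le hR] at hτ
      exact heat_eq (hε.trans_le hτ.1) y
    · rw [uIcc_of_le hR]
      unfold Lk
      refine continuousOn_finsetSum _ fun i _ => (ker_continuousOn_time _ 2 y).mono fun τ hτ => ?_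
      exact hε.trans_le hτ.1
  · exact (ker_integrable _ _ (hε.trans_le hR)).mul_bdd ha.aestronglyMeasurable
      (Filter.Eventually.of_forall hM)
  · exact (ker_integrable _ _ hε).mul_bdd ha.aestronglyMeasurable (Filter.Eventually.of_forall hM)

theorem cv_cv_one {τ : ℝ} (hτ : 0 < τ) (j l : Fin D) {f : Spc D → ℝ} (hf : BI f) (x : Spc D) :
    cv (ker (sd j (gau D)) 1 (τ / 2)) (cv (ker (sd l (gau D)) 1 (τ / 2)) f) x
      = cv (ker (sd j (sd l (gau D))) 2 τ) f x := by
  obtain ⟨M, hM⟩ := hf.bdd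
  rw [cv_assoc (ker_integrable _ _ (half_pos hτ)) (ker_integrable _ _ (half_pos hτ)) hf.meas hM]
  rw [funext (cv_gau_one_one (half_pos hτ) (half_pos hτ) j l), add_halves]

/-- The two derivatives of the kernel are distributed over the two factors. -/
theorem pair_two {τ : ℝ} (hτ : 0 < τ) (j l : Fin D) {f φ : Spc D → ℝ} (hf : BI f) (hφ : BI φ) :
    ∫ x, φ x * cv (ker (sd j (sd l (gau D))) 2 τ) f x
      = -∫ x, cv (ker (sd j (gau D)) 1 (τ / 2)) φ x * cv (ker (sd l (gau D)) 1 (τ / 2)) f x := by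
  have hB := (BI.ker (sd l (gau D)) 1 (half_pos hτ)).cv hf
  obtain ⟨M, hM⟩ := hφ.bdd
  have := pair_cv (k := ker (sd j (gau D)) 1 (τ / 2)) (ε := -1) (f := φ)
    (fun y => by rw [ker_one_neg]; ring) (ker_integrable _ _ (half_pos hτ)) hB.int hφ.meas hM
  rw [this]
  simp only [cv_cv_one hτ j l hf]
  ring

/-- `∫ |∇ G_{τ/2} * f|²`. -/
def en (f : Spc D → ℝ) (τ : ℝ) : ℝ := ∑ i, ∫ x, (cv (ker (sd i (gau D)) 1 (τ / 2)) f x) ^ 2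

theorem corr_BI_bound {f g : Spc D → ℝ} (hf : BI f) (hg : BI g) :
    Measurable (corr f g) ∧ ∃ M, ∀ y, |corr f g y| ≤ M := by
  obtain ⟨M, hM⟩ := hf.bdd
  exact ⟨corr_measurable hf.meas hg.meas, _, corr_bound hg.int hM⟩

/-- `-∫ f (ΔG_τ * f) = ∫ |∇G_{τ/2} * f|²`. -/
theorem en_eq {f : Spc D → ℝ} (hf : BI f) {τ : ℝ} (hτ : 0 < τ) :
    en f τ = -∫ y, Lk τ y * corr f f y := by
  obtain ⟨hc, M', hM'⟩ := corr_BI_bound hf hf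
  obtain ⟨M, hM⟩ := hf.bdd
  rw [Lk_pair hτ hc hM', en, ← Finset.sum_neg_distrib]
  refine Finset.sum_congr rfl fun i _ => ?_
  rw [← pair_corr (ker_integrable _ _ hτ) hf.int hf.meas hM, pair_two hτ i i hf hf, neg_neg]
  simp only [sq]

theorem gau_integral : ∫ x, gau D x = 1 := by
  have h := GaussianFourier.integral_rexp_neg_mul_sq_norm (V := Spc D) (b := 1 / 4) (by norm_num)
  have : ∀ x, gau D x = (4 * π) ^ (-(D : ℝ) / 2) * Real.exp (-(1 / 4) * ‖x‖ ^ 2) := fun x => by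
    rw [gau_apply]; congr 2; ring
  simp_rw [this]
  rw [integral_const_mul, h, finrank_euclideanSpace, Fintype.card_fin,
    show π / (1 / 4) = 4 * π by ring, ← Real.rpow_add (by positivity)]
  rw [neg_div, neg_add_cancel, Real.rpow_zero]

theorem ker_gau_integral {τ : ℝ} (hτ : 0 < τ) : ∫ y, ker (gau D) 0 τ y = 1 := by
  have := scaling_integral (gau D) 0 hτ
  rw [gau_integral] at this
  simpa [ker] using this

theorem ker_gau_nonneg {τ : ℝ} (hτ : 0 < τ) (y : Spc D) : 0 ≤ ker (gau D) 0 τ y := by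
  rw [ker_gau_eq hτ]; positivity

/-- The autocorrelation is maximal at `0`. -/
theorem corr_le {f : Spc D → ℝ} (hf : BI f) (y : Spc D) : corr f f y ≤ ∫ x, f x ^ 2 := by
  have h2 : Integrable (fun x => f x ^ 2) := by simpa [sq] using hf.mul_int hf
  have h3 : Integrable (fun x => f (x - y) ^ 2) := h2.comp_sub_right y
  have hs : Integrable (fun x => f x * f (x - y)) :=
    hf.mul_int ⟨hf.meas.comp (measurable_id.sub_const y), hf.int.comp_sub_right y,
      hf.bdd.imp fun _ h _ => h _⟩
  calc corr f f y ≤ ∫ x, (f x ^ 2 + f (x - y) ^ 2) / 2 :=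
        integral_mono hs ((h2.add h3).div_const 2) fun x => by
          simp only
          nlinarith [sq_nonneg (f x - f (x - y))]
    _ = ∫ x, f x ^ 2 := by
        rw [integral_div, integral_add h2 h3, integral_sub_right_eq_self (fun x => f x ^ 2)]
        ring

theorem gau_pair_nonneg {f : Spc D → ℝ} (hf : BI f) {R : ℝ} (hR : 0 < R) :
    0 ≤ ∫ y, ker (gau D) 0 R y * corr f f y := by
  obtain ⟨M, hM⟩ := hf.bdd
  have h2 := half_pos hR
  have hB := (BI.ker (gau D) 0 h2).cv hf
  rw [← pair_corr (ker_integrable _ _ hR) hf.int hf.meas hM]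
  have := pair_cv (k := ker (gau D) 0 (R / 2)) (ε := 1) (f := f)
    (fun y => by rw [ker_zero_neg]; ring) (ker_integrable _ _ h2) hB.int hf.meas hM
  have e : ∀ x, cv (ker (gau D) 0 (R / 2)) (cv (ker (gau D) 0 (R / 2)) f) x
      = cv (ker (gau D) 0 R) f x := fun x => by
    rw [cv_assoc (ker_integrable _ _ h2) (ker_integrable _ _ h2) hf.meas hM,
      funext (cv_gau h2 h2), add_halves]
  simp only [e, one_mul] at this
  rw [← this]
  exact integral_nonneg fun x => mul_self_nonneg _

/-- The energy inequality: `∫ |∇G_{τ/2} * f|² = -∂_τ ∫ f (G_τ * f)`, and `∫ f (G_τ * f)` takes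
values between `0` and `∫ f²`. -/
theorem energy_le {f : Spc D → ℝ} (hf : BI f) {ε R : ℝ} (hε : 0 < ε) (hR : ε ≤ R) :
    IntegrableOn (en f) (Ioc ε R) ∧ ∫ τ in Ioc ε R, en f τ ≤ ∫ x, f x ^ 2 := by
  obtain ⟨hc, M', hM'⟩ := corr_BI_bound hf hf
  obtain ⟨h1, h2⟩ := ftc_pair hε hR hc hM'
  have he : ∀ τ ∈ Ioc ε R, -∫ y, Lk τ y * corr f f y = en f τ :=
    fun τ hτ => (en_eq hf (hε.trans hτ.1)).symm
  refine ⟨h1.neg.congr_fun he measurableSet_Ioc, ?_⟩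
  rw [← setIntegral_congr_fun measurableSet_Ioc he, integral_neg, h2]
  have h3 := gau_pair_nonneg hf (hε.trans_le hR)
  have h4 : ∫ y, ker (gau D) 0 ε y * corr f f y ≤ ∫ x, f x ^ 2 := by
    calc ∫ y, ker (gau D) 0 ε y * corr f f y ≤ ∫ y, ker (gau D) 0 ε y * ∫ x, f x ^ 2 :=
          integral_mono ((ker_integrable _ _ hε).mul_bdd hc.aestronglyMeasurable
            (Filter.Eventually.of_forall hM')) ((ker_integrable _ _ hε).mul_const _)
            fun y => mul_le_mul_of_nonneg_left (corr_le hf y) (ker_gau_nonneg hε y)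
      _ = _ := by rw [integral_mul_const, ker_gau_integral hε, one_mul]
  linarith

/-- The truncated operator `∫_ε^R ∂_j∂_l G_τ * dτ` is bounded on `L²`, in bilinear form. -/
theorem two_pair_le {f φ : Spc D → ℝ} (hf : BI f) (hφ : BI φ) {ε R : ℝ} (hε : 0 < ε)
    (hR : ε ≤ R) (j l : Fin D) :
    ∫ τ in Ioc ε R, ∫ x, φ x * cv (ker (sd j (sd l (gau D))) 2 τ) f x
      ≤ ((∫ x, φ x ^ 2) + ∫ x, f x ^ 2) / 2 := by
  obtain ⟨h1, h2⟩ := energy_le hf hε hR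
  obtain ⟨h3, h4⟩ := energy_le hφ hε hR
  obtain ⟨hc, M', hM'⟩ := corr_BI_bound hφ hf
  obtain ⟨M, hM⟩ := hφ.bdd
  have hi : IntegrableOn (fun τ => ∫ x, φ x * cv (ker (sd j (sd l (gau D))) 2 τ) f x)
      (Ioc ε R) := by
    refine (ker_two_pair_int (sd j (sd l (gau D))) hε hc hM').congr_fun (fun τ hτ => ?_)
      measurableSet_Ioc
    exact (pair_corr (ker_integrable _ _ (hε.trans hτ.1)) hf.int hφ.meas hM).symm
  have : ∫ τ in Ioc ε R, ∫ x, φ x * cv (ker (sd j (sd l (gau D))) 2 τ) f x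
      ≤ ∫ τ in Ioc ε R, (en φ τ + en f τ) / 2 := by
    refine setIntegral_mono_on hi ((h3.add h1).div_const 2) measurableSet_Ioc fun τ hτ => ?_
    have hτ0 := hε.trans hτ.1
    have ha := (BI.ker (sd j (gau D)) 1 (half_pos hτ0)).cv hφ
    have hb := (BI.ker (sd l (gau D)) 1 (half_pos hτ0)).cv hf
    have ha2 := ha.mul_int ha
    have hb2 := hb.mul_int hb
    rw [pair_two hτ0 j l hf hφ, ← integral_neg]
    calc _ ≤ ∫ x, ((cv (ker (sd j (gau D)) 1 (τ / 2)) φ x) * (cv (ker (sd j (gau D)) 1 (τ / 2)) φ x)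
            + (cv (ker (sd l (gau D)) 1 (τ / 2)) f x) * (cv (ker (sd l (gau D)) 1 (τ / 2)) f x)) / 2 :=
          integral_mono (ha.mul_int hb).neg ((ha2.add hb2).div_const 2) fun x => by
            simp only [Pi.neg_apply]
            nlinarith [sq_nonneg (cv (ker (sd j (gau D)) 1 (τ / 2)) φ x
              + cv (ker (sd l (gau D)) 1 (τ / 2)) f x)]
      _ ≤ (en φ τ + en f τ) / 2 := by
          rw [integral_div, integral_add ha2 hb2]
          have e1 := Finset.single_le_sum (f := fun i => ∫ x, (cv (ker (sd i (gau D)) 1 (τ / 2)) φ x) ^ 2)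
            (fun i _ => integral_nonneg fun x => sq_nonneg _) (Finset.mem_univ j)
          have e2 := Finset.single_le_sum (f := fun i => ∫ x, (cv (ker (sd i (gau D)) 1 (τ / 2)) f x) ^ 2)
            (fun i _ => integral_nonneg fun x => sq_nonneg _) (Finset.mem_univ l)
          simp only [sq] at e1 e2
          simp only [en, sq]
          linarith
  refine this.trans ?_
  rw [integral_div, integral_add h3 h1]
  linarith

/-! ### Moments of the kernels -/

/-- The absolute moment of order `p`. -/
def wt (ψ : SchwartzMap (Spc D) ℝ) (p : ℝ) : ℝ := ∫ z, |ψ z| * ‖z‖ ^ p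

theorem wt_nonneg (ψ : SchwartzMap (Spc D) ℝ) (p : ℝ) : 0 ≤ wt ψ p :=
  integral_nonneg fun _ => by positivity

theorem rpow_le_one_add_sq {a p : ℝ} (ha : 0 ≤ a) (hp : 0 ≤ p) (hp2 : p ≤ 2) :
    a ^ p ≤ 1 + a ^ 2 := by
  rcases le_total a 1 with h | h
  · have := Real.rpow_le_one ha h hp
    nlinarith [sq_nonneg a]
  · have := Real.rpow_le_rpow_of_exponent_le h hp2
    rw [Real.rpow_two] at this
    linarith

theorem schwartz_wt_int (ψ : SchwartzMap (Spc D) ℝ) {p : ℝ} (hp : 0 ≤ p) (hp2 : p ≤ 2) :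
    Integrable (fun z => |ψ z| * ‖z‖ ^ p) := by
  have h1 : Integrable (fun z => |ψ z| + ‖z‖ ^ 2 * ‖ψ z‖) :=
    ψ.integrable.abs.add (ψ.integrable_pow_mul volume 2)
  have hm : Measurable (fun z => |ψ z| * ‖z‖ ^ p) := by
    have := ψ.continuous.measurable
    fun_prop
  refine h1.mono' hm.aestronglyMeasurable (Filter.Eventually.of_forall fun z => ?_)
  rw [Real.norm_of_nonneg (by positivity), Real.norm_eq_abs]
  have := rpow_le_one_add_sq (norm_nonneg z) hp hp2
  nlinarith [abs_nonneg (ψ z)]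

theorem ker_wt_int (ψ : SchwartzMap (Spc D) ℝ) (m : ℝ) {p : ℝ} (hp : 0 ≤ p) (hp2 : p ≤ 2) {τ : ℝ}
    (hτ : 0 < τ) : Integrable (fun y => |ker ψ m τ y| * ‖y‖ ^ p) := by
  obtain ⟨S, hS⟩ := ker_schwartz ψ m hτ
  rw [← hS]; exact schwartz_wt_int S hp hp2

theorem ker_wt (ψ : SchwartzMap (Spc D) ℝ) (m p : ℝ) {τ : ℝ} (hτ : 0 < τ) :
    ∫ y, |ker ψ m τ y| * ‖y‖ ^ p = τ ^ (-(m - p) / 2) * wt ψ p := by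
  rw [wt, ← scaling_integral _ _ hτ]
  congr 1; funext y
  have h0 : 0 < √τ := Real.sqrt_pos.2 hτ
  have e : ‖y‖ = √τ * ‖(√τ)⁻¹ • y‖ := by
    rw [norm_smul, norm_inv, Real.norm_of_nonneg h0.le]; field_simp
  have e2 : τ ^ (-((D : ℝ) + (m - p)) / 2) = τ ^ (-((D : ℝ) + m) / 2) * (√τ) ^ p := by
    rw [Real.sqrt_eq_rpow, ← Real.rpow_mul hτ.le, ← Real.rpow_add hτ]; congr 1; ring
  rw [e2, ker, abs_mul, abs_of_pos (Real.rpow_pos_of_pos hτ _)]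
  conv_lhs => rw [e, Real.mul_rpow h0.le (norm_nonneg _)]
  ring

/-! ### The functions `∂_j∂_l G_τ * f` -/

/-- `f` is measurable, bounded by `M`, and Hölder continuous of exponent `1/2` with constant `H`. -/
structure HB (f : Spc D → ℝ) (M H : ℝ) : Prop where
  meas : Measurable f
  bdd : ∀ x, |f x| ≤ M
  hold : ∀ x y, |f x - f y| ≤ H * √‖x - y‖
  hM : 0 ≤ M
  hH : 0 ≤ H

/-- `K_τ * f` for the family of kernels `K_τ = τ^{-D/2-1} ψ(·/√τ)`. -/
def hh (ψ : SchwartzMap (Spc D) ℝ) (f : Spc D → ℝ) (τ : ℝ) (x : Spc D) : ℝ := cv (ker ψ 2 τ) f x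

theorem hh_measurable (ψ : SchwartzMap (Spc D) ℝ) {f : Spc D → ℝ} (hf : Measurable f) :
    Measurable (fun p : ℝ × Spc D => hh ψ f p.1 p.2) := by
  have h : StronglyMeasurable (fun q : (ℝ × Spc D) × Spc D =>
      ker ψ 2 q.1.1 (q.1.2 - q.2) * f q.2) := by
    have h1 := (ker_measurable ψ 2).comp
      (show Measurable (fun q : (ℝ × Spc D) × Spc D => (q.1.1, q.1.2 - q.2)) by fun_prop)
    exact (h1.mul (hf.comp measurable_snd)).stronglyMeasurable
  exact h.integral_prod_right.measurable

/-- Since the kernel has mean zero, the Hölder continuity of `f` gains `τ^{1/4}` over the trivial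
bound `τ⁻¹`. -/
theorem hh_bound_hold (χ : SchwartzMap (Spc D) ℝ) (i : Fin D) {f : Spc D → ℝ} {M H : ℝ}
    (hf : HB f M H) {τ : ℝ} (hτ : 0 < τ) (x : Spc D) :
    |hh (sd i χ) f τ x| ≤ H * wt (sd i χ) (1 / 2) * τ ^ (-(3 / 4) : ℝ) := by
  have hk := ker_integrable (sd i χ) 2 hτ
  have hz : ∫ w, ker (sd i χ) 2 τ (x - w) = 0 := by
    rw [integral_sub_left_eq_self (fun w => ker (sd i χ) 2 τ w), ker_sd_integral_zero χ i 2 hτ]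
  have e : hh (sd i χ) f τ x = ∫ w, ker (sd i χ) 2 τ (x - w) * (f w - f x) := by
    simp only [mul_sub]
    rw [integral_sub (cv_integrand_int hk hf.meas hf.bdd x) ((hk.comp_sub_left x).mul_const _),
      integral_mul_const, hz, zero_mul, sub_zero]; rfl
  have hw := ker_wt (sd i χ) 2 (1 / 2) hτ
  have hi := ker_wt_int (sd i χ) 2 (p := 1 / 2) (by norm_num) (by norm_num) hτ
  rw [e, ← Real.norm_eq_abs]
  refine (norm_integral_le_of_norm_le ((hi.comp_sub_left x).const_mul H)
    (Filter.Eventually.of_forall fun w => ?_)).trans ?_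
  · rw [norm_mul, Real.norm_eq_abs, Real.norm_eq_abs, ← Real.sqrt_eq_rpow, norm_sub_rev]
    have := hf.hold w x
    have h0 := abs_nonneg (ker (sd i χ) 2 τ (x - w))
    calc _ ≤ |ker (sd i χ) 2 τ (x - w)| * (H * √‖w - x‖) := by gcongr
      _ = _ := by ring
  · rw [integral_const_mul, integral_sub_left_eq_self
      (fun w => |ker (sd i χ) 2 τ w| * ‖w‖ ^ (1 / 2 : ℝ)), hw]
    apply le_of_eq
    rw [show (-(2 - 1 / 2) / 2 : ℝ) = -(3 / 4) by norm_num]; ring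

theorem cv_diff_bound {k f : Spc D → ℝ} (hk : Integrable k) (hf : Measurable f) {M : ℝ}
    (hM : ∀ x, |f x| ≤ M) (x x' : Spc D) :
    |cv k f x - cv k f x'| ≤ M * ∫ w, |k (x - w) - k (x' - w)| := by
  unfold cv
  rw [← integral_sub (cv_integrand_int hk hf hM x) (cv_integrand_int hk hf hM x'),
    ← integral_const_mul, ← Real.norm_eq_abs]
  refine norm_integral_le_of_norm_le
    (((hk.comp_sub_left x).sub (hk.comp_sub_left x')).abs.const_mul M)
    (Filter.Eventually.of_forall fun w => ?_)
  rw [← sub_mul, norm_mul, mul_comm, Real.norm_eq_abs, Real.norm_eq_abs]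
  gcongr; exact hM w

/-- Decay of differences for large `τ`, from the `L¹` modulus of continuity of the kernel. -/
theorem hh_diff (ψ : SchwartzMap (Spc D) ℝ) {f : Spc D → ℝ} {M H : ℝ}
    (hf : HB f M H) {τ : ℝ} (hτ : 0 < τ) (x x' : Spc D) :
    |hh ψ f τ x - hh ψ f τ x'| ≤ M * hol ψ * τ ^ (-(5 / 4) : ℝ) * √‖x - x'‖ := by
  refine (cv_diff_bound (ker_integrable ψ 2 hτ) hf.meas hf.bdd x x').trans ?_
  calc _ ≤ M * (hol ψ * τ ^ (-2 / 2 - 1 / 4 : ℝ) * √‖x - x'‖) :=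
        mul_le_mul_of_nonneg_left (ker_L1_hol ψ 2 hτ x x') hf.hM
    _ = _ := by rw [show (-2 / 2 - 1 / 4 : ℝ) = -(5 / 4) by norm_num]; ring

/-! ### The pressure potential -/

theorem int_rpow_Ioc (ρ : ℝ) (hρ : 0 < ρ) : IntegrableOn (fun τ : ℝ => τ ^ (-(3 / 4) : ℝ)) (Ioc 0 ρ) ∧
    ∫ τ in Ioc 0 ρ, τ ^ (-(3 / 4) : ℝ) = 4 * ρ ^ (1 / 4 : ℝ) := by
  constructor
  · have := intervalIntegral.intervalIntegrable_rpow' (a := 0) (b := ρ) (r := -(3 / 4)) (by norm_num)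
    rwa [intervalIntegrable_iff_integrableOn_Ioc_of_le hρ.le] at this
  · rw [← intervalIntegral.integral_of_le hρ.le, integral_rpow (Or.inl (by norm_num))]
    rw [Real.zero_rpow (by norm_num), show (-(3 / 4) + 1 : ℝ) = 1 / 4 by norm_num]; ring

theorem int_rpow_Ioi (ρ : ℝ) (hρ : 0 < ρ) : IntegrableOn (fun τ : ℝ => τ ^ (-(5 / 4) : ℝ)) (Ioi ρ) ∧
    ∫ τ in Ioi ρ, τ ^ (-(5 / 4) : ℝ) = 4 * ρ ^ (-(1 / 4) : ℝ) := by
  constructor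
  · exact integrableOn_Ioi_rpow_of_lt (by norm_num) hρ
  · rw [integral_Ioi_rpow_of_lt (by norm_num) hρ, show (-(5 / 4) + 1 : ℝ) = -(1 / 4) by norm_num]
    ring

/-- Integrand of the pressure potential: `K_τ * f`, renormalised at the base point `c`
for `τ > ρ` so that the integral over `τ` converges. -/
def pg (ψ : SchwartzMap (Spc D) ℝ) (f : Spc D → ℝ) (c : Spc D) (ρ τ : ℝ) (x : Spc D) : ℝ :=
  hh ψ f τ x - if ρ < τ then hh ψ f τ c else 0

/-- The pressure potential `∫₀^∞ ∂_j∂_l G_τ * f dτ = (-Δ)⁻¹ ∂_j∂_l f` (for `ψ = ∂_j∂_l G_1`),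
normalised by means of a base point `c` and a scale `ρ`. -/
def pr (ψ : SchwartzMap (Spc D) ℝ) (f : Spc D → ℝ) (c : Spc D) (ρ : ℝ) (x : Spc D) : ℝ :=
  ∫ τ in Ioi 0, pg ψ f c ρ τ x

theorem pg_measurable (ψ : SchwartzMap (Spc D) ℝ) {f : Spc D → ℝ} (hf : Measurable f) (c : Spc D)
    (ρ : ℝ) : Measurable (fun p : ℝ × Spc D => pg ψ f c ρ p.1 p.2) := by
  unfold pg
  refine (hh_measurable ψ hf).sub (Measurable.ite (measurableSet_lt measurable_const measurable_fst)
    ?_ measurable_const)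
  exact (hh_measurable ψ hf).comp (measurable_fst.prodMk measurable_const)

/-- Majorant of the integrand `pg`. -/
def bnd (A ρ τ : ℝ) : ℝ := A * if ρ < τ then τ ^ (-(5 / 4) : ℝ) else τ ^ (-(3 / 4) : ℝ)

theorem bnd_int (A ρ : ℝ) (hρ : 0 < ρ) : IntegrableOn (bnd A ρ) (Ioi 0) := by
  rw [← Ioc_union_Ioi_eq_Ioi hρ.le]
  refine IntegrableOn.union ?_ ?_
  · refine IntegrableOn.congr_fun ((int_rpow_Ioc ρ hρ).1.const_mul A) (fun τ hτ => ?_) measurableSet_Ioc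
    simp [bnd, not_lt.2 hτ.2]
  · refine IntegrableOn.congr_fun ((int_rpow_Ioi ρ hρ).1.const_mul A) (fun τ hτ => ?_) measurableSet_Ioi
    simp [bnd, mem_Ioi.1 hτ]

theorem pg_bound (χ : SchwartzMap (Spc D) ℝ) (i : Fin D) {f : Spc D → ℝ} {M H : ℝ}
    (hf : HB f M H) (c : Spc D) (ρ : ℝ) {τ : ℝ} (hτ : 0 < τ) (x : Spc D) :
    |pg (sd i χ) f c ρ τ x|
      ≤ bnd (H * wt (sd i χ) (1 / 2) + M * hol (sd i χ)) ρ τ * (1 + √‖x - c‖) := by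
  have hw := wt_nonneg (sd i χ) (1 / 2)
  have hh0 := hol_nonneg (sd i χ)
  have hH := hf.hH
  have hM := hf.hM
  unfold pg bnd
  split_ifs with h
  · refine (hh_diff _ hf hτ x c).trans ?_
    have h1 : 0 ≤ τ ^ (-(5 / 4) : ℝ) := by positivity
    have h2 := Real.sqrt_nonneg ‖x - c‖
    calc M * hol (sd i χ) * τ ^ (-(5 / 4) : ℝ) * √‖x - c‖
        ≤ (H * wt (sd i χ) (1 / 2) + M * hol (sd i χ)) * τ ^ (-(5 / 4) : ℝ) * (1 + √‖x - c‖) := by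
          gcongr
          · exact le_add_of_nonneg_left (by positivity)
          · linarith
      _ = _ := by ring
  · rw [sub_zero]
    refine (hh_bound_hold χ i hf hτ x).trans ?_
    have h1 : 0 ≤ τ ^ (-(3 / 4) : ℝ) := by positivity
    have h2 := Real.sqrt_nonneg ‖x - c‖
    calc _ ≤ (H * wt (sd i χ) (1 / 2) + M * hol (sd i χ)) * τ ^ (-(3 / 4) : ℝ) * (1 + √‖x - c‖) := by
          rw [← mul_one (H * wt (sd i χ) (1 / 2) * τ ^ (-(3 / 4) : ℝ))]
          gcongr
          · exact le_add_of_nonneg_right (by positivity)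
          · linarith
      _ = _ := by ring

theorem pg_int (χ : SchwartzMap (Spc D) ℝ) (i : Fin D) {f : Spc D → ℝ} {M H : ℝ}
    (hf : HB f M H) (c : Spc D) {ρ : ℝ} (hρ : 0 < ρ) (x : Spc D) :
    IntegrableOn (fun τ => pg (sd i χ) f c ρ τ x) (Ioi 0) := by
  refine ((bnd_int _ ρ hρ).mul_const (1 + √‖x - c‖)).mono' ?_
    ((ae_restrict_mem measurableSet_Ioi).mono fun τ hτ => pg_bound χ i hf c ρ hτ x)
  exact ((pg_measurable (sd i χ) hf.meas c ρ).comp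
    (measurable_id.prodMk measurable_const)).aestronglyMeasurable

/-- Changing the base point and the scale changes the potential by a constant. -/
theorem pr_const (χ : SchwartzMap (Spc D) ℝ) (i : Fin D) {f : Spc D → ℝ} {M H : ℝ}
    (hf : HB f M H) (c c' : Spc D) {ρ ρ' : ℝ} (hρ : 0 < ρ) (hρ' : 0 < ρ') :
    ∃ a : ℝ, ∀ x, pr (sd i χ) f c ρ x - pr (sd i χ) f c' ρ' x = a := by
  refine ⟨∫ τ in Ioi 0, ((if ρ' < τ then hh (sd i χ) f τ c' else 0)
    - if ρ < τ then hh (sd i χ) f τ c else 0), fun x => ?_⟩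
  unfold pr
  rw [← integral_sub (pg_int χ i hf c hρ x) (pg_int χ i hf c' hρ' x)]
  congr 1; funext τ
  unfold pg; ring

/-- The potential grows at most like the square root of the distance to the base point. -/
theorem pr_bound (χ : SchwartzMap (Spc D) ℝ) (i : Fin D) {f : Spc D → ℝ} {M H : ℝ}
    (hf : HB f M H) (c : Spc D) (ρ : ℝ) (hρ : 0 < ρ) (x : Spc D) :
    |pr (sd i χ) f c ρ x|
      ≤ (∫ τ in Ioi 0, bnd (H * wt (sd i χ) (1 / 2) + M * hol (sd i χ)) ρ τ) * (1 + √‖x - c‖) := by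
  unfold pr
  rw [← integral_mul_const, ← Real.norm_eq_abs]
  exact norm_integral_le_of_norm_le ((bnd_int _ ρ hρ).mul_const _)
    ((ae_restrict_mem measurableSet_Ioi).mono fun τ hτ => pg_bound χ i hf c ρ hτ x)

theorem pr_measurable (ψ : SchwartzMap (Spc D) ℝ) {f : Spc D → ℝ} (hf : Measurable f) (c : Spc D) (ρ : ℝ) :
    Measurable (pr ψ f c ρ) := by
  have h := (pg_measurable ψ hf c ρ).comp (measurable_swap (α := Spc D) (β := ℝ))
  exact (h.stronglyMeasurable.integral_prod_right (f := fun x τ => pg ψ f c ρ τ x)).measurable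

theorem pr_locInt (χ : SchwartzMap (Spc D) ℝ) (i : Fin D) {f : Spc D → ℝ} {M H : ℝ}
    (hf : HB f M H) (c : Spc D) (ρ : ℝ) (hρ : 0 < ρ) :
    LocallyIntegrable (pr (sd i χ) f c ρ) := by
  intro x
  refine ⟨Metric.ball x 1, Metric.ball_mem_nhds x one_pos, ?_⟩
  refine Measure.integrableOn_of_bounded (M := (∫ τ in Ioi 0,
    bnd (H * wt (sd i χ) (1 / 2) + M * hol (sd i χ)) ρ τ) * (1 + √(1 + ‖x - c‖)))
    measure_ball_lt_top.ne (pr_measurable _ hf.meas c ρ).aestronglyMeasurable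
    ((ae_restrict_mem Metric.isOpen_ball.measurableSet).mono fun y hy => ?_)
  refine (pr_bound χ i hf c ρ hρ y).trans ?_
  have h0 : 0 ≤ ∫ τ in Ioi 0, bnd (H * wt (sd i χ) (1 / 2) + M * hol (sd i χ)) ρ τ := by
    refine setIntegral_nonneg measurableSet_Ioi fun τ hτ => ?_
    have hτ0 : 0 < τ := hτ
    have hw := wt_nonneg (sd i χ) (1 / 2)
    have hh0 := hol_nonneg (sd i χ)
    have hH := hf.hH
    have hM := hf.hM
    unfold bnd
    split_ifs <;> positivity
  gcongr
  calc ‖y - c‖ ≤ ‖y - x‖ + ‖x - c‖ := norm_sub_le_norm_sub_add_norm_sub _ _ _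
    _ ≤ _ := by
      have := mem_ball_iff_norm.1 hy
      gcongr

/-- Pairing of the potential with a mean-zero weight. -/
theorem pr_pair (χ : SchwartzMap (Spc D) ℝ) (i : Fin D) {f : Spc D → ℝ} {M H : ℝ}
    (hf : HB f M H) {φ : Spc D → ℝ} (hφ : Measurable φ) (hφi : Integrable φ)
    (hφw : Integrable (fun x => (1 + √‖x‖) * |φ x|)) (hφ0 : ∫ x, φ x = 0) :
    Integrable (fun x => pr (sd i χ) f 0 1 x * φ x) ∧
    IntegrableOn (fun τ => ∫ x, hh (sd i χ) f τ x * φ x) (Ioi 0) ∧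
    ∫ x, pr (sd i χ) f 0 1 x * φ x = ∫ τ in Ioi 0, ∫ x, hh (sd i χ) f τ x * φ x := by
  have hI : Integrable (fun p : ℝ × Spc D => pg (sd i χ) f 0 1 p.1 p.2 * φ p.2)
      ((volume.restrict (Ioi 0)).prod volume) := by
    refine ((bnd_int (H * wt (sd i χ) (1 / 2) + M * hol (sd i χ)) 1 one_pos).mul_prod hφw).mono'
      ((pg_measurable _ hf.meas 0 1).mul (hφ.comp measurable_snd)).aestronglyMeasurable ?_
    have hae : ∀ᵐ p : ℝ × Spc D ∂((volume.restrict (Ioi 0)).prod volume), p.1 ∈ Ioi (0 : ℝ) :=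
      Measure.quasiMeasurePreserving_fst.ae (ae_restrict_mem measurableSet_Ioi)
    filter_upwards [hae] with p hp
    rw [norm_mul, Real.norm_eq_abs, Real.norm_eq_abs, ← mul_assoc]
    have := pg_bound χ i hf 0 1 hp p.2
    rw [sub_zero] at this
    gcongr
  have e : ∀ τ ∈ Ioi (0 : ℝ), ∫ x, pg (sd i χ) f 0 1 τ x * φ x = ∫ x, hh (sd i χ) f τ x * φ x := by
    intro τ hτ
    unfold pg
    simp only [sub_mul]
    rw [integral_sub, integral_const_mul, hφ0, mul_zero, sub_zero]
    · exact hφi.bdd_mul (c := M * ∫ y, |ker (sd i χ) 2 τ y|)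
        (cv_measurable (ker_continuous _ _ _).measurable hf.meas).aestronglyMeasurable
        (Filter.Eventually.of_forall fun x => cv_bound (ker_integrable _ _ hτ) hf.bdd x)
    · exact hφi.const_mul _
  refine ⟨?_, hI.integral_prod_left.congr
    ((ae_restrict_mem measurableSet_Ioi).mono e), ?_⟩
  · refine hI.integral_prod_right.congr (Filter.Eventually.of_forall fun x => ?_)
    simp only [pr]
    rw [← integral_mul_const]
  · rw [← setIntegral_congr_fun measurableSet_Ioi e,
      integral_integral_swap (f := fun τ x => pg (sd i χ) f 0 1 τ x * φ x) hI]
    congr 1; funext x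
    rw [pr, ← integral_mul_const]

/-! ### Convolution of the pressure with heat kernels -/

theorem int_add_rpow {σ a : ℝ} (hσ : 0 < σ) (ha : a < -1) :
    IntegrableOn (fun τ : ℝ => (σ + τ) ^ a) (Ioi 0) ∧
    ∫ τ in Ioi 0, (σ + τ) ^ a = σ ^ (a + 1) / (-(a + 1)) := by
  have hi : IntegrableOn (fun τ : ℝ => (σ + τ) ^ a) (Ioi 0) := by
    simpa only [add_comm] using integrableOn_add_rpow_Ioi_of_lt (c := 0) (m := σ) ha (by linarith)
  refine ⟨hi, ?_⟩
  have ha1 : a + 1 ≠ 0 := by linarith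
  have hlim : Filter.Tendsto (fun τ : ℝ => (σ + τ) ^ (a + 1) / (a + 1)) Filter.atTop
      (nhds 0) := by
    have h1 := (tendsto_rpow_neg_atTop (y := -(a + 1)) (by linarith)).comp
      (Filter.tendsto_atTop_add_const_left Filter.atTop σ Filter.tendsto_id)
    have h2 := h1.div_const (a + 1)
    simpa [Function.comp_def] using h2
  have hd : ∀ τ ∈ Ici (0 : ℝ), HasDerivAt (fun τ : ℝ => (σ + τ) ^ (a + 1) / (a + 1))
      ((σ + τ) ^ a) τ := by
    intro τ hτ
    have hp : σ + τ ≠ 0 := (add_pos_of_pos_of_nonneg hσ hτ).ne'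
    have h1 := (((hasDerivAt_id τ).const_add σ).rpow_const (p := a + 1) (Or.inl hp)).div_const (a + 1)
    refine h1.congr_deriv ?_
    simp only [id, add_sub_cancel_right]
    field_simp
  rw [integral_Ioi_of_hasDerivAt_of_tendsto' hd hi hlim]
  rw [add_zero]; field_simp; ring

theorem prod_L1 {F : ℝ × Spc D → ℝ} (hF : Measurable F) {S : Set ℝ} (hS : MeasurableSet S)
    {b : ℝ → ℝ} (hi : ∀ τ ∈ S, Integrable (fun y => F (τ, y)))
    (hb : ∀ τ ∈ S, ∫ y, |F (τ, y)| ≤ b τ) (hbi : IntegrableOn b S) :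
    Integrable (fun y => ∫ τ in S, F (τ, y)) ∧ ∫ y, |∫ τ in S, F (τ, y)| ≤ ∫ τ in S, b τ := by
  have h := prod_int hF hS hi hb hbi
  refine ⟨h.integral_prod_right, ?_⟩
  calc ∫ y, |∫ τ in S, F (τ, y)| ≤ ∫ y, ∫ τ in S, |F (τ, y)| :=
        integral_mono h.integral_prod_right.abs h.abs.integral_prod_right
          fun y => abs_integral_le_integral_abs
    _ = ∫ τ in S, ∫ y, |F (τ, y)| :=
        (integral_integral_swap (f := fun τ y => |F (τ, y)|) h.abs).symm
    _ ≤ _ := setIntegral_mono_on h.abs.integral_prod_left hbi hS hb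

/-- The kernel `∫_σ^∞ τ^{-D/2-3/2} ψ(·/√τ) dτ`; for `ψ = ∂_k∂_j∂_l G_1` it is the kernel of
`e^{σΔ} ∂_k ∂_j∂_l (-Δ)⁻¹`. -/
def Qk (ψ : SchwartzMap (Spc D) ℝ) (σ : ℝ) (y : Spc D) : ℝ := ∫ τ in Ioi 0, ker ψ 3 (σ + τ) y

theorem ker3_meas (ψ : SchwartzMap (Spc D) ℝ) :
    Measurable (fun q : (ℝ × Spc D) × ℝ => ker ψ 3 (q.1.1 + q.2) q.1.2) :=
  (ker_measurable ψ 3).comp (show Measurable (fun q : (ℝ × Spc D) × ℝ => (q.1.1 + q.2, q.1.2)) by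
    fun_prop)

theorem Qk_measurable (ψ : SchwartzMap (Spc D) ℝ) :
    Measurable (fun p : ℝ × Spc D => Qk ψ p.1 p.2) :=
  ((ker3_meas ψ).stronglyMeasurable.integral_prod_right
    (f := fun (p : ℝ × Spc D) (τ : ℝ) => ker ψ 3 (p.1 + τ) p.2)).measurable

theorem ker3_meas_fix (ψ : SchwartzMap (Spc D) ℝ) (σ : ℝ) (x : Spc D) :
    Measurable (fun p : ℝ × Spc D => ker ψ 3 (σ + p.1) (x - p.2)) :=
  (ker_measurable ψ 3).comp (show Measurable (fun q : ℝ × Spc D => (σ + q.1, x - q.2)) by fun_prop)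

theorem ker3_prod (ψ : SchwartzMap (Spc D) ℝ) {σ : ℝ} (hσ : 0 < σ) (x : Spc D) :
    Integrable (fun p : ℝ × Spc D => ker ψ 3 (σ + p.1) (x - p.2))
      ((volume.restrict (Ioi 0)).prod volume) := by
  refine prod_int (ker3_meas_fix ψ σ x) measurableSet_Ioi (b := fun τ => (σ + τ) ^ (-3 / 2 : ℝ) * ∫ y, |ψ y|)
    (fun τ hτ => (ker_integrable ψ 3 (add_pos hσ hτ)).comp_sub_left x) (fun τ hτ => ?_)
    ((int_add_rpow hσ (by norm_num)).1.mul_const _)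
  rw [integral_sub_left_eq_self (fun y => |ker ψ 3 (σ + τ) y|), ker_L1 ψ 3 (add_pos hσ hτ)]

theorem Qk_L1 (ψ : SchwartzMap (Spc D) ℝ) {σ : ℝ} (hσ : 0 < σ) :
    Integrable (Qk ψ σ) ∧ ∫ y, |Qk ψ σ y| ≤ 2 * (∫ y, |ψ y|) * σ ^ (-(1 / 2) : ℝ) := by
  have h := prod_L1 (F := fun p : ℝ × Spc D => ker ψ 3 (σ + p.1) p.2)
    ((ker_measurable ψ 3).comp (show Measurable (fun q : ℝ × Spc D => (σ + q.1, q.2)) by fun_prop))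
    measurableSet_Ioi (b := fun τ => (σ + τ) ^ (-3 / 2 : ℝ) * ∫ y, |ψ y|)
    (fun τ hτ => ker_integrable ψ 3 (add_pos hσ hτ))
    (fun τ hτ => (ker_L1 ψ 3 (add_pos hσ hτ)).le)
    ((int_add_rpow hσ (by norm_num)).1.mul_const _)
  refine ⟨h.1, h.2.trans (le_of_eq ?_)⟩
  rw [integral_mul_const, (int_add_rpow hσ (by norm_num)).2]
  rw [show (-3 / 2 + 1 : ℝ) = -(1 / 2) by norm_num]; ring

theorem ker3_time_int (ψ : SchwartzMap (Spc D) ℝ) {σ : ℝ} (hσ : 0 < σ) (y : Spc D) :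
    IntegrableOn (fun τ => ker ψ 3 (σ + τ) y) (Ioi 0) := by
  obtain ⟨C, hC, hb⟩ := schwartz_bdd ψ
  have hD : -((D : ℝ) + 3) / 2 < -1 := by
    have : (0 : ℝ) ≤ D := Nat.cast_nonneg D
    linarith
  refine ((int_add_rpow hσ hD).1.mul_const C).mono' ?_
    ((ae_restrict_mem measurableSet_Ioi).mono fun τ hτ => ?_)
  · exact ((ker_measurable ψ 3).comp (show Measurable (fun τ : ℝ => (σ + τ, y)) by
      fun_prop)).aestronglyMeasurable
  · have : 0 < σ + τ := add_pos hσ hτ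
    rw [ker, norm_mul, Real.norm_of_nonneg (by positivity), Real.norm_eq_abs]
    gcongr; exact hb _

theorem Qk_hol (ψ : SchwartzMap (Spc D) ℝ) {σ : ℝ} (hσ : 0 < σ) (x x' : Spc D) :
    ∫ w, |Qk ψ σ (x - w) - Qk ψ σ (x' - w)| ≤ 2 * hol ψ * σ ^ (-(3 / 4) : ℝ) * √‖x - x'‖ := by
  have hk : ∀ τ ∈ Ioi (0 : ℝ), Integrable (ker ψ 3 (σ + τ)) := fun τ hτ =>
    ker_integrable ψ 3 (add_pos hσ hτ)
  have h := prod_L1 (F := fun p : ℝ × Spc D =>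
      ker ψ 3 (σ + p.1) (x - p.2) - ker ψ 3 (σ + p.1) (x' - p.2))
    ((ker3_meas_fix ψ σ x).sub (ker3_meas_fix ψ σ x'))
    measurableSet_Ioi (b := fun τ => (σ + τ) ^ (-3 / 2 - 1 / 4 : ℝ) * (hol ψ * √‖x - x'‖))
    (fun τ hτ => ((hk τ hτ).comp_sub_left x).sub ((hk τ hτ).comp_sub_left x'))
    (fun τ hτ => (ker_L1_hol ψ 3 (add_pos hσ hτ) x x').trans (le_of_eq (by ring)))
    ((int_add_rpow hσ (by norm_num)).1.mul_const _)
  have e : ∀ w, Qk ψ σ (x - w) - Qk ψ σ (x' - w)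
      = ∫ τ in Ioi 0, (ker ψ 3 (σ + τ) (x - w) - ker ψ 3 (σ + τ) (x' - w)) := fun w =>
    (integral_sub (ker3_time_int ψ hσ _) (ker3_time_int ψ hσ _)).symm
  simp only [e]
  refine h.2.trans ?_
  rw [integral_mul_const, (int_add_rpow hσ (by norm_num)).2]
  rw [show (-3 / 2 - 1 / 4 + 1 : ℝ) = -(3 / 4) by norm_num]
  have h0 := mul_nonneg (mul_nonneg (hol_nonneg ψ) (Real.sqrt_nonneg ‖x - x'‖))
    (Real.rpow_nonneg hσ.le (-(3 / 4)))
  norm_num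
  nlinarith

theorem schwartz_shift_wt (S : SchwartzMap (Spc D) ℝ) (x : Spc D) :
    Integrable (fun w => (1 + √‖w‖) * |S (x - w)|) := by
  have h1 := ((S.integrable (μ := volume)).abs.comp_sub_left x).const_mul (1 + √‖x‖)
  have h2 := (schwartz_wt_int S (p := 1 / 2) (by norm_num) (by norm_num)).comp_sub_left x
  have hm : Measurable (fun w => (1 + √‖w‖) * |S (x - w)|) := by
    have := S.continuous
    exact Continuous.measurable (by fun_prop)
  refine (h1.add h2).mono' hm.aestronglyMeasurable (Filter.Eventually.of_forall fun w => ?_)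
  rw [Real.norm_of_nonneg (by positivity), Pi.add_apply]
  simp only [← Real.sqrt_eq_rpow]
  have : √‖w‖ ≤ √‖x‖ + √‖x - w‖ := by
    refine (Real.sqrt_le_sqrt (y := ‖x‖ + ‖x - w‖) ?_).trans (Real.sqrt_le_iff.2 ⟨by positivity, by
      nlinarith [Real.sq_sqrt (norm_nonneg x), Real.sq_sqrt (norm_nonneg (x - w)),
        mul_nonneg (Real.sqrt_nonneg ‖x‖) (Real.sqrt_nonneg ‖x - w‖)]⟩)
    calc ‖w‖ = ‖x - (x - w)‖ := by rw [sub_sub_cancel]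
      _ ≤ _ := norm_sub_le _ _
  nlinarith [abs_nonneg (S (x - w))]

/-- The convolution of `∂_k G_σ` with the pressure potential. -/
theorem pr_Q (k j l : Fin D) {f : Spc D → ℝ} {M H : ℝ} (hf : HB f M H) {σ : ℝ} (hσ : 0 < σ)
    (x : Spc D) :
    Integrable (fun w => ker (sd k (gau D)) 1 σ (x - w) * pr (sd j (sd l (gau D))) f 0 1 w) ∧
    ∫ w, ker (sd k (gau D)) 1 σ (x - w) * pr (sd j (sd l (gau D))) f 0 1 w
      = cv (Qk (sd k (sd j (sd l (gau D)))) σ) f x := by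
  obtain ⟨S, hS⟩ := ker_schwartz (sd k (gau D)) 1 hσ
  have hφi : Integrable (fun w => S (x - w)) := S.integrable.comp_sub_left x
  have hφ0 : ∫ w, S (x - w) = 0 := by
    rw [integral_sub_left_eq_self (fun w => S w), hS, ker_sd_integral_zero _ k 1 hσ]
  have hφm : Measurable (fun w => S (x - w)) := by
    have := S.continuous
    exact Continuous.measurable (by fun_prop)
  obtain ⟨p1, -, p3⟩ := pr_pair (sd l (gau D)) j hf hφm hφi (schwartz_shift_wt S x) hφ0
  rw [← hS]
  simp only [mul_comm (S (x - _))]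
  refine ⟨p1, p3.trans ?_⟩
  have e : ∀ τ ∈ Ioi (0 : ℝ), ∫ w, hh (sd j (sd l (gau D))) f τ w * S (x - w)
      = ∫ y, ker (sd k (sd j (sd l (gau D)))) 3 (σ + τ) (x - y) * f y := by
    intro τ hτ
    refine (fub (ker_integrable _ 2 hτ) hφi hf.meas hf.bdd).trans ?_
    congr 1; funext y
    rw [mul_comm]; congr 1
    rw [← cv_gau_one_two hσ hτ k j l (x - y), cv, ← hS,
      ← integral_add_right_eq_self (fun w => ker (sd j (sd l (gau D))) 2 τ (w - y) * S (x - w)) y]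
    congr 1; funext w
    rw [add_sub_cancel_right, mul_comm]; congr 2; abel
  rw [setIntegral_congr_fun measurableSet_Ioi e]
  have hI : Integrable (fun p : ℝ × Spc D =>
      ker (sd k (sd j (sd l (gau D)))) 3 (σ + p.1) (x - p.2) * f p.2)
      ((volume.restrict (Ioi 0)).prod volume) :=
    (ker3_prod _ hσ x).mul_bdd (hf.meas.comp measurable_snd).aestronglyMeasurable
      (Filter.Eventually.of_forall fun p => hf.bdd _)
  rw [integral_integral_swap (f := fun τ y =>
    ker (sd k (sd j (sd l (gau D)))) 3 (σ + τ) (x - y) * f y) hI, cv]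
  congr 1; funext y
  rw [integral_mul_const, Qk]

/-! ### The Poisson equation -/

theorem sd_comm (i j : Fin D) (ψ : SchwartzMap (Spc D) ℝ) : sd i (sd j ψ) = sd j (sd i ψ) := by
  ext x
  have hd : DifferentiableAt ℝ (fderiv ℝ ψ) x :=
    ((ψ.smooth 2).fderiv_right (m := 1) (by norm_num)).differentiable (by simp) x
  have key : ∀ i j : Fin D, sd i (sd j ψ) x
      = fderiv ℝ (fderiv ℝ ψ) x (EuclideanSpace.single i 1) (EuclideanSpace.single j 1) := by
    intro i j
    rw [sd_apply, coe_sd, pd]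
    have : pd j ψ = fun y => fderiv ℝ ψ y (EuclideanSpace.single j 1) := rfl
    rw [this]
    have h2 := hd.hasFDerivAt.clm_apply
      (hasFDerivAt_const (EuclideanSpace.single j (1 : ℝ) : Spc D) x)
    rw [h2.fderiv]
    simp
  rw [key, key]
  exact ((ψ.smooth 2).contDiffAt.isSymmSndFDerivAt (by simp)) _ _

theorem lap_eq (φ : SchwartzMap (Spc D) ℝ) : lap φ = ⇑(∑ i, sd i (sd i φ)) := by
  funext x
  rw [_root_.sum_apply]
  refine Finset.sum_congr rfl fun i _ => ?_
  rw [sd_apply, coe_sd]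

theorem corr_hol {f : Spc D → ℝ} {M H : ℝ} (hf : HB f M H) (ψ : SchwartzMap (Spc D) ℝ)
    (y : Spc D) : |corr f ψ y - corr f ψ 0| ≤ M * hol ψ * √‖y‖ := by
  have hi : ∀ y : Spc D, Integrable (fun w => f w * ψ (w - y)) := fun y =>
    (ψ.integrable.comp_sub_right y).bdd_mul hf.meas.aestronglyMeasurable
      (Filter.Eventually.of_forall hf.bdd)
  have h1 := schwartz_L1_hol ψ (-y)
  rw [norm_neg] at h1
  have hsub : Integrable (fun w => ψ (w + -y) - ψ w) :=
    (ψ.integrable.comp_add_right (-y)).sub ψ.integrable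
  unfold corr
  rw [← integral_sub (hi y) (hi 0), ← Real.norm_eq_abs, mul_assoc]
  refine (norm_integral_le_of_norm_le (hsub.abs.const_mul M)
    (Filter.Eventually.of_forall fun w => ?_)).trans ?_
  · rw [sub_zero, ← mul_sub, norm_mul, ← sub_eq_add_neg, Real.norm_eq_abs, Real.norm_eq_abs]
    gcongr; exact hf.bdd w
  · rw [integral_const_mul]
    exact mul_le_mul_of_nonneg_left h1 hf.hM

/-- The potential solves `Δ P = - ∂_j ∂_l f` in the sense of distributions. -/
theorem pr_poisson (j l : Fin D) {f : Spc D → ℝ} {M H : ℝ} (hf : HB f M H)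
    (φ : SchwartzMap (Spc D) ℝ) :
    Integrable (fun x => pr (sd j (sd l (gau D))) f 0 1 x * lap φ x) ∧
    ∫ x, pr (sd j (sd l (gau D))) f 0 1 x * lap φ x
      = -∫ x, f x * pd j (fun y => pd l φ y) x := by
  set Λ : SchwartzMap (Spc D) ℝ := ∑ i, sd i (sd i φ) with hΛ
  have hΛ0 : ∫ x, Λ x = 0 := by
    have : ∀ x, Λ x = ∑ i, sd i (sd i φ) x := fun x => by rw [hΛ, _root_.sum_apply]
    simp only [this]
    rw [integral_finsetSum _ fun i _ => (sd i (sd i φ)).integrable]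
    exact Finset.sum_eq_zero fun i _ => sd_integral_zero _ i
  set ψ := sd j (sd l φ) with hψ
  have hψ' : (pd j fun y => pd l φ y) = ⇑ψ := by rw [hψ, coe_sd, coe_sd]
  have hw : Integrable (fun x => (1 + √‖x‖) * |Λ x|) := by
    have h1 := Λ.integrable.abs.add (schwartz_wt_int Λ (p := 1 / 2) (by norm_num) (by norm_num))
    refine h1.congr (Filter.Eventually.of_forall fun x => ?_)
    simp only [Pi.add_apply, ← Real.sqrt_eq_rpow]; ring
  obtain ⟨p1, p2, p3⟩ := pr_pair (sd l (gau D)) j hf Λ.continuous.measurable Λ.integrable hw hΛ0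
  rw [lap_eq, hψ']
  refine ⟨p1, p3.trans ?_⟩
  have hc : Measurable (corr f ψ) := corr_measurable hf.meas ψ.continuous.measurable
  have hcb : ∀ y, |corr f ψ y| ≤ M * ∫ w, |ψ w| := corr_bound ψ.integrable hf.bdd
  -- all derivatives are moved so that `∂_j∂_l G_τ * f` paired with `Δφ` becomes `ΔG_τ` paired with
  -- the correlation of `f` and `∂_j∂_l φ`, which is a time derivative
  have hΘ : ∀ τ, 0 < τ → ∫ x, hh (sd j (sd l (gau D))) f τ x * Λ x = ∫ y, Lk τ y * corr f ψ y := by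
    intro τ hτ
    obtain ⟨S, hS⟩ := ker_schwartz (gau D) 0 hτ
    have hS2 : ∀ a b : Fin D, ⇑(sd a (sd b S)) = ker (sd a (sd b (gau D))) 2 τ := by
      intro a b
      rw [coe_sd, coe_sd, hS]
      have : pd b (ker (gau D) 0 τ) = ker (sd b (gau D)) (0 + 1) τ := funext (pd_ker _ _ hτ b)
      rw [this]; funext y; rw [pd_ker _ _ hτ]; norm_num
    rw [Lk_pair hτ hc hcb]
    have h1 := pair_cv (k := ker (sd j (sd l (gau D))) 2 τ) (ε := 1) (f := f) (g := Λ)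
      (fun y => by rw [ker_two_neg]; ring) (ker_integrable _ _ hτ) Λ.integrable hf.meas hf.bdd
    have h2 : ∀ x, cv (ker (sd j (sd l (gau D))) 2 τ) Λ x
        = ∑ i, cv (ker (sd i (sd i (gau D))) 2 τ) ψ x := by
      intro x
      have h3 : cv (ker (sd j (sd l (gau D))) 2 τ) Λ x
          = ∑ i, cv (ker (sd j (sd l (gau D))) 2 τ) (sd i (sd i φ)) x := by
        unfold cv
        rw [← integral_finsetSum]
        · congr 1; funext w; rw [hΛ, _root_.sum_apply, Finset.mul_sum]
        · intro i _
          obtain ⟨C, -, hC⟩ := schwartz_bdd (sd i (sd i φ))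
          exact cv_integrand_int (ker_integrable _ _ hτ) (sd i (sd i φ)).continuous.measurable hC x
      rw [h3]
      refine Finset.sum_congr rfl fun i _ => ?_
      rw [← hS2, ← hS2, hψ, cv_sd_left_right, cv_sd_left_right, cv_sd_left_right, cv_sd_left_right]
      rw [sd_comm j i, sd_comm j i, sd_comm l i, sd_comm l i, sd_comm l j]
    unfold hh
    rw [h1, one_mul]
    simp only [h2, Finset.mul_sum]
    rw [integral_finsetSum]
    · exact Finset.sum_congr rfl fun i _ =>
        pair_corr (ker_integrable _ _ hτ) ψ.integrable hf.meas hf.bdd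
    · intro i _
      exact ((BI.ker _ 2 hτ).cv (BI.schwartz ψ)).int.bdd_mul hf.meas.aestronglyMeasurable
        (Filter.Eventually.of_forall hf.bdd)
  -- the two end-point contributions of the integrated heat equation
  have hE0 : Filter.Tendsto (fun ε => ∫ y, ker (gau D) 0 ε y * corr f ψ y)
      (nhdsWithin 0 (Ioi 0)) (nhds (corr f ψ 0)) := by
    have hb : ∀ ε ∈ Ioi (0 : ℝ), ‖(∫ y, ker (gau D) 0 ε y * corr f ψ y) - corr f ψ 0‖
        ≤ M * hol ψ * wt (gau D) (1 / 2) * ε ^ (1 / 4 : ℝ) := by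
      intro ε hε
      have hk := ker_integrable (gau D) 0 hε
      have e : (∫ y, ker (gau D) 0 ε y * corr f ψ y) - corr f ψ 0
          = ∫ y, ker (gau D) 0 ε y * (corr f ψ y - corr f ψ 0) := by
        simp only [mul_sub]
        rw [integral_sub (hk.mul_bdd hc.aestronglyMeasurable (Filter.Eventually.of_forall hcb))
          (hk.mul_const _), integral_mul_const, ker_gau_integral hε, one_mul]
      rw [e]
      have hi := ker_wt_int (gau D) 0 (p := 1 / 2) (by norm_num) (by norm_num) hε
      refine (norm_integral_le_of_norm_le (hi.const_mul (M * hol ψ))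
        (Filter.Eventually.of_forall fun y => ?_)).trans (le_of_eq ?_)
      · rw [norm_mul, Real.norm_eq_abs, Real.norm_eq_abs, ← Real.sqrt_eq_rpow]
        calc _ ≤ |ker (gau D) 0 ε y| * (M * hol ψ * √‖y‖) := by
              gcongr; exact corr_hol hf ψ y
          _ = _ := by ring
      · rw [integral_const_mul, ker_wt _ _ _ hε]
        rw [show (-(0 - 1 / 2) / 2 : ℝ) = 1 / 4 by norm_num]; ring
    rw [tendsto_iff_norm_sub_tendsto_zero]
    refine squeeze_zero' (Filter.Eventually.of_forall fun _ => norm_nonneg _)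
      (Filter.eventually_of_mem self_mem_nhdsWithin hb) ?_
    have h1 : Filter.Tendsto (fun ε : ℝ => ε ^ (1 / 4 : ℝ)) (nhds 0) (nhds (0 ^ (1 / 4 : ℝ))) :=
      (Real.continuousAt_rpow_const _ _ (Or.inr (by norm_num))).tendsto
    rw [Real.zero_rpow (by norm_num)] at h1
    simpa using (h1.mono_left nhdsWithin_le_nhds).const_mul (M * hol ψ * wt (gau D) (1 / 2))
  -- for large `R` the derivatives on `φ` are moved back to the kernel, which gains `R⁻¹`
  have hE1 : Filter.Tendsto (fun R => ∫ y, ker (gau D) 0 R y * corr f ψ y)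
      Filter.atTop (nhds 0) := by
    have hb : ∀ R ∈ Ioi (0 : ℝ), ‖∫ y, ker (gau D) 0 R y * corr f ψ y‖
        ≤ M * (∫ z, |sd j (sd l (gau D)) z|) * (∫ z, |φ z|) * R⁻¹ := by
      intro R hR
      obtain ⟨S, hS⟩ := ker_schwartz (gau D) 0 hR
      have hS2 : ⇑(sd l (sd j S)) = ker (sd l (sd j (gau D))) 2 R := by
        rw [coe_sd, coe_sd, hS]
        have : pd j (ker (gau D) 0 R) = ker (sd j (gau D)) (0 + 1) R := funext (pd_ker _ _ hR j)
        rw [this]; funext y; rw [pd_ker _ _ hR]; norm_num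
      have e : ∫ y, ker (gau D) 0 R y * corr f ψ y
          = ∫ x, cv (ker (sd j (sd l (gau D))) 2 R) f x * φ x := by
        rw [← pair_corr (ker_integrable _ _ hR) ψ.integrable hf.meas hf.bdd]
        rw [pair_cv (ε := 1) (fun y => by rw [ker_two_neg]; ring) (ker_integrable _ _ hR)
          φ.integrable hf.meas hf.bdd, one_mul]
        congr 1; funext x
        rw [sd_comm j l, ← hS2, ← hS, cv_sd_left_right, cv_sd_left_right, hψ, sd_comm j l,
          sd_comm l j]
      rw [e]
      refine (norm_integral_le_of_norm_le (φ.integrable.abs.const_mul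
        (M * ∫ y, |ker (sd j (sd l (gau D))) 2 R y|))
        (Filter.Eventually.of_forall fun x => ?_)).trans (le_of_eq ?_)
      · rw [norm_mul, Real.norm_eq_abs, Real.norm_eq_abs]
        gcongr
        exact cv_bound (ker_integrable _ _ hR) hf.bdd x
      · rw [integral_const_mul, ker_L1 _ _ hR, show (-2 / 2 : ℝ) = -1 by norm_num,
          Real.rpow_neg_one]; ring
    refine squeeze_zero_norm' ((Filter.eventually_gt_atTop 0).mono hb) ?_
    simpa using tendsto_inv_atTop_zero.const_mul
      (M * (∫ z, |sd j (sd l (gau D)) z|) * (∫ z, |φ z|))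
  -- exhaustion of `(0, ∞)` by the intervals `(1/(n+1), n+1]`
  have hU : ⋃ n : ℕ, Ioc (1 / ((n : ℝ) + 1)) ((n : ℝ) + 1) = Ioi 0 := by
    ext τ
    simp only [mem_iUnion, mem_Ioc, mem_Ioi]
    constructor
    · rintro ⟨n, h1, -⟩; exact lt_trans (by positivity) h1
    · intro hτ
      obtain ⟨a, ha⟩ := exists_nat_one_div_lt hτ
      obtain ⟨b, hb⟩ := exists_nat_ge τ
      refine ⟨max a b, lt_of_le_of_lt ?_ ha, ?_⟩
      · exact one_div_le_one_div_of_le (by positivity)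
          (by gcongr; exact le_max_left a b)
      · have : (b : ℝ) ≤ ((max a b : ℕ) : ℝ) := by exact_mod_cast le_max_right a b
        linarith
  have hmono : Monotone fun n : ℕ => Ioc (1 / ((n : ℝ) + 1)) ((n : ℝ) + 1) := by
    intro a b hab
    have : (a : ℝ) ≤ b := by exact_mod_cast hab
    exact Ioc_subset_Ioc (one_div_le_one_div_of_le (by positivity) (by linarith)) (by linarith)
  have hlim := tendsto_setIntegral_of_monotone (μ := volume)
    (f := fun τ => ∫ x, hh (sd j (sd l (gau D))) f τ x * Λ x)
    (fun n : ℕ => measurableSet_Ioc) hmono (by rw [hU]; exact p2)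
  rw [hU] at hlim
  have hval : ∀ n : ℕ, ∫ τ in Ioc (1 / ((n : ℝ) + 1)) ((n : ℝ) + 1),
      ∫ x, hh (sd j (sd l (gau D))) f τ x * Λ x
      = (∫ y, ker (gau D) 0 ((n : ℝ) + 1) y * corr f ψ y)
        - ∫ y, ker (gau D) 0 (1 / ((n : ℝ) + 1)) y * corr f ψ y := by
    intro n
    have hn : (0 : ℝ) ≤ n := Nat.cast_nonneg n
    have h0 : 0 < 1 / ((n : ℝ) + 1) := by positivity
    have h1 : 1 / ((n : ℝ) + 1) ≤ (n : ℝ) + 1 := by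
      rw [div_le_iff₀ (by positivity)]; nlinarith
    rw [setIntegral_congr_fun measurableSet_Ioc (fun τ hτ => hΘ τ (h0.trans hτ.1))]
    exact (ftc_pair h0 h1 hc hcb).2
  have hn1 : Filter.Tendsto (fun n : ℕ => (n : ℝ) + 1) Filter.atTop Filter.atTop :=
    Filter.tendsto_atTop_add_const_right _ _ tendsto_natCast_atTop_atTop
  have hn2 : Filter.Tendsto (fun n : ℕ => 1 / ((n : ℝ) + 1)) Filter.atTop
      (nhdsWithin 0 (Ioi 0)) :=
    tendsto_nhdsWithin_iff.2 ⟨tendsto_one_div_add_atTop_nhds_zero_nat,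
      Filter.Eventually.of_forall fun n => by simp only [mem_Ioi]; positivity⟩
  have hlim2 := (hE1.comp hn1).sub (hE0.comp hn2)
  have := tendsto_nhds_unique (hlim.congr hval) hlim2
  rw [this, zero_sub]
  congr 1
  unfold corr
  simp only [sub_zero]

/-! ### The pressure potential has bounded mean oscillation -/

/-- The mean oscillation is at most twice the mean distance to an arbitrary constant. -/
theorem osc_le {f : Spc D → ℝ} {c : Spc D} {r : ℝ} (hr : 0 < r)
    (hf : IntegrableOn f (Metric.ball c r)) (a K : ℝ)
    (h : ∫ x in Metric.ball c r, |f x - a| ≤ K * volume.real (Metric.ball c r)) :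
    ⨍ y in Metric.ball c r, |f y - ⨍ z in Metric.ball c r, f z| ≤ 2 * K := by
  have hfin : volume (Metric.ball c r) ≠ ⊤ := measure_ball_lt_top.ne
  have hV : 0 < volume.real (Metric.ball c r) :=
    ENNReal.toReal_pos (Metric.measure_ball_pos _ _ hr).ne' hfin
  have hc : ∀ b : ℝ, IntegrableOn (fun _ : Spc D => b) (Metric.ball c r) := fun b =>
    integrableOn_const hfin
  have hcv : ∀ b : ℝ, ∫ x in Metric.ball c r, b = b * volume.real (Metric.ball c r) := fun b => by
    rw [setIntegral_const, smul_eq_mul, mul_comm]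
  set V := volume.real (Metric.ball c r) with hVd
  set m := ⨍ z in Metric.ball c r, f z with hm
  have hm' : m * V = ∫ z in Metric.ball c r, f z := by
    rw [hm, setAverage_eq, smul_eq_mul, ← hVd]; field_simp
  have h1 : |a - m| ≤ K := by
    have h2 : (a - m) * V = -∫ x in Metric.ball c r, (f x - a) := by
      rw [integral_sub hf (hc a), hcv, ← hm']; ring
    have h3 : |a - m| * V ≤ K * V := by
      rw [← abs_of_pos hV, ← abs_mul, h2, abs_neg, abs_of_pos hV]
      exact abs_integral_le_integral_abs.trans h
    exact le_of_mul_le_mul_right h3 hV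
  rw [setAverage_eq, smul_eq_mul, inv_mul_le_iff₀ hV]
  calc ∫ x in Metric.ball c r, |f x - m| ≤ ∫ x in Metric.ball c r, (|f x - a| + |a - m|) := by
        refine integral_mono (hf.sub (hc m)).abs ((hf.sub (hc a)).abs.add (hc _)) fun x => ?_
        exact abs_sub_le _ _ _
    _ = (∫ x in Metric.ball c r, |f x - a|) + |a - m| * V := by
        rw [← hcv]; exact integral_add (hf.sub (hc a)).abs (hc _)
    _ ≤ V * (2 * K) := by nlinarith

theorem hh_bound_one (ψ : SchwartzMap (Spc D) ℝ) {f : Spc D → ℝ} {M : ℝ} (hM : 0 ≤ M)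
    (hb : ∀ x, |f x| ≤ M) {τ : ℝ} (hτ : 1 ≤ τ) (x : Spc D) :
    |hh ψ f τ x| ≤ M * ∫ y, |ψ y| := by
  refine (cv_bound (ker_integrable ψ 2 (by linarith)) hb x).trans
    (mul_le_mul_of_nonneg_left ?_ hM)
  rw [ker_L1 ψ 2 (by linarith)]
  have h1 : τ ^ (-2 / 2 : ℝ) ≤ 1 := Real.rpow_le_one_of_one_le_of_nonpos hτ (by norm_num)
  have h2 : 0 ≤ ∫ y, |ψ y| := integral_nonneg fun _ => abs_nonneg _
  nlinarith

theorem hh_int_one (ψ : SchwartzMap (Spc D) ℝ) {f : Spc D → ℝ} (hf : Measurable f) {M : ℝ}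
    (hM : 0 ≤ M) (hb : ∀ x, |f x| ≤ M) (R : ℝ) (x : Spc D) :
    IntegrableOn (fun τ => hh ψ f τ x) (Ioc 1 R) := by
  refine Measure.integrableOn_of_bounded (M := M * ∫ y, |ψ y|) measure_Ioc_lt_top.ne ?_ ?_
  · exact ((hh_measurable ψ hf).comp
      (measurable_id.prodMk measurable_const)).aestronglyMeasurable
  · exact (ae_restrict_mem measurableSet_Ioc).mono fun τ hτ => hh_bound_one ψ hM hb hτ.1.le x

/-- The contribution of the values of `f` near the ball, estimated through the energy inequality
tested with the sign of the potential. -/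
theorem loc_bound (j l : Fin D) {f : Spc D → ℝ} (hf : Measurable f) {M : ℝ} (hM : 0 < M)
    (hb : ∀ x, |f x| ≤ M) (c : Spc D) {r : ℝ} (hr : 1 ≤ r) :
    IntegrableOn (fun x => |∫ τ in Ioc 1 (r ^ 2),
      hh (sd j (sd l (gau D))) ((Metric.ball c (2 * r)).indicator f) τ x|) (Metric.ball c r) ∧
    ∫ x in Metric.ball c r, |∫ τ in Ioc 1 (r ^ 2),
      hh (sd j (sd l (gau D))) ((Metric.ball c (2 * r)).indicator f) τ x|
      ≤ M * (1 + 2 ^ D) / 2 * volume.real (Metric.ball c r) := by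
  set ψ := sd j (sd l (gau D)) with hψ
  set fl := (Metric.ball c (2 * r)).indicator f with hfl
  set F : Spc D → ℝ := fun x => ∫ τ in Ioc 1 (r ^ 2), hh ψ fl τ x with hF
  have hr0 : 0 < r := by linarith
  have hflm : Measurable fl := hf.indicator measurableSet_ball
  have hflb : ∀ x, |fl x| ≤ M := fun x => by
    by_cases h : x ∈ Metric.ball c (2 * r)
    · rw [hfl, indicator_of_mem h]; exact hb x
    · rw [hfl, indicator_of_notMem h, abs_zero]; exact hM.le
  have hind : ∀ (ρ : ℝ) (g : Spc D → ℝ), Measurable g → (∀ x, |g x| ≤ M) →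
      Integrable ((Metric.ball c ρ).indicator g) := fun ρ g hg hgb => by
    rw [integrable_indicator_iff measurableSet_ball]
    exact Measure.integrableOn_of_bounded (M := M) measure_ball_lt_top.ne hg.aestronglyMeasurable
      (Filter.Eventually.of_forall hgb)
  have hsq : ∀ (ρ : ℝ) (g : Spc D → ℝ), Measurable g → (∀ x, |g x| ≤ M) →
      ∫ x, ((Metric.ball c ρ).indicator g x) ^ 2 ≤ M ^ 2 * volume.real (Metric.ball c ρ) := by
    intro ρ g hg hgb
    have e : ∀ x, ((Metric.ball c ρ).indicator g x) ^ 2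
        = (Metric.ball c ρ).indicator (fun x => g x ^ 2) x := fun x => by
      by_cases h : x ∈ Metric.ball c ρ <;> simp [h]
    simp only [e]
    rw [integral_indicator measurableSet_ball]
    have h2 : ∀ x, |g x ^ 2| ≤ M ^ 2 := fun x => by
      rw [abs_pow]; exact pow_le_pow_left₀ (abs_nonneg _) (hgb x) 2
    refine (le_abs_self _).trans ?_
    rw [← Real.norm_eq_abs]
    exact norm_setIntegral_le_of_norm_le_const (f := fun x => g x ^ 2) measure_ball_lt_top
      fun x _ => h2 x
  have hFm : Measurable F :=
    (((hh_measurable ψ hflm).stronglyMeasurable.comp_measurable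
      measurable_swap).integral_prod_right' (ν := volume.restrict (Ioc 1 (r ^ 2)))).measurable
  -- duality: the test function is `M sgn F` on the ball, so that its pairing with `F` is `M ∫ |F|`
  set sg : Spc D → ℝ := fun x => if 0 ≤ F x then M else -M with hsg
  have hsgm : Measurable sg :=
    Measurable.ite (measurableSet_le measurable_const hFm) measurable_const measurable_const
  have hsgb : ∀ x, |sg x| ≤ M := fun x => by
    simp only [hsg]; split_ifs <;> simp [abs_of_pos hM]
  set φ := (Metric.ball c r).indicator sg with hφ
  have hφm : Measurable φ := hsgm.indicator measurableSet_ball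
  have hφb : ∀ x, |φ x| ≤ M := fun x => by
    by_cases h : x ∈ Metric.ball c r
    · rw [hφ, indicator_of_mem h]; exact hsgb x
    · rw [hφ, indicator_of_notMem h, abs_zero]; exact hM.le
  have hφB : BI φ := ⟨hφm, hind r sg hsgm hsgb, M, hφb⟩
  have hflB : BI fl := ⟨hflm, hind (2 * r) f hf hb, M, hflb⟩
  have hI0 : 0 ≤ ∫ y, |ψ y| := integral_nonneg fun _ => abs_nonneg _
  have hprod : Integrable (fun p : ℝ × Spc D => φ p.2 * hh ψ fl p.1 p.2)
      ((volume.restrict (Ioc 1 (r ^ 2))).prod volume) := by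
    have hcvb : ∀ τ ∈ Ioc 1 (r ^ 2), ∀ x, |hh ψ fl τ x| ≤ M * ∫ y, |ψ y| :=
      fun τ hτ x => hh_bound_one ψ hM.le hflb hτ.1.le x
    have hint : ∀ τ ∈ Ioc 1 (r ^ 2), Integrable (fun x => φ x * hh ψ fl τ x) := fun τ hτ =>
      hφB.int.mul_bdd (cv_measurable (ker_continuous ψ 2 τ).measurable hflm).aestronglyMeasurable
        (Filter.Eventually.of_forall (hcvb τ hτ))
    refine prod_int (b := fun _ => (∫ x, |φ x|) * (M * ∫ y, |ψ y|))
      ((hφm.comp measurable_snd).mul (hh_measurable ψ hflm)) measurableSet_Ioc hint ?_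
      (integrableOn_const measure_Ioc_lt_top.ne)
    intro τ hτ
    rw [← integral_mul_const]
    refine integral_mono (hint τ hτ).abs (hφB.int.abs.mul_const _) fun x => ?_
    change |φ x * hh ψ fl τ x| ≤ _
    rw [abs_mul]
    exact mul_le_mul_of_nonneg_left (hcvb τ hτ x) (abs_nonneg _)
  have hswap := integral_integral_swap (f := fun τ x => φ x * hh ψ fl τ x) hprod
  have hpair := two_pair_le hflB hφB one_pos (by nlinarith : (1 : ℝ) ≤ r ^ 2) j l
  have hφF : ∀ x, ∫ τ in Ioc 1 (r ^ 2), φ x * hh ψ fl τ x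
      = (Metric.ball c r).indicator (fun x => M * |F x|) x := fun x => by
    rw [integral_const_mul]
    by_cases h : x ∈ Metric.ball c r
    · rw [hφ, indicator_of_mem h, indicator_of_mem h]
      change sg x * F x = _
      simp only [hsg]
      split_ifs with h0
      · rw [abs_of_nonneg h0]
      · rw [abs_of_neg (not_le.1 h0)]; ring
    · rw [hφ, indicator_of_notMem h, indicator_of_notMem h, zero_mul]
  simp only [hφF] at hswap
  rw [integral_indicator measurableSet_ball, integral_const_mul] at hswap
  have hFi : IntegrableOn (fun x => |F x|) (Metric.ball c r) := by
    refine Measure.integrableOn_of_bounded (M := (M * ∫ y, |ψ y|) * volume.real (Ioc 1 (r ^ 2)))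
      measure_ball_lt_top.ne hFm.abs.aestronglyMeasurable (Filter.Eventually.of_forall fun x => ?_)
    rw [norm_abs_eq_norm]
    exact norm_setIntegral_le_of_norm_le_const measure_Ioc_lt_top
      fun τ hτ => hh_bound_one ψ hM.le hflb hτ.1.le x
  refine ⟨hFi, ?_⟩
  have hvol : volume.real (Metric.ball c (2 * r)) = 2 ^ D * volume.real (Metric.ball c r) := by
    have := Measure.addHaar_ball_mul_of_pos (volume : Measure (Spc D)) c
      (r := 2) (by norm_num) r
    rw [Measure.real, this, finrank_euclideanSpace_fin, Measure.real,
      ← Measure.addHaar_ball_center volume c, ENNReal.toReal_mul,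
      ENNReal.toReal_ofReal (by positivity)]
  have h1 := hsq r sg hsgm hsgb
  have h2 := hsq (2 * r) f hf hb
  rw [hvol] at h2
  have h3 : M * ∫ x in Metric.ball c r, |F x|
      ≤ M * (M * (1 + 2 ^ D) / 2 * volume.real (Metric.ball c r)) := by
    rw [← hswap]
    refine hpair.trans ?_
    have : M * (M * (1 + 2 ^ D) / 2 * volume.real (Metric.ball c r))
      = (M ^ 2 * volume.real (Metric.ball c r) + M ^ 2 * (2 ^ D * volume.real (Metric.ball c r))) / 2 := by
      ring
    rw [this]
    linarith
  exact le_of_mul_le_mul_left h3 hM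

/-- The contribution of the values of `f` far from the ball. -/
theorem far_bound (ψ : SchwartzMap (Spc D) ℝ) {f : Spc D → ℝ} {M : ℝ} (hM : 0 ≤ M)
    (hb : ∀ x, |f x| ≤ M) {c x : Spc D} {r : ℝ} (hr : 0 < r) (hx : x ∈ Metric.ball c r)
    {τ : ℝ} (hτ : 0 < τ) :
    |hh ψ ((Metric.ball c (2 * r))ᶜ.indicator f) τ x| ≤ M * wt ψ 2 / r ^ 2 := by
  have hk := ker_wt ψ 2 2 hτ
  have hi := (ker_wt_int ψ 2 (p := 2) (by norm_num) le_rfl hτ)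
  simp only [sub_self, neg_zero, zero_div, Real.rpow_zero, one_mul] at hk
  rw [← hk, ← integral_sub_left_eq_self (fun y => |ker ψ 2 τ y| * ‖y‖ ^ (2 : ℝ)) volume x,
    ← integral_const_mul, ← integral_div]
  unfold hh cv
  rw [← Real.norm_eq_abs]
  refine norm_integral_le_of_norm_le (((hi.comp_sub_left x).const_mul M).div_const _)
    (Filter.Eventually.of_forall fun w => ?_)
  simp only [Real.norm_eq_abs, abs_mul]
  by_cases h : w ∈ Metric.ball c (2 * r)
  · rw [indicator_of_notMem (by simpa using h), abs_zero, mul_zero]; positivity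
  · rw [indicator_of_mem (by simpa using h)]
    have h1 : r ≤ ‖x - w‖ := by
      rw [Metric.mem_ball, dist_eq_norm] at hx h
      have : ‖w - c‖ ≤ ‖w - x‖ + ‖x - c‖ := norm_sub_le_norm_sub_add_norm_sub _ _ _
      rw [norm_sub_rev w x] at this
      linarith
    rw [Real.rpow_two, le_div_iff₀ (by positivity)]
    have h2 : r ^ 2 ≤ ‖x - w‖ ^ 2 := pow_le_pow_left₀ hr.le h1 2
    calc |ker ψ 2 τ (x - w)| * |f w| * r ^ 2 ≤ |ker ψ 2 τ (x - w)| * M * ‖x - w‖ ^ 2 :=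
          mul_le_mul (mul_le_mul_of_nonneg_left (hb w) (abs_nonneg _)) h2 (by positivity)
            (by positivity)
      _ = _ := by ring

/-- Pointwise bound of the potential normalised at the centre and the scale of a large ball,
up to the contribution of the nearby values of `f`. -/
theorem pr_ball_bound (j l : Fin D) {f : Spc D → ℝ} {M H : ℝ} (hf : HB f M H) {c x : Spc D} {r : ℝ}
    (hr : 1 ≤ r) (hx : x ∈ Metric.ball c r) :
    |pr (sd j (sd l (gau D))) f c (r ^ 2) x|
      ≤ 4 * (H * wt (sd j (sd l (gau D))) (1 / 2)) + M * wt (sd j (sd l (gau D))) 2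
        + 4 * (M * hol (sd j (sd l (gau D))))
        + |∫ τ in Ioc 1 (r ^ 2),
          hh (sd j (sd l (gau D))) ((Metric.ball c (2 * r)).indicator f) τ x| := by
  have hint := pg_int (sd l (gau D)) j hf c (by positivity : 0 < r ^ 2) x
  have hbh := fun (τ : ℝ) (hτ : 0 < τ) => hh_bound_hold (sd l (gau D)) j hf hτ x
  set ψ := sd j (sd l (gau D)) with hψ
  have hr0 : 0 < r := by linarith
  have hr2 : (1 : ℝ) ≤ r ^ 2 := by nlinarith
  have hw := wt_nonneg ψ (1 / 2)
  have hw2 := wt_nonneg ψ 2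
  have hho := hol_nonneg ψ
  have hH := hf.hH
  have hM := hf.hM
  have hsplit : pr ψ f c (r ^ 2) x = (∫ τ in Ioc 0 1, hh ψ f τ x)
      + (∫ τ in Ioc 1 (r ^ 2), hh ψ f τ x)
      + ∫ τ in Ioi (r ^ 2), (hh ψ f τ x - hh ψ f τ c) := by
    unfold pr
    rw [← Ioc_union_Ioi_eq_Ioi (by positivity : (0 : ℝ) ≤ r ^ 2)] at hint ⊢
    rw [setIntegral_union (Ioc_disjoint_Ioi le_rfl) measurableSet_Ioi
      (hint.mono_set subset_union_left) (hint.mono_set subset_union_right)]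
    have e1 : ∫ τ in Ioi (r ^ 2), pg ψ f c (r ^ 2) τ x
        = ∫ τ in Ioi (r ^ 2), (hh ψ f τ x - hh ψ f τ c) :=
      setIntegral_congr_fun measurableSet_Ioi fun τ hτ => by simp [pg, mem_Ioi.1 hτ]
    have e2 : EqOn (fun τ => pg ψ f c (r ^ 2) τ x) (fun τ => hh ψ f τ x) (Ioc 0 (r ^ 2)) :=
      fun τ hτ => by simp [pg, not_lt.2 hτ.2]
    have hi2 : IntegrableOn (fun τ => hh ψ f τ x) (Ioc 0 (r ^ 2)) :=
      (hint.mono_set subset_union_left).congr_fun e2 measurableSet_Ioc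
    rw [e1, setIntegral_congr_fun measurableSet_Ioc e2]
    rw [← Ioc_union_Ioc_eq_Ioc zero_le_one hr2] at hi2 ⊢
    rw [setIntegral_union (Ioc_disjoint_Ioc_of_le le_rfl) measurableSet_Ioc
      (hi2.mono_set subset_union_left) (hi2.mono_set subset_union_right)]
  have b1 : |∫ τ in Ioc 0 1, hh ψ f τ x| ≤ 4 * (H * wt ψ (1 / 2)) := by
    obtain ⟨h1, h2⟩ := int_rpow_Ioc 1 one_pos
    rw [Real.one_rpow, mul_one] at h2
    rw [← h2, mul_comm, ← integral_const_mul, ← Real.norm_eq_abs]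
    exact norm_integral_le_of_norm_le (h1.const_mul _)
      ((ae_restrict_mem measurableSet_Ioc).mono fun τ hτ => hbh τ hτ.1)
  have b3 : |∫ τ in Ioi (r ^ 2), (hh ψ f τ x - hh ψ f τ c)| ≤ 4 * (M * hol ψ) := by
    obtain ⟨h1, h2⟩ := int_rpow_Ioi (r ^ 2) (by positivity)
    have hxc : √‖x - c‖ ≤ √r := by
      rw [Metric.mem_ball, dist_eq_norm] at hx
      exact Real.sqrt_le_sqrt hx.le
    have h3 : (r ^ 2) ^ (-(1 / 4) : ℝ) * √r = 1 := by
      rw [Real.sqrt_eq_rpow, ← Real.rpow_natCast, ← Real.rpow_mul hr0.le, ← Real.rpow_add hr0]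
      norm_num
    have h4 : |∫ τ in Ioi (r ^ 2), (hh ψ f τ x - hh ψ f τ c)|
        ≤ ∫ τ in Ioi (r ^ 2), (M * hol ψ * √r) * τ ^ (-(5 / 4) : ℝ) := by
      rw [← Real.norm_eq_abs]
      refine norm_integral_le_of_norm_le (h1.const_mul _)
        ((ae_restrict_mem measurableSet_Ioi).mono fun τ hτ => ?_)
      have hτ0 : 0 < τ := lt_trans (by positivity) (mem_Ioi.1 hτ)
      refine (hh_diff ψ hf hτ0 x c).trans ?_
      have : M * hol ψ * τ ^ (-(5 / 4) : ℝ) * √‖x - c‖ ≤ M * hol ψ * τ ^ (-(5 / 4) : ℝ) * √r :=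
        mul_le_mul_of_nonneg_left hxc (by positivity)
      linarith
    rw [integral_const_mul, h2] at h4
    calc _ ≤ _ := h4
      _ = 4 * (M * hol ψ) * ((r ^ 2) ^ (-(1 / 4) : ℝ) * √r) := by ring
      _ = _ := by rw [h3, mul_one]
  have b2 : |∫ τ in Ioc 1 (r ^ 2), hh ψ f τ x| ≤ M * wt ψ 2
      + |∫ τ in Ioc 1 (r ^ 2), hh ψ ((Metric.ball c (2 * r)).indicator f) τ x| := by
    set fl := (Metric.ball c (2 * r)).indicator f with hfl
    set ff := (Metric.ball c (2 * r))ᶜ.indicator f with hff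
    have hflm : Measurable fl := hf.meas.indicator measurableSet_ball
    have hffm : Measurable ff := hf.meas.indicator measurableSet_ball.compl
    have hib : ∀ (S : Set (Spc D)) y, |S.indicator f y| ≤ M := fun S y => by
      by_cases h : y ∈ S
      · rw [indicator_of_mem h]; exact hf.bdd y
      · rw [indicator_of_notMem h, abs_zero]; exact hM
    have e : ∀ τ ∈ Ioc 1 (r ^ 2), hh ψ f τ x = hh ψ ff τ x + hh ψ fl τ x := fun τ hτ => by
      have hτ0 : 0 < τ := by linarith [hτ.1]
      unfold hh cv
      rw [← integral_add (cv_integrand_int (ker_integrable ψ 2 hτ0) hffm (hib _) x)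
        (cv_integrand_int (ker_integrable ψ 2 hτ0) hflm (hib _) x)]
      congr 1; funext w
      rw [← mul_add, hff, hfl]
      congr 1
      exact (congrFun (indicator_compl_add_self _ f) w).symm
    rw [setIntegral_congr_fun measurableSet_Ioc e,
      integral_add (hh_int_one ψ hffm hM (hib _) _ x) (hh_int_one ψ hflm hM (hib _) _ x)]
    refine (abs_add_le _ _).trans (add_le_add_left ?_ _)
    have := norm_setIntegral_le_of_norm_le_const (μ := volume) (s := Ioc 1 (r ^ 2))
      (f := fun τ => hh ψ ff τ x) (C := M * wt ψ 2 / r ^ 2)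
      measure_Ioc_lt_top fun τ hτ => far_bound ψ hM hf.bdd hr0 hx (by linarith [hτ.1])
    rw [Real.norm_eq_abs] at this
    refine this.trans ?_
    rw [Real.volume_real_Ioc_of_le hr2, div_mul_eq_mul_div, div_le_iff₀ (by positivity)]
    exact mul_le_mul_of_nonneg_left (by linarith) (by positivity)
  rw [hsplit]
  have := abs_add_three (∫ τ in Ioc 0 1, hh ψ f τ x) (∫ τ in Ioc 1 (r ^ 2), hh ψ f τ x)
    (∫ τ in Ioi (r ^ 2), (hh ψ f τ x - hh ψ f τ c))
  linarith

/-- Balls of radius at most `1` are covered by the growth bound at scale `1`, larger ones by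
`pr_ball_bound` and `loc_bound`. -/
theorem pr_isBMO (j l : Fin D) {f : Spc D → ℝ} {M H : ℝ} (hf : HB f M H) :
    IsBMO (pr (sd j (sd l (gau D))) f 0 1) := by
  have hloc := pr_locInt (sd l (gau D)) j hf 0 1 one_pos
  refine ⟨hloc, ?_⟩
  have hpb := fun c x => pr_bound (sd l (gau D)) j hf c 1 one_pos x
  have hpc := fun c ρ (hρ : 0 < ρ) => pr_const (sd l (gau D)) j hf 0 c one_pos hρ
  set ψ := sd j (sd l (gau D)) with hψ
  set A := ∫ τ in Ioi 0, bnd (H * wt ψ (1 / 2) + M * hol ψ) 1 τ with hA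
  have hA0 : 0 ≤ A := by
    have := (abs_nonneg _).trans (hpb 0 0)
    simpa using this
  set K := 4 * (H * wt ψ (1 / 2)) + M * wt ψ 2 + 4 * (M * hol ψ) with hK
  have hK0 : 0 ≤ K := by
    have hw := wt_nonneg ψ (1 / 2)
    have hw2 := wt_nonneg ψ 2
    have hho := hol_nonneg ψ
    have hH := hf.hH
    have hM := hf.hM
    positivity
  set K' := (M + 1) * (1 + 2 ^ D) / 2 with hK'
  have hK'0 : 0 ≤ K' := by have := hf.hM; positivity
  refine ⟨2 * (2 * A + (K + K')), ?_⟩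
  rintro v ⟨c, r, hr, rfl⟩
  have hfi : IntegrableOn (pr ψ f 0 1) (Metric.ball c r) :=
    (hloc.integrableOn_isCompact (isCompact_closedBall c r)).mono_set Metric.ball_subset_closedBall
  have hfin : volume (Metric.ball c r) ≠ ⊤ := measure_ball_lt_top.ne
  have hV : 0 ≤ volume.real (Metric.ball c r) := ENNReal.toReal_nonneg
  -- on each ball the potential is replaced by the one normalised at the centre, at the cost of a
  -- constant
  rcases le_total r 1 with h1 | h1
  · obtain ⟨a, ha⟩ := hpc c 1 one_pos
    refine osc_le hr hfi a _ ?_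
    have hb : ∀ x ∈ Metric.ball c r, ‖|pr ψ f 0 1 x - a|‖ ≤ 2 * A + (K + K') := fun x hx => by
      rw [norm_abs_eq_norm, Real.norm_eq_abs, show pr ψ f 0 1 x - a = pr ψ f c 1 x by linarith [ha x]]
      refine (hpb c x).trans ?_
      rw [Metric.mem_ball, dist_eq_norm] at hx
      have : √‖x - c‖ ≤ 1 := by
        rw [Real.sqrt_le_one]; linarith
      nlinarith
    have := norm_setIntegral_le_of_norm_le_const (μ := volume) measure_ball_lt_top hb
    exact (le_abs_self _).trans this
  · obtain ⟨a, ha⟩ := hpc c (r ^ 2) (by positivity)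
    refine osc_le hr hfi a _ ?_
    -- `M + 1` in place of `M` since `loc_bound` needs a positive bound
    obtain ⟨l1, l2⟩ := loc_bound j l hf.meas (M := M + 1) (by linarith [hf.hM])
      (fun x => (hf.bdd x).trans (by linarith)) c h1
    calc ∫ x in Metric.ball c r, |pr ψ f 0 1 x - a|
        ≤ ∫ x in Metric.ball c r, (K + |∫ τ in Ioc 1 (r ^ 2),
          hh ψ ((Metric.ball c (2 * r)).indicator f) τ x|) := by
          refine setIntegral_mono_on (hfi.sub (integrableOn_const hfin)).abs
            ((integrableOn_const hfin).add l1) measurableSet_ball fun x hx => ?_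
          rw [show pr ψ f 0 1 x - a = pr ψ f c (r ^ 2) x by linarith [ha x]]
          exact pr_ball_bound j l hf h1 hx
      _ = K * volume.real (Metric.ball c r) + ∫ x in Metric.ball c r, |∫ τ in Ioc 1 (r ^ 2),
          hh ψ ((Metric.ball c (2 * r)).indicator f) τ x| := by
          have hKc : IntegrableOn (fun _ : Spc D => K) (Metric.ball c r) := integrableOn_const hfin
          refine (integral_add hKc l1).trans ?_
          rw [setIntegral_const, smul_eq_mul, mul_comm]
      _ ≤ _ := by nlinarith

theorem IsBMO.add {f g : Spc D → ℝ} (hf : IsBMO f) (hg : IsBMO g) : IsBMO (fun x => f x + g x) := by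
  refine ⟨hf.1.add hg.1, ?_⟩
  obtain ⟨A, hA⟩ := hf.2
  obtain ⟨A', hA'⟩ := hg.2
  refine ⟨A + A', ?_⟩
  rintro v ⟨c, r, hr, rfl⟩
  have hfin : volume (Metric.ball c r) ≠ ⊤ := measure_ball_lt_top.ne
  have hfi : IntegrableOn f (Metric.ball c r) :=
    (hf.1.integrableOn_isCompact (isCompact_closedBall c r)).mono_set Metric.ball_subset_closedBall
  have hgi : IntegrableOn g (Metric.ball c r) :=
    (hg.1.integrableOn_isCompact (isCompact_closedBall c r)).mono_set Metric.ball_subset_closedBall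
  have h1 := hA ⟨c, r, hr, rfl⟩
  have h2 := hA' ⟨c, r, hr, rfl⟩
  refine le_trans ?_ (add_le_add h1 h2)
  have e : ⨍ z in Metric.ball c r, (f z + g z)
      = (⨍ z in Metric.ball c r, f z) + ⨍ z in Metric.ball c r, g z := by
    simp only [setAverage_eq, smul_eq_mul]
    rw [integral_add hfi hgi]; ring
  rw [e]
  set a := ⨍ z in Metric.ball c r, f z
  set b := ⨍ z in Metric.ball c r, g z
  have i1 := (hfi.sub (integrableOn_const (C := a) hfin)).abs
  have i2 := (hgi.sub (integrableOn_const (C := b) hfin)).abs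
  simp only [setAverage_eq, smul_eq_mul]
  rw [← mul_add]
  refine mul_le_mul_of_nonneg_left ?_ (inv_nonneg.2 ENNReal.toReal_nonneg)
  refine le_of_le_of_eq ?_ (integral_add i1 i2)
  refine integral_mono ((hfi.add hgi).sub (integrableOn_const (C := a + b) hfin)).abs (i1.add i2)
    fun x => ?_
  change |f x + g x - (a + b)| ≤ |f x - a| + |g x - b|
  rw [show f x + g x - (a + b) = (f x - a) + (g x - b) by ring]
  exact abs_add_le _ _

theorem IsBMO.zero : IsBMO (fun _ : Spc D => (0 : ℝ)) := by
  refine ⟨locallyIntegrable_const 0, 0, ?_⟩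
  rintro v ⟨c, r, hr, rfl⟩
  simp

theorem IsBMO.sum {ι : Type*} (s : Finset ι) {f : ι → Spc D → ℝ} (h : ∀ i, IsBMO (f i)) :
    IsBMO (fun x => ∑ i ∈ s, f i x) := by
  classical
  induction s using Finset.induction_on with
  | empty => simpa using IsBMO.zero
  | insert a s ha ih => simp only [Finset.sum_insert ha]; exact (h a).add ih

/-! ### Duhamel operators -/

/-- A time dependent kernel with the parabolic scaling of `∇G`: its `L¹` norm is at most
`c σ^{-1/2}`, and its `L¹` modulus of continuity is Hölder with constant `c σ^{-3/4}`. -/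
structure TK (K : ℝ → Spc D → ℝ) (c : ℝ) : Prop where
  meas : Measurable (fun p : ℝ × Spc D => K p.1 p.2)
  int : ∀ σ, 0 < σ → Integrable (K σ)
  L1 : ∀ σ, 0 < σ → ∫ y, |K σ y| ≤ c * σ ^ (-(1 / 2) : ℝ)
  hol : ∀ σ, 0 < σ → ∀ x x' : Spc D,
    ∫ w, |K σ (x - w) - K σ (x' - w)| ≤ c * σ ^ (-(3 / 4) : ℝ) * √‖x - x'‖
  nonneg : 0 ≤ c

theorem TK.mono {K : ℝ → Spc D → ℝ} {c c' : ℝ} (h : TK K c) (hc : c ≤ c') : TK K c' where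
  meas := h.meas
  int := h.int
  L1 σ hσ := (h.L1 σ hσ).trans (mul_le_mul_of_nonneg_right hc (by positivity))
  hol σ hσ x x' := (h.hol σ hσ x x').trans (by gcongr)
  nonneg := h.nonneg.trans hc

theorem TK.zero : TK (fun _ (_ : Spc D) => (0 : ℝ)) 0 where
  meas := measurable_const
  int _ _ := integrable_zero _ _ _
  L1 _ _ := by simp
  hol _ _ _ _ := by simp
  nonneg := le_rfl

theorem tk_ker (ψ : SchwartzMap (Spc D) ℝ) {ν : ℝ} (hν : 0 < ν) :
    ∃ c, TK (fun σ => ker ψ 1 (ν * σ)) c := by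
  have hI : 0 ≤ ∫ y, |ψ y| := integral_nonneg fun _ => abs_nonneg _
  have hH := hol_nonneg ψ
  refine ⟨ν ^ (-(1 / 2) : ℝ) * (∫ y, |ψ y|) + hol ψ * ν ^ (-(3 / 4) : ℝ), ?_, ?_, ?_, ?_, ?_⟩
  · exact (ker_measurable ψ 1).comp
      (show Measurable (fun p : ℝ × Spc D => (ν * p.1, p.2)) by fun_prop)
  · exact fun σ hσ => ker_integrable ψ 1 (by positivity)
  · intro σ hσ
    rw [ker_L1 ψ 1 (by positivity), show (-1 / 2 : ℝ) = -(1 / 2) by norm_num,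
      Real.mul_rpow hν.le hσ.le]
    have : 0 ≤ hol ψ * ν ^ (-(3 / 4) : ℝ) * σ ^ (-(1 / 2) : ℝ) := by positivity
    linarith
  · intro σ hσ x x'
    refine (ker_L1_hol ψ 1 (by positivity) x x').trans ?_
    rw [show (-1 / 2 - 1 / 4 : ℝ) = -(3 / 4) by norm_num, Real.mul_rpow hν.le hσ.le]
    have : 0 ≤ ν ^ (-(1 / 2) : ℝ) * (∫ y, |ψ y|) * σ ^ (-(3 / 4) : ℝ) * √‖x - x'‖ := by positivity
    linarith
  · positivity

theorem tk_Qk (ψ : SchwartzMap (Spc D) ℝ) {ν : ℝ} (hν : 0 < ν) :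
    ∃ c, TK (fun σ => Qk ψ (ν * σ)) c := by
  have hI : 0 ≤ ∫ y, |ψ y| := integral_nonneg fun _ => abs_nonneg _
  have hH := hol_nonneg ψ
  refine ⟨2 * (ν ^ (-(1 / 2) : ℝ) * (∫ y, |ψ y|) + hol ψ * ν ^ (-(3 / 4) : ℝ)), ?_, ?_, ?_, ?_, ?_⟩
  · exact (Qk_measurable ψ).comp
      (show Measurable (fun p : ℝ × Spc D => (ν * p.1, p.2)) by fun_prop)
  · exact fun σ hσ => (Qk_L1 ψ (by positivity)).1
  · intro σ hσ
    refine (Qk_L1 ψ (by positivity)).2.trans ?_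
    rw [Real.mul_rpow hν.le hσ.le]
    have : 0 ≤ hol ψ * ν ^ (-(3 / 4) : ℝ) * σ ^ (-(1 / 2) : ℝ) := by positivity
    linarith
  · intro σ hσ x x'
    refine (Qk_hol ψ (by positivity) x x').trans ?_
    rw [Real.mul_rpow hν.le hσ.le]
    have : 0 ≤ ν ^ (-(1 / 2) : ℝ) * (∫ y, |ψ y|) * σ ^ (-(3 / 4) : ℝ) * √‖x - x'‖ := by positivity
    linarith
  · positivity

/-- The Duhamel operator `∫₀ᵗ K(t-s) * g(s) ds`. -/
def du (K : ℝ → Spc D → ℝ) (g : ℝ × Spc D → ℝ) (t : ℝ) (x : Spc D) : ℝ :=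
  ∫ s in Ioo 0 t, cv (K (t - s)) (fun w => g (s, w)) x

theorem du_integrand_measurable {K : ℝ → Spc D → ℝ} (hK : Measurable (fun p : ℝ × Spc D => K p.1 p.2))
    {g : ℝ × Spc D → ℝ} (hg : Measurable g) :
    Measurable (fun p : (ℝ × Spc D) × ℝ => cv (K (p.1.1 - p.2)) (fun w => g (p.2, w)) p.1.2) := by
  have h : StronglyMeasurable (fun q : ((ℝ × Spc D) × ℝ) × Spc D =>
      K (q.1.1.1 - q.1.2) (q.1.1.2 - q.2) * g (q.1.2, q.2)) := by
    have h1 := hK.comp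
      (show Measurable (fun q : ((ℝ × Spc D) × ℝ) × Spc D => (q.1.1.1 - q.1.2, q.1.1.2 - q.2)) by
        fun_prop)
    have h2 := hg.comp
      (show Measurable (fun q : ((ℝ × Spc D) × ℝ) × Spc D => (q.1.2, q.2)) by fun_prop)
    exact (h1.mul h2).stronglyMeasurable
  exact h.integral_prod_right.measurable

theorem du_measurable {K : ℝ → Spc D → ℝ} (hK : Measurable (fun p : ℝ × Spc D => K p.1 p.2))
    {g : ℝ × Spc D → ℝ} (hg : Measurable g) :
    Measurable (fun p : ℝ × Spc D => du K g p.1 p.2) := by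
  have hS : MeasurableSet {p : (ℝ × Spc D) × ℝ | p.2 ∈ Ioo 0 p.1.1} :=
    (measurableSet_lt measurable_const measurable_snd).inter
      (measurableSet_lt measurable_snd (measurable_fst.comp measurable_fst))
  have h := ((du_integrand_measurable hK hg).indicator hS).stronglyMeasurable.integral_prod_right'
    (ν := volume)
  convert h.measurable using 2 with p
  rw [du, ← integral_indicator measurableSet_Ioo]
  rfl

theorem int_sub_rpow {a : ℝ} (ha : -1 < a) {t : ℝ} (ht : 0 < t) :
    IntegrableOn (fun s => (t - s) ^ a) (Ioo 0 t) ∧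
      ∫ s in Ioo 0 t, (t - s) ^ a = t ^ (a + 1) / (a + 1) := by
  constructor
  · have h := (intervalIntegral.intervalIntegrable_rpow' (a := 0) (b := t) ha).comp_sub_left t
    rw [sub_zero, sub_self] at h
    have := h.symm
    rw [intervalIntegrable_iff_integrableOn_Ioo_of_le ht.le] at this
    exact this
  · rw [← integral_Ioc_eq_integral_Ioo, ← intervalIntegral.integral_of_le ht.le,
      intervalIntegral.integral_comp_sub_left (fun s => s ^ a) t, sub_zero, sub_self,
      integral_rpow (Or.inl ha), Real.zero_rpow (by linarith), sub_zero]

section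
variable {K : ℝ → Spc D → ℝ} {c : ℝ} {g : ℝ × Spc D → ℝ} {M : ℝ}

theorem du_pt (hK : TK K c) (hM : 0 ≤ M) (hb : ∀ p, |g p| ≤ M) {t s : ℝ} (hs : s ∈ Ioo 0 t)
    (x : Spc D) : |cv (K (t - s)) (fun w => g (s, w)) x| ≤ M * c * (t - s) ^ (-(1 / 2) : ℝ) := by
  have h0 : 0 < t - s := by linarith [hs.2]
  refine (cv_bound (hK.int _ h0) (fun w => hb (s, w)) x).trans ?_
  rw [mul_assoc]
  exact mul_le_mul_of_nonneg_left (hK.L1 _ h0) hM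

theorem du_int (hK : TK K c) (hg : Measurable g) (hM : 0 ≤ M) (hb : ∀ p, |g p| ≤ M) {t : ℝ}
    (ht : 0 < t) (x : Spc D) :
    IntegrableOn (fun s => cv (K (t - s)) (fun w => g (s, w)) x) (Ioo 0 t) := by
  refine ((int_sub_rpow (a := -(1 / 2)) (by norm_num) ht).1.const_mul (M * c)).mono' ?_
    ((ae_restrict_mem measurableSet_Ioo).mono fun s hs => du_pt hK hM hb hs x)
  exact ((du_integrand_measurable hK.meas hg).comp
    (measurable_const.prodMk measurable_id : Measurable (fun s : ℝ => ((t, x), s)))).aestronglyMeasurable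

theorem du_bound (hK : TK K c) (hM : 0 ≤ M) (hb : ∀ p, |g p| ≤ M) {t : ℝ}
    (ht : 0 < t) (x : Spc D) : |du K g t x| ≤ 2 * c * M * √t := by
  obtain ⟨h1, h2⟩ := int_sub_rpow (a := -(1 / 2)) (by norm_num) ht
  have : |du K g t x| ≤ ∫ s in Ioo 0 t, M * c * (t - s) ^ (-(1 / 2) : ℝ) := by
    rw [← Real.norm_eq_abs]
    exact norm_integral_le_of_norm_le (h1.const_mul _)
      ((ae_restrict_mem measurableSet_Ioo).mono fun s hs => du_pt hK hM hb hs x)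
  refine this.trans_eq ?_
  rw [integral_const_mul, h2, Real.sqrt_eq_rpow]
  norm_num
  ring

/-- A Duhamel integral is Hölder continuous in space even when the source is merely bounded, because
`σ^{-3/4}` is integrable at `0`. -/
theorem du_hol (hK : TK K c) (hg : Measurable g) (hM : 0 ≤ M) (hb : ∀ p, |g p| ≤ M) {t : ℝ}
    (ht : 0 < t) (x x' : Spc D) :
    |du K g t x - du K g t x'| ≤ 4 * c * M * t ^ (1 / 4 : ℝ) * √‖x - x'‖ := by
  obtain ⟨h1, h2⟩ := int_sub_rpow (a := -(3 / 4)) (by norm_num) ht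
  have : |du K g t x - du K g t x'|
      ≤ ∫ s in Ioo 0 t, (M * c * √‖x - x'‖) * (t - s) ^ (-(3 / 4) : ℝ) := by
    unfold du
    rw [← integral_sub (du_int hK hg hM hb ht x) (du_int hK hg hM hb ht x'), ← Real.norm_eq_abs]
    refine norm_integral_le_of_norm_le (h1.const_mul _)
      ((ae_restrict_mem measurableSet_Ioo).mono fun s hs => ?_)
    have h0 : 0 < t - s := by linarith [hs.2]
    refine (cv_diff_bound (hK.int _ h0) (hg.comp measurable_prodMk_left)
      (fun w => hb (s, w)) x x').trans ?_
    refine (mul_le_mul_of_nonneg_left (hK.hol _ h0 x x') hM).trans_eq ?_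
    ring
  refine this.trans_eq ?_
  rw [integral_const_mul, h2]
  norm_num
  ring

theorem du_sub (hK : TK K c) (hg : Measurable g) (hM : 0 ≤ M) (hb : ∀ p, |g p| ≤ M)
    {g' : ℝ × Spc D → ℝ} (hg' : Measurable g') (hb' : ∀ p, |g' p| ≤ M) {t : ℝ}
    (ht : 0 < t) (x : Spc D) :
    du K g t x - du K g' t x = du K (fun p => g p - g' p) t x := by
  unfold du
  rw [← integral_sub (du_int hK hg hM hb ht x) (du_int hK hg' hM hb' ht x)]
  refine setIntegral_congr_fun measurableSet_Ioo fun s hs => ?_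
  have h0 : 0 < t - s := by linarith [hs.2]
  have h := integral_sub (cv_integrand_int (hK.int _ h0) (hg.comp measurable_prodMk_left)
      (fun w => hb (s, w)) x) (cv_integrand_int (hK.int _ h0) (hg'.comp measurable_prodMk_left)
      (fun w => hb' (s, w)) x)
  refine h.symm.trans ?_
  simp only [cv, Function.comp, mul_sub]

end

/-! ### The fixed point -/

/-- Banach's fixed point theorem on the set of measurable families bounded by `R`, for the
supremum distance. -/
theorem picard {α ι : Type*} [MeasurableSpace α] (Φ : (ι → α → ℝ) → ι → α → ℝ) {R : ℝ}
    (hR : 0 ≤ R)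
    (hΦ : ∀ u, (∀ i, Measurable (u i)) → (∀ i a, |u i a| ≤ R) →
      (∀ i, Measurable (Φ u i)) ∧ ∀ i a, |Φ u i a| ≤ R)
    (hc : ∀ u v, (∀ i, Measurable (u i)) → (∀ i a, |u i a| ≤ R) →
      (∀ i, Measurable (v i)) → (∀ i a, |v i a| ≤ R) → ∀ d, 0 ≤ d →
      (∀ i a, |u i a - v i a| ≤ d) → ∀ i a, |Φ u i a - Φ v i a| ≤ d / 2) :
    ∃ u, (∀ i, Measurable (u i)) ∧ (∀ i a, |u i a| ≤ R) ∧ Φ u = u := by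
  set U : ℕ → ι → α → ℝ := fun n => Φ^[n] (fun _ _ => 0) with hU
  have hU1 : ∀ n, U (n + 1) = Φ (U n) := fun n => Function.iterate_succ_apply' Φ n _
  have hg : ∀ n, (∀ i, Measurable (U n i)) ∧ ∀ i a, |U n i a| ≤ R := by
    intro n
    induction n with
    | zero => exact ⟨fun i => measurable_const, fun i a => by simpa [hU] using hR⟩
    | succ n ih => rw [hU1]; exact hΦ _ ih.1 ih.2
  have hd : ∀ n i a, |U n i a - U (n + 1) i a| ≤ R / 2 ^ n := by
    intro n
    induction n with
    | zero => intro i a; simpa [hU] using (hg 1).2 i a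
    | succ n ih =>
      intro i a
      have := hc _ _ (hg n).1 (hg n).2 (hg (n + 1)).1 (hg (n + 1)).2 _ (by positivity) ih i a
      rw [← hU1, ← hU1] at this
      refine this.trans_eq ?_
      rw [pow_succ]; field_simp
  have hd' : ∀ i a n, dist (U n i a) (U (n + 1) i a) ≤ 2 * R / 2 / 2 ^ n := fun i a n => by
    rw [Real.dist_eq]; refine (hd n i a).trans_eq (by ring)
  have hcs := fun i a => cauchySeq_of_le_geometric_two (hd' i a)
  choose u hu using fun i a => cauchySeq_tendsto_of_complete (hcs i a)
  have hum : ∀ i, Measurable (u i) := fun i =>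
    measurable_of_tendsto_metrizable (fun n => (hg n).1 i) (tendsto_pi_nhds.2 fun a => hu i a)
  have hub : ∀ i a, |u i a| ≤ R := fun i a =>
    le_of_tendsto (hu i a).abs (Filter.Eventually.of_forall fun n => (hg n).2 i a)
  have hdist : ∀ n i a, |U n i a - u i a| ≤ 2 * R / 2 ^ n := fun n i a => by
    have := dist_le_of_le_geometric_two_of_tendsto (hd' i a) (hu i a) n
    rwa [Real.dist_eq] at this
  refine ⟨u, hum, hub, ?_⟩
  funext i a
  have h1 : Filter.Tendsto (fun n => U (n + 1) i a) Filter.atTop (nhds (Φ u i a)) := by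
    rw [tendsto_iff_dist_tendsto_zero]
    have h0 : Filter.Tendsto (fun n : ℕ => R * (1 / 2 : ℝ) ^ n) Filter.atTop (nhds 0) := by
      simpa using (tendsto_pow_atTop_nhds_zero_of_lt_one (r := (1 / 2 : ℝ)) (by norm_num)
        (by norm_num)).const_mul R
    refine squeeze_zero (fun _ => dist_nonneg) (fun n => ?_) h0
    rw [Real.dist_eq, hU1]
    refine (hc _ _ (hg n).1 (hg n).2 hum hub _ (by positivity) (hdist n) i a).trans_eq ?_
    rw [div_pow, one_pow]; ring
  exact tendsto_nhds_unique h1 ((Filter.tendsto_add_atTop_iff_nat 1).2 (hu i a))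

/-- The quadratic expression `u_a u_b - u_{a'} u_{b'}`, for `e = (a, b, a', b')`. -/
def qd {α ι : Type*} (u : ι → α → ℝ) (e : ι × ι × ι × ι) (p : α) : ℝ :=
  u e.1 p * u e.2.1 p - u e.2.2.1 p * u e.2.2.2 p

theorem qd_measurable {α ι : Type*} [MeasurableSpace α] {u : ι → α → ℝ}
    (hu : ∀ i, Measurable (u i)) (e : ι × ι × ι × ι) : Measurable (qd u e) :=
  ((hu _).mul (hu _)).sub ((hu _).mul (hu _))

theorem qd_bound {α ι : Type*} {u : ι → α → ℝ} {R : ℝ} (hR : 0 ≤ R) (hb : ∀ i a, |u i a| ≤ R)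
    (e : ι × ι × ι × ι) (p : α) : |qd u e p| ≤ 2 * R ^ 2 := by
  unfold qd
  have h : ∀ i j, |u i p * u j p| ≤ R * R := fun i j => by
    rw [abs_mul]; exact mul_le_mul (hb _ _) (hb _ _) (abs_nonneg _) hR
  refine (abs_sub _ _).trans ?_
  linarith [h e.1 e.2.1, h e.2.2.1 e.2.2.2]

theorem qd_diff {α ι : Type*} {u v : ι → α → ℝ} {R d : ℝ}
    (hd : 0 ≤ d) (hu : ∀ i a, |u i a| ≤ R) (hv : ∀ i a, |v i a| ≤ R)
    (huv : ∀ i a, |u i a - v i a| ≤ d) (e : ι × ι × ι × ι) (p : α) :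
    |qd u e p - qd v e p| ≤ 4 * R * d := by
  have h : ∀ i j, |u i p * u j p - v i p * v j p| ≤ 2 * R * d := fun i j => by
    rw [show u i p * u j p - v i p * v j p = (u i p - v i p) * u j p + v i p * (u j p - v j p) by ring]
    refine (abs_add_le _ _).trans ?_
    rw [abs_mul, abs_mul]
    have h1 := mul_le_mul (huv i p) (hu j p) (abs_nonneg _) hd
    have h2 := mul_le_mul (hv i p) (huv j p) (abs_nonneg _) ((abs_nonneg _).trans (hv i p))
    linarith
  unfold qd
  rw [show u e.1 p * u e.2.1 p - u e.2.2.1 p * u e.2.2.2 p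
      - (v e.1 p * v e.2.1 p - v e.2.2.1 p * v e.2.2.2 p)
      = (u e.1 p * u e.2.1 p - v e.1 p * v e.2.1 p)
      - (u e.2.2.1 p * u e.2.2.2 p - v e.2.2.1 p * v e.2.2.2 p) by ring]
  refine (abs_sub _ _).trans ?_
  linarith [h e.1 e.2.1, h e.2.2.1 e.2.2.2]

/-- Solvability of a system of quadratic Duhamel equations
`u_i = h_i - ∑_a ∫₀ᵗ K_{ia}(t-s) * q_{ia}(u)(s) ds` up to a time `T ∼ N⁻²`. -/
theorem mild_exists {ι S : Type*} [Fintype S] (K : ι → S → ℝ → Spc D → ℝ) {c : ℝ}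
    (hc : 0 ≤ c) (hK : ∀ i a, TK (K i a) c) (e : ι → S → ι × ι × ι × ι)
    (h : ι → ℝ × Spc D → ℝ) (hm : ∀ i, Measurable (h i)) {N T : ℝ} (hN : 0 ≤ N)
    (hh : ∀ i, ∀ t ∈ Ioc 0 T, ∀ x, |h i (t, x)| ≤ N)
    (hT : 32 * Fintype.card S * c * N * √T ≤ 1) :
    ∃ u : ι → ℝ × Spc D → ℝ, (∀ i, Measurable (u i)) ∧ (∀ i p, |u i p| ≤ 2 * N) ∧
      ∀ i, ∀ t ∈ Ioc 0 T, ∀ x, u i (t, x) = h i (t, x) - ∑ a, du (K i a) (qd u (e i a)) t x := by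
  have hR : 0 ≤ 2 * N := by linarith
  set n : ℝ := ((Fintype.card S : ℕ) : ℝ) with hn
  have hn0 : 0 ≤ n := Nat.cast_nonneg _
  have hsT := Real.sqrt_nonneg T
  have hsum : ∀ (F : S → ℝ) (b : ℝ), (∀ a, |F a| ≤ b) → |∑ a, F a| ≤ n * b := fun F b hb => by
    refine (Finset.abs_sum_le_sum_abs _ _).trans ((Finset.sum_le_sum fun a _ => hb a).trans_eq ?_)
    simp [hn]
  have hTs : MeasurableSet {p : ℝ × Spc D | p.1 ∈ Ioc 0 T} := measurable_fst measurableSet_Ioc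
  classical
  suffices H : ∃ u : ι → ℝ × Spc D → ℝ, (∀ i, Measurable (u i)) ∧ (∀ i p, |u i p| ≤ 2 * N) ∧
      (fun i p => if p.1 ∈ Ioc 0 T then h i p - ∑ a, du (K i a) (qd u (e i a)) p.1 p.2 else 0)
        = u by
    obtain ⟨u, hu1, hu2, hu3⟩ := H
    refine ⟨u, hu1, hu2, fun i t ht x => ?_⟩
    have h4 := congrFun (congrFun hu3 i) (t, x)
    simp only [ht, if_true] at h4
    exact h4.symm
  -- outside `(0, T]` the unknown is set to zero, which keeps it bounded and measurable
  refine picard (fun u i p =>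
    if p.1 ∈ Ioc 0 T then h i p - ∑ a, du (K i a) (qd u (e i a)) p.1 p.2 else 0) hR ?_ ?_
  · intro u hu hb
    refine ⟨fun i => ?_, fun i p => ?_⟩
    · exact Measurable.ite hTs ((hm i).sub (Finset.measurable_sum _ fun a _ =>
        du_measurable (hK i a).meas (qd_measurable hu _))) measurable_const
    · split_ifs with hp
      · have h1 := hh i p.1 hp p.2
        have h2 : |∑ a, du (K i a) (qd u (e i a)) p.1 p.2|
            ≤ n * (2 * c * (2 * (2 * N) ^ 2) * √T) := hsum _ _ fun a => by
          refine (du_bound (hK i a) (by positivity) (qd_bound hR hb _) hp.1 p.2).trans ?_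
          exact mul_le_mul_of_nonneg_left (Real.sqrt_le_sqrt hp.2) (by positivity)
        have h3 : n * (2 * c * (2 * (2 * N) ^ 2) * √T) ≤ N := by
          have : (32 * n * c * N * √T) * N ≤ 1 * N := mul_le_mul_of_nonneg_right hT hN
          nlinarith
        refine (abs_sub _ _).trans ?_
        linarith
      · rw [abs_zero]; exact hR
  · intro u v hu hub hv hvb d hd huv i p
    split_ifs with hp
    · rw [show ∀ A B C : ℝ, A - B - (A - C) = -(B - C) by intros; ring, abs_neg,
        ← Finset.sum_sub_distrib]
      have h2 : |∑ a, (du (K i a) (qd u (e i a)) p.1 p.2 - du (K i a) (qd v (e i a)) p.1 p.2)|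
          ≤ n * (2 * c * (4 * (2 * N) * d) * √T) := hsum _ _ fun a => by
        rw [du_sub (hK i a) (qd_measurable hu _) (by positivity) (qd_bound hR hub _)
          (qd_measurable hv _) (qd_bound hR hvb _) hp.1]
        refine (du_bound (hK i a) (by positivity)
          (qd_diff hd hub hvb huv (e i a)) hp.1 p.2).trans ?_
        exact mul_le_mul_of_nonneg_left (Real.sqrt_le_sqrt hp.2) (by positivity)
      refine h2.trans ?_
      have : (32 * n * c * N * √T) * d ≤ 1 * d := mul_le_mul_of_nonneg_right hT hd
      nlinarith
    · rw [sub_zero, abs_zero]; positivity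

/-! ### The MHD system as a system of quadratic Duhamel equations -/

/-- Components of the pair of unknowns: `inl k` for `U_k` and `inr k` for `B_k`. -/
abbrev Cmp (D : ℕ) := Fin D ⊕ Fin D

/-- Indices of the Duhamel terms: `inl j` for the divergence of the flux and `inr (j, l)` for the
pressure. -/
abbrev Trm (D : ℕ) := Fin D ⊕ (Fin D × Fin D)

/-- The kernels of the Duhamel terms. The pressure terms are absent from the equation for `B`. -/
def KK (ν μ : ℝ) : Cmp D → Trm D → ℝ → Spc D → ℝ
  | .inl _, .inl j => fun σ => ker (sd j (gau D)) 1 (ν * σ)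
  | .inl k, .inr (j, l) => fun σ => Qk (sd k (sd j (sd l (gau D)))) (ν * σ)
  | .inr _, .inl j => fun σ => ker (sd j (gau D)) 1 (μ * σ)
  | .inr _, .inr _ => fun _ _ => 0

/-- The components entering `U_j U_l - B_j B_l`. -/
def eU (j l : Fin D) : Cmp D × Cmp D × Cmp D × Cmp D := (.inl j, .inl l, .inr j, .inr l)

/-- The components entering `U_j B_k - B_j U_k`. -/
def eB (j k : Fin D) : Cmp D × Cmp D × Cmp D × Cmp D := (.inl j, .inr k, .inr j, .inl k)

/-- The nonlinearities of the Duhamel terms (with a dummy value where the kernel is zero). -/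
def ee : Cmp D → Trm D → Cmp D × Cmp D × Cmp D × Cmp D
  | .inl k, .inl j => eU j k
  | .inl _, .inr (j, l) => eU j l
  | .inr k, .inl j => eB j k
  | .inr _, .inr (j, l) => eU j l

theorem KK_tk (D : ℕ) {ν μ : ℝ} (hν : 0 < ν) (hμ : 0 < μ) :
    ∃ c, 0 ≤ c ∧ ∀ (i : Cmp D) (a : Trm D), TK (KK ν μ i a) c := by
  have h : ∀ (i : Cmp D) (a : Trm D), ∃ c, TK (KK ν μ i a) c := by
    rintro (k | k) (j | ⟨j, l⟩)
    · exact tk_ker _ hν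
    · exact tk_Qk _ hν
    · exact tk_ker _ hμ
    · exact ⟨0, TK.zero⟩
  choose c hc using h
  have h0 : ∀ i a, 0 ≤ c i a := fun i a => (hc i a).nonneg
  refine ⟨∑ i, ∑ a, c i a, Finset.sum_nonneg fun i _ => Finset.sum_nonneg fun a _ => h0 i a,
    fun i a => (hc i a).mono ?_⟩
  exact (Finset.single_le_sum (f := fun a => c i a) (fun a _ => h0 i a) (Finset.mem_univ a)).trans
    (Finset.single_le_sum (f := fun i => ∑ a, c i a)
      (fun i _ => Finset.sum_nonneg fun a _ => h0 i a) (Finset.mem_univ i))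

theorem coord_le (v : Spc D) (k : Fin D) : |v k| ≤ ‖v‖ := by
  rw [← Real.norm_eq_abs]; exact PiLp.norm_apply_le v k

/-- The components of a bounded field have representatives that are Borel measurable and bounded
everywhere. -/
theorem trunc {f : Spc D → Spc D} (hf : MemLinf f) :
    ∃ V : Fin D → Spc D → ℝ, (∀ k, Measurable (V k)) ∧ (∀ k w, |V k w| ≤ supN f) ∧
      ∀ k, (fun w => f w k) =ᵐ[volume] V k := by
  have hb : ∀ x k, |f x k| ≤ supN f := fun x k => (coord_le _ k).trans (le_ciSup hf.2 x)
  have hN : 0 ≤ supN f := Real.iSup_nonneg fun _ => norm_nonneg _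
  refine ⟨fun k w => max (-supN f) (min (supN f) (hf.1.mk f w k)), fun k => ?_, fun k w => ?_,
    fun k => ?_⟩
  · have h1 : Measurable (hf.1.mk f) := hf.1.stronglyMeasurable_mk.measurable
    have h2 : Measurable (fun v : Spc D => v k) := by fun_prop
    exact measurable_const.max (measurable_const.min (h2.comp h1))
  · rw [abs_le]
    exact ⟨le_max_left _ _, max_le (by linarith) (min_le_left _ _)⟩
  · filter_upwards [hf.1.ae_eq_mk] with w hw
    rw [← hw]
    have := abs_le.1 (hb w k)
    rw [min_eq_right this.2, max_eq_right this.1]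

theorem heat_ker_L1 (D : ℕ) {τ : ℝ} (hτ : 0 < τ) : ∫ y, |ker (gau D) 0 τ y| = 1 := by
  simp only [abs_of_nonneg (ker_gau_nonneg hτ _), ker_gau_integral hτ]

theorem pd_heatK (j : Fin D) {lam σ : ℝ} (hl : 0 < lam) (hσ : 0 < σ) (y : Spc D) :
    pd j (fun y => heatK D lam y σ) y = ker (sd j (gau D)) 1 (lam * σ) y := by
  have h : (fun y => heatK D lam y σ) = ker (gau D) 0 (lam * σ) :=
    funext fun y => heatK_eq lam σ hl hσ y
  rw [h, pd_ker _ _ (by positivity), zero_add]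

/-- The heat evolution of a bounded function. -/
def ht (lam : ℝ) (V : Spc D → ℝ) (p : ℝ × Spc D) : ℝ := cv (ker (gau D) 0 (lam * p.1)) V p.2

theorem ht_measurable (lam : ℝ) {V : Spc D → ℝ} (hV : Measurable V) : Measurable (ht lam V) := by
  have h : StronglyMeasurable (fun q : (ℝ × Spc D) × Spc D =>
      ker (gau D) 0 (lam * q.1.1) (q.1.2 - q.2) * V q.2) := by
    have h1 := (ker_measurable (gau D) 0).comp
      (show Measurable (fun q : (ℝ × Spc D) × Spc D => (lam * q.1.1, q.1.2 - q.2)) by fun_prop)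
    exact (h1.mul (hV.comp measurable_snd)).stronglyMeasurable
  exact h.integral_prod_right.measurable

theorem ht_bound {lam : ℝ} (hl : 0 < lam) {V : Spc D → ℝ} {N : ℝ} (hb : ∀ w, |V w| ≤ N) {t : ℝ}
    (htp : 0 < t) (x : Spc D) : |ht lam V (t, x)| ≤ N := by
  have := cv_bound (ker_integrable (gau D) 0 (by positivity : 0 < lam * t)) hb x
  rwa [heat_ker_L1 D (by positivity), mul_one] at this

theorem ht_hol {lam : ℝ} (hl : 0 < lam) {V : Spc D → ℝ} (hV : Measurable V) {N : ℝ} (hN : 0 ≤ N)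
    (hb : ∀ w, |V w| ≤ N) {t : ℝ} (htp : 0 < t) :
    ∃ H, ∀ x x', |ht lam V (t, x) - ht lam V (t, x')| ≤ H * √‖x - x'‖ := by
  have hτ : 0 < lam * t := by positivity
  refine ⟨N * (hol (gau D) * (lam * t) ^ (-0 / 2 - 1 / 4 : ℝ)), fun x x' => ?_⟩
  refine (cv_diff_bound (ker_integrable (gau D) 0 hτ) hV hb x x').trans ?_
  rw [mul_assoc]
  exact mul_le_mul_of_nonneg_left (ker_L1_hol (gau D) 0 hτ x x') hN

theorem ht_eq {lam : ℝ} (hl : 0 < lam) {f V : Spc D → ℝ} (hfV : f =ᵐ[volume] V) {t : ℝ}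
    (htp : 0 < t) (x : Spc D) : ∫ w, heatK D lam (x - w) t * f w = ht lam V (t, x) := by
  unfold ht cv
  refine integral_congr_ae ?_
  filter_upwards [hfV] with w hw
  rw [hw, heatK_eq lam t hl htp]

/-- Time slices of a bounded solution of the Duhamel system are Hölder continuous, and so are the
quadratic nonlinearities. -/
theorem qd_HB {ι S : Type*} [Finite ι] [Fintype S] {K : ι → S → ℝ → Spc D → ℝ} {c : ℝ}
    (hK : ∀ i a, TK (K i a) c) {e : ι → S → ι × ι × ι × ι}
    {h u : ι → ℝ × Spc D → ℝ} {t R : ℝ} (ht0 : 0 < t) (hR : 0 ≤ R) (hm : ∀ i, Measurable (u i))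
    (hb : ∀ i p, |u i p| ≤ R)
    (hh : ∀ i, ∃ H, ∀ x x', |h i (t, x) - h i (t, x')| ≤ H * √‖x - x'‖)
    (heq : ∀ i x, u i (t, x) = h i (t, x) - ∑ a, du (K i a) (qd u (e i a)) t x)
    (q : ι × ι × ι × ι) :
    ∃ H, HB (fun x => qd u q (t, x)) (2 * R ^ 2) H := by
  have h1 : ∀ i, ∃ H, 0 ≤ H ∧ ∀ x x', |u i (t, x) - u i (t, x')| ≤ H * √‖x - x'‖ := fun i => by
    obtain ⟨H, hH⟩ := hh i
    refine ⟨|H| + ∑ _a : S, |4 * c * (2 * R ^ 2) * t ^ (1 / 4 : ℝ)|, by positivity,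
      fun x x' => ?_⟩
    rw [heq, heq, show ∀ A B C E : ℝ, A - B - (C - E) = (A - C) - (B - E) by intros; ring,
      ← Finset.sum_sub_distrib, add_mul, Finset.sum_mul]
    refine (abs_sub _ _).trans (add_le_add ?_ ?_)
    · exact (hH x x').trans (mul_le_mul_of_nonneg_right (le_abs_self H) (Real.sqrt_nonneg _))
    · refine (Finset.abs_sum_le_sum_abs _ _).trans (Finset.sum_le_sum fun a _ => ?_)
      refine (du_hol (hK i a) (qd_measurable hm _) (by positivity) (qd_bound hR hb _) ht0 x
        x').trans (mul_le_mul_of_nonneg_right (le_abs_self _) (Real.sqrt_nonneg _))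
  choose H hH0 hH using h1
  have h2 : ∀ i j x x', |u i (t, x) * u j (t, x) - u i (t, x') * u j (t, x')|
      ≤ (R * H i + R * H j) * √‖x - x'‖ := fun i j x x' => by
    rw [show u i (t, x) * u j (t, x) - u i (t, x') * u j (t, x')
      = (u i (t, x) - u i (t, x')) * u j (t, x) + u i (t, x') * (u j (t, x) - u j (t, x')) by ring]
    refine (abs_add_le _ _).trans ?_
    rw [abs_mul, abs_mul]
    have a1 := mul_le_mul (hH i x x') (hb j (t, x)) (abs_nonneg _)
      (mul_nonneg (hH0 i) (Real.sqrt_nonneg _))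
    have a2 := mul_le_mul (hb i (t, x')) (hH j x x') (abs_nonneg _) hR
    linarith
  refine ⟨(R * H q.1 + R * H q.2.1) + (R * H q.2.2.1 + R * H q.2.2.2),
    (qd_measurable hm q).comp measurable_prodMk_left, fun x => qd_bound hR hb q _,
    fun x x' => ?_, by positivity, ?_⟩
  · unfold qd
    rw [show ∀ A B C E : ℝ, A - B - (C - E) = (A - C) - (B - E) by intros; ring, add_mul]
    exact (abs_sub _ _).trans (add_le_add (h2 _ _ _ _) (h2 _ _ _ _))
  · have := hH0 q.1
    have := hH0 q.2.1
    have := hH0 q.2.2.1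
    have := hH0 q.2.2.2
    positivity

/-- The pressure `∑_{jl} (-Δ)⁻¹ ∂_j ∂_l (U_j U_l - B_j B_l)` at time `t`. -/
def prs (u : Cmp D → ℝ × Spc D → ℝ) (t : ℝ) (x : Spc D) : ℝ :=
  ∑ a : Fin D × Fin D, pr (sd a.1 (sd a.2 (gau D))) (fun y => qd u (eU a.1 a.2) (t, y)) 0 1 x

section
variable {u : Cmp D → ℝ × Spc D → ℝ} {t M : ℝ}

theorem prs_isBMO (h : ∀ j l : Fin D, ∃ H, HB (fun x => qd u (eU j l) (t, x)) M H) :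
    IsBMO (prs u t) :=
  IsBMO.sum _ fun a => (h a.1 a.2).elim fun _ hH => pr_isBMO a.1 a.2 hH

theorem prs_poisson (h : ∀ j l : Fin D, ∃ H, HB (fun x => qd u (eU j l) (t, x)) M H) :
    SolvesPoisson D (prs u t) (fun j l x => qd u (eU j l) (t, x)) := by
  intro φ
  choose H hH using h
  have hp := fun a : Fin D × Fin D => pr_poisson a.1 a.2 (hH a.1 a.2) φ
  unfold prs
  simp only [Finset.sum_mul]
  rw [integral_finsetSum _ fun a _ => (hp a).1]
  simp only [fun a => (hp a).2]
  rw [Finset.sum_neg_distrib, Fintype.sum_prod_type]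

theorem prs_conv (h : ∀ j l : Fin D, ∃ H, HB (fun x => qd u (eU j l) (t, x)) M H) (k : Fin D)
    {σ : ℝ} (hσ : 0 < σ) (x : Spc D) :
    ∫ w, ker (sd k (gau D)) 1 σ (x - w) * prs u t w
      = ∑ a : Fin D × Fin D, cv (Qk (sd k (sd a.1 (sd a.2 (gau D)))) σ)
          (fun w => qd u (eU a.1 a.2) (t, w)) x := by
  choose H hH using h
  have hp := fun a : Fin D × Fin D => pr_Q k a.1 a.2 (hH a.1 a.2) hσ x
  unfold prs
  simp only [Finset.mul_sum]
  rw [integral_finsetSum _ fun a _ => (hp a).1]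
  exact Finset.sum_congr rfl fun a _ => (hp a).2

end

/-- The flux terms of the Duhamel formula. -/
theorem flux_eq {u : Cmp D → ℝ × Spc D → ℝ} {R c lam : ℝ} (hl : 0 < lam) (hR : 0 ≤ R)
    (hm : ∀ i, Measurable (u i)) (hb : ∀ i p, |u i p| ≤ R)
    (hK : ∀ j : Fin D, TK (fun σ => ker (sd j (gau D)) 1 (lam * σ)) c)
    (e : Fin D → Cmp D × Cmp D × Cmp D × Cmp D) {t : ℝ} (ht0 : 0 < t) (x : Spc D) :
    ∫ s in Ioo 0 t, ∫ w, ∑ j, pd j (fun y => heatK D lam y (t - s)) (x - w) * qd u (e j) (s, w)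
      = ∑ j, du (fun σ => ker (sd j (gau D)) 1 (lam * σ)) (qd u (e j)) t x := by
  unfold du
  rw [← integral_finsetSum _ fun j _ => du_int (hK j) (qd_measurable hm (e j))
    (by positivity) (qd_bound hR hb (e j)) ht0 x]
  refine setIntegral_congr_fun measurableSet_Ioo fun s hs => ?_
  have h0 : 0 < t - s := by linarith [hs.2]
  simp only [pd_heatK _ hl h0, cv]
  exact integral_finsetSum _ fun j _ => cv_integrand_int ((hK j).int _ h0)
    ((qd_measurable hm (e j)).comp measurable_prodMk_left) (fun w => qd_bound hR hb (e j) (s, w)) x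

/-! ### Existence of mild solutions -/

theorem vec_norm_le {v : Spc D} {R : ℝ} (h : ∀ k, |v k| ≤ R) : ‖v‖ ≤ D * R := by
  have e : v = ∑ k, EuclideanSpace.single k (v k) := by
    ext i; simp
  calc ‖v‖ = ‖∑ k, EuclideanSpace.single k (v k)‖ := by rw [← e]
    _ ≤ ∑ k, ‖EuclideanSpace.single k (v k)‖ := norm_sum_le _ _
    _ ≤ ∑ _k : Fin D, R := Finset.sum_le_sum fun k _ => by
        rw [PiLp.norm_single, Real.norm_eq_abs]; exact h k
    _ = D * R := by simp

/-- existence of mild solutions of the MHD system on `[0,T]` for every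
`T < T₂ = 1/(C(‖U₀‖_∞ + ‖B₀‖_∞))²`, together with the `L^∞` bound. -/
theorem stmt3 (D : ℕ) (ν μ : ℝ) (hν : 0 < ν) (hμ : 0 < μ) :
    ∃ C : ℝ, 0 < C ∧
      ∀ U₀ B₀ : Spc D → Spc D, MemLinf U₀ → MemLinf B₀ → DivFree U₀ → DivFree B₀ →
      ∀ T : ℝ, 0 < T → T < 1 / (C * (supN U₀ + supN B₀)) ^ 2 →
        ∃ U B : ℝ → Spc D → Spc D,
          MildMHD D ν μ U₀ B₀ (Set.Ioc 0 T) U B ∧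
          ∀ t ∈ Set.Ioc (0 : ℝ) T, ∀ x : Spc D,
            ‖U t x‖ + ‖B t x‖ ≤ C * (supN U₀ + supN B₀) := by
  obtain ⟨c, hc0, hK⟩ := KK_tk D hν hμ
  -- `32 |S| c` is the smallness threshold of the fixed point theorem; `4 D` converts the bounds `2N` on
  -- the components of `U` and `B` into a bound on the sum of the norms; `1` ensures positivity
  refine ⟨32 * Fintype.card (Trm D) * c + 4 * D + 1, by positivity, ?_⟩
  intro U₀ B₀ hU₀ hB₀ _ _ T hT hT2
  have hNU : 0 ≤ supN U₀ := Real.iSup_nonneg fun _ => norm_nonneg _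
  have hNB : 0 ≤ supN B₀ := Real.iSup_nonneg fun _ => norm_nonneg _
  set N := supN U₀ + supN B₀ with hN
  have hN0 : 0 ≤ N := by positivity
  set A : ℝ := 32 * Fintype.card (Trm D) * c with hA
  have hA0 : 0 ≤ A := by positivity
  have hD0 : (0 : ℝ) ≤ D := Nat.cast_nonneg D
  have hsmall : A * N * √T ≤ 1 := by
    set C := A + 4 * D + 1 with hC
    have hC0 : 0 < C := by positivity
    have hAC : A ≤ C := by linarith
    have h1 : √T ≤ 1 / (C * N) := by
      refine (Real.sqrt_le_sqrt hT2.le).trans_eq ?_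
      rw [one_div, Real.sqrt_inv, Real.sqrt_sq (by positivity), one_div]
    calc A * N * √T ≤ C * N * √T := by gcongr
      _ ≤ C * N * (1 / (C * N)) := by gcongr
      -- an inequality only, since `N` may vanish
      _ ≤ 1 := by rw [mul_one_div]; exact div_self_le_one _
  obtain ⟨V, hVm, hVb, hVe⟩ := trunc hU₀
  obtain ⟨W, hWm, hWb, hWe⟩ := trunc hB₀
  have hVb' : ∀ k w, |V k w| ≤ N := fun k w => (hVb k w).trans (by linarith)
  have hWb' : ∀ k w, |W k w| ≤ N := fun k w => (hWb k w).trans (by linarith)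
  obtain ⟨u, hum, hub, hue⟩ := mild_exists (KK ν μ) hc0 hK ee
    (Sum.elim (fun k => ht ν (V k)) (fun k => ht μ (W k)))
    (by rintro (k | k); exacts [ht_measurable ν (hVm k), ht_measurable μ (hWm k)]) hN0 (T := T)
    (by
      rintro (k | k) t hts x
      exacts [ht_bound hν (hVb' k) hts.1 x, ht_bound hμ (hWb' k) hts.1 x]) hsmall
  have hR : 0 ≤ 2 * N := by positivity
  have hHB : ∀ t ∈ Ioc 0 T, ∀ j l : Fin D,
      ∃ H, HB (fun x => qd u (eU j l) (t, x)) (2 * (2 * N) ^ 2) H := fun t hts j l => by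
    refine qd_HB hK hts.1 hR hum hub ?_ (fun i x => hue i t hts x) (eU j l)
    rintro (k | k)
    exacts [ht_hol hν (hVm k) hN0 (hVb' k) hts.1, ht_hol hμ (hWm k) hN0 (hWb' k) hts.1]
  have hUn : ∀ t x, ‖(WithLp.toLp 2 fun k => u (.inl k) (t, x) : Spc D)‖ ≤ D * (2 * N) :=
    fun t x => vec_norm_le fun k => hub _ _
  have hBn : ∀ t x, ‖(WithLp.toLp 2 fun k => u (.inr k) (t, x) : Spc D)‖ ≤ D * (2 * N) :=
    fun t x => vec_norm_le fun k => hub _ _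
  refine ⟨fun t x => WithLp.toLp 2 fun k => u (.inl k) (t, x),
    fun t x => WithLp.toLp 2 fun k => u (.inr k) (t, x), ⟨prs u, ?_, ?_, ?_⟩, ?_⟩
  · exact fun t hts => ⟨prs_isBMO (hHB t hts), prs_poisson (hHB t hts)⟩
  · exact fun t hts => ⟨⟨_, by rintro _ ⟨x, rfl⟩; exact hUn t x⟩,
      ⟨_, by rintro _ ⟨x, rfl⟩; exact hBn t x⟩⟩
  · intro t hts x k
    constructor
    · have h1 := hue (.inl k) t hts x
      rw [Fintype.sum_sum_type] at h1
      have h2 := flux_eq hν hR hum hub (fun j => hK (.inl k) (.inl j)) (fun j => eU j k) hts.1 x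
      have h3 : ∫ s in Ioo 0 t, ∫ w, pd k (fun y => heatK D ν y (t - s)) (x - w) * prs u s w
          = ∑ a : Fin D × Fin D, du (KK ν μ (.inl k) (.inr a)) (qd u (eU a.1 a.2)) t x := by
        unfold du
        rw [← integral_finsetSum _ fun a _ => du_int (hK (.inl k) (.inr a))
          (qd_measurable hum _) (by positivity) (qd_bound hR hub _) hts.1 x]
        refine setIntegral_congr_fun measurableSet_Ioo fun s hs => ?_
        have h0 : 0 < t - s := by linarith [hs.2]
        simp only [pd_heatK _ hν h0]
        exact prs_conv (hHB s ⟨hs.1, hs.2.le.trans hts.2⟩) k (by positivity) x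
      have h4 := ht_eq hν (hVe k) hts.1 x
      refine h1.trans ?_
      rw [← sub_sub]
      exact congrArg₂ _ (congrArg₂ _ h4.symm h2.symm) h3.symm
    · have h1 := hue (.inr k) t hts x
      rw [Fintype.sum_sum_type] at h1
      have h2 := flux_eq hμ hR hum hub (fun j => hK (.inr k) (.inl j)) (fun j => eB j k) hts.1 x
      have h3 : ∑ a : Fin D × Fin D, du (KK ν μ (.inr k) (.inr a)) (qd u (ee (.inr k) (.inr a))) t x
          = 0 := Finset.sum_eq_zero fun a _ => by simp [du, KK, cv]
      have h4 := ht_eq hμ (hWe k) hts.1 x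
      rw [h3, add_zero] at h1
      refine h1.trans ?_
      exact congrArg₂ _ h4.symm h2.symm
  · intro t _ x
    have h1 := hUn t x
    have h2 := hBn t x
    have h3 : 0 ≤ (A + 1) * N := by positivity
    linarith

end
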